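/- There exist constants c > 0 and x₀ > 0 (depending on a₁, a₂) such that for all x ≥ x₀, G(x) := max{g_u(p−1) : p ≤ x, p prime} satisfies G(x) ≥ c·x^{0.1} (unconditionally; this is the bound obtained in the paper's remark using Linnik-type bounds together with ℓ(n) ≤ 2n²). -/

import Mathlib

open scoped BigOperators

/-- `gu u n = gcd(n, u n)`. -/
noncomputable def gu (u : ℕ → ℤ) (n : ℕ) : ℕ := Int.gcd (n : ℤ) (u n)

/-- Rank of appearance of `m` in the sequence `u`. -/
noncomputable def zu (u : ℕ → ℤ) (m : ℕ) : ℕ := sInf {n : ℕ | 0 < n ∧ (m : ℤ) ∣ u n}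

/-- `ℓ(m) = lcm(m, z_u(m))`. -/
noncomputable def ellu (u : ℕ → ℤ) (m : ℕ) : ℕ := Nat.lcm m (zu u m)

/-- The arithmetic function `ρ_λ`. -/
noncomputable def rho (lam n : ℕ) : ℝ :=
  (Nat.factorial lam : ℝ) *
    ∑ f ∈ (Fintype.piFinset fun _ : n.primeFactors => Finset.range (lam + 1)) |>.filter
        (fun f => ∑ p, f p = lam),
      ∏ p : n.primeFactors,
        (((n.factorization (p : ℕ) : ℝ) ^ f p - ((n.factorization (p : ℕ) : ℝ) - 1) ^ f p) *
          Real.log ((p : ℕ) : ℝ) ^ f p / (Nat.factorial (f p) : ℝ))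

/-- The set of primes `≤ x`. -/
noncomputable def primesUpTo (x : ℝ) : Finset ℕ :=
  (Finset.range (⌊x⌋₊ + 1)).filter Nat.Prime

/-- `π(x)`, the number of primes `≤ x`. -/
noncomputable def primePi (x : ℝ) : ℕ := (primesUpTo x).card

/-- `π(x; b, a)`, the number of primes `p ≤ x` with `p ≡ a (mod b)`. -/
noncomputable def primePiMod (x : ℝ) (b a : ℕ) : ℕ :=
  ((primesUpTo x).filter fun p => p % b = a % b).card

/-- `Δ(x; b, a) = π(x; b, a) - π(x)/φ(b)`. -/
noncomputable def chebErr (x : ℝ) (b a : ℕ) : ℝ :=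
  (primePiMod x b a : ℝ) - (primePi x : ℝ) / (Nat.totient b : ℝ)

/-! For a finite set `Q` of primes put `D = ∏ t |u_t|`, the product over `t ∈ Q`. If `D ∣ q - 1`
then each `u_t` divides both `q - 1` and `u_{q-1}`; since the `u_t` are pairwise coprime,
`g_u(q - 1) ≥ ∏ |u_t|`. As `|u_t|` grows exponentially, `Q` can be chosen with
`M ^ 10 ≤ ∏ |u_t|` and `D ≤ M ^ 12`, and a prime `q ≡ 1 (mod D)` with `q ≤ M ^ 100` gives the
exponent `1 / 10`.

Linnik's theorem is not needed to find `q`, because there are at least `(log M) ^ (3 / 4)` disjoint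
choices of `Q`, whose moduli `D` are pairwise coprime, and it is enough that one of them has such a
prime. For any such family the primes are equidistributed in the class `1` modulo most members. To
see this, convolve the von Mangoldt function restricted to `n > M ^ 35` with the divisor sums
`∑_{d ∣ k} λ_d` of the Barban–Vehov weights, which equal `1` at `k = 1` and vanish for
`1 < k ≤ M ^ 30`. The term `k = 1` gives back the restricted von Mangoldt function. The full
convolution has a smooth variable in a long range, so its sums over the reduced classes modulo `D`
are nearly equal; in the terms with `k > M ^ 30` both variables are long, and the large sieve for
the moduli `D`, with Selberg's majorant of the primes as weight, bounds their average over the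
family. -/

namespace LucasGcd

open Finset

section Discrepancy

lemma abs_sum_mul_le_variation (f : ℕ → ℝ) {g : ℕ → ℝ} {R : ℕ} {B : ℝ}
    (hg : ∀ n ≤ R, |∑ i ∈ range n, g i| ≤ B) :
    |∑ n ∈ range R, f n * g n| ≤ B * (|f R| + ∑ n ∈ range R, |f (n + 1) - f n|) := by
  have hparts : ∑ n ∈ range R, f n * g n = f R * ∑ i ∈ range R, g i -
      ∑ n ∈ range R, (f (n + 1) - f n) * ∑ i ∈ range (n + 1), g i := by
    have h := sum_range_by_parts f g (R + 1)
    simp only [smul_eq_mul, add_tsub_cancel_right, sum_range_succ _ R] at h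
    linarith
  rw [hparts, mul_add]
  refine (abs_sub _ _).trans (add_le_add ?_ ?_)
  · rw [abs_mul, mul_comm]
    gcongr
    exact hg R le_rfl
  · rw [mul_sum]
    refine (abs_sum_le_sum_abs _ _).trans (sum_le_sum fun n hn => ?_)
    rw [abs_mul, mul_comm]
    gcongr
    exact hg _ (mem_range.1 hn)

lemma abs_count_modEq_sub_count_modEq_le_one {r : ℕ} (hr : 0 < r) (c c' n : ℕ) :
    |(n.count (· ≡ c [MOD r]) : ℝ) - n.count (· ≡ c' [MOD r])| ≤ 1 := by
  rw [Nat.count_modEq_card n hr, Nat.count_modEq_card n hr]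
  split_ifs <;> simp

lemma abs_sum_modEq_sub_sum_modEq_le_variation (f : ℕ → ℝ) (R : ℕ) {r : ℕ} (hr : 0 < r)
    (c c' : ℕ) :
    |∑ n ∈ range R, f n * ((if n ≡ c [MOD r] then 1 else 0) - if n ≡ c' [MOD r] then 1 else 0)|
      ≤ |f R| + ∑ n ∈ range R, |f (n + 1) - f n| := by
  rw [← one_mul (|f R| + _)]
  refine abs_sum_mul_le_variation f fun n _ => ?_
  rw [sum_sub_distrib, sum_boole, sum_boole, ← Nat.count_eq_card_filter_range,
    ← Nat.count_eq_card_filter_range]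
  exact abs_count_modEq_sub_count_modEq_le_one hr c c' n

/-- The indicator function of the residue class `a` modulo `q`, as a function on `ℕ`. -/
def residueInd {q : ℕ} (a : ZMod q) (n : ℕ) : ℝ := if (n : ZMod q) = a then 1 else 0

lemma residueInd_nonneg {q : ℕ} (a : ZMod q) (n : ℕ) : 0 ≤ residueInd a n := by
  unfold residueInd; positivity

lemma residueInd_eq_zero_of_not_coprime {q n : ℕ} (a : (ZMod q)ˣ) (hn : ¬n.Coprime q) :
    residueInd (a : ZMod q) n = 0 :=
  if_neg fun h : (n : ZMod q) = a => hn <| (ZMod.isUnit_iff_coprime n q).1 (h ▸ a.isUnit)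

lemma residueInd_mul_residueInd {D D' : ℕ} (h : D.Coprime D') (a : ZMod D) (a' : ZMod D') (n : ℕ) :
    residueInd a n * residueInd a' n = residueInd ((ZMod.chineseRemainder h).symm (a, a')) n := by
  simp [residueInd, RingEquiv.eq_symm_apply, ← ite_and, Prod.ext_iff, and_comm]

lemma sum_residueInd_units {q : ℕ} [NeZero q] (n : ℕ) :
    ∑ a : (ZMod q)ˣ, residueInd (a : ZMod q) n = if n.Coprime q then 1 else 0 := by
  split_ifs with hn
  · rw [sum_eq_single_of_mem (ZMod.unitOfCoprime n hn) (mem_univ _)]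
    · simp [residueInd]
    · exact fun b _ hb => if_neg fun h => hb (Units.ext (by simpa using h.symm))
  · exact sum_eq_zero fun a _ => residueInd_eq_zero_of_not_coprime a hn

/-- `DiscrepancyLE s f K` says that, for every modulus, the sums of `f` over any two reduced
residue classes, restricted to `s`, differ by at most `K`. -/
def DiscrepancyLE (s : Finset ℕ) (f : ℕ → ℝ) (K : ℝ) : Prop :=
  ∀ (q : ℕ) [NeZero q] (a b : (ZMod q)ˣ),
    |∑ n ∈ s, f n * (residueInd (a : ZMod q) n - residueInd (b : ZMod q) n)| ≤ K

namespace DiscrepancyLE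

variable {s : Finset ℕ} {f g : ℕ → ℝ} {K L : ℝ}

lemma mono (h : DiscrepancyLE s f K) (hKL : K ≤ L) : DiscrepancyLE s f L :=
  fun q _ a b => (h q a b).trans hKL

lemma congr (h : DiscrepancyLE s f K) (hfg : ∀ n ∈ s, f n = g n) : DiscrepancyLE s g K := by
  intro q _ a b
  simpa only [sum_congr rfl fun n hn => congrArg
    (· * (residueInd (a : ZMod q) n - residueInd (b : ZMod q) n)) (hfg n hn)] using h q a b

lemma add (hf : DiscrepancyLE s f K) (hg : DiscrepancyLE s g L) :
    DiscrepancyLE s (fun n => f n + g n) (K + L) := by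
  intro q _ a b
  simp only [add_mul, sum_add_distrib]
  exact (abs_add_le _ _).trans (add_le_add (hf q a b) (hg q a b))

lemma sum {ι : Type*} {T : Finset ι} {F : ι → ℕ → ℝ} {κ : ι → ℝ} (c : ι → ℝ)
    (h : ∀ i ∈ T, DiscrepancyLE s (F i) (κ i)) :
    DiscrepancyLE s (fun n => ∑ i ∈ T, c i * F i n) (∑ i ∈ T, |c i| * κ i) := by
  intro q _ a b
  simp only [sum_mul, mul_assoc]
  rw [sum_comm]
  simp only [← mul_sum]
  refine (abs_sum_le_sum_abs _ _).trans (sum_le_sum fun i hi => ?_)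
  rw [abs_mul]
  exact mul_le_mul_of_nonneg_left (h i hi q a b) (abs_nonneg _)

end DiscrepancyLE

lemma exists_modEq_iff_natCast_eq_and_dvd {h q : ℕ} [NeZero q] (hc : h.Coprime q) (a : ZMod q) :
    ∃ c : ℕ, ∀ n : ℕ, n ≡ c [MOD h * q] ↔ (n : ZMod q) = a ∧ h ∣ n := by
  obtain ⟨c, hc0, hca⟩ := Nat.chineseRemainder hc 0 a.val
  refine ⟨c, fun n => ?_⟩
  have hcast : (c : ZMod q) = a := by
    rw [(ZMod.natCast_eq_natCast_iff _ _ _).2 hca, ZMod.natCast_zmod_val]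
  rw [← Nat.modEq_and_modEq_iff_modEq_mul hc, ← hcast, ZMod.natCast_eq_natCast_iff,
    ← Nat.modEq_zero_iff_dvd, and_comm]
  exact and_congr_right' ⟨fun hn => hn.trans hc0, fun hn => hn.trans hc0.symm⟩

lemma discrepancyLE_multiples (f : ℕ → ℝ) (R : ℕ) {h : ℕ} (hh : 0 < h) :
    DiscrepancyLE (range R) (fun n => if h ∣ n then f n else 0)
      (|f R| + ∑ n ∈ range R, |f (n + 1) - f n|) := by
  intro q _ a b
  by_cases hc : h.Coprime q
  · obtain ⟨c, hca⟩ := exists_modEq_iff_natCast_eq_and_dvd hc (a : ZMod q)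
    obtain ⟨d, hdb⟩ := exists_modEq_iff_natCast_eq_and_dvd hc (b : ZMod q)
    convert abs_sum_modEq_sub_sum_modEq_le_variation f R
      (Nat.mul_pos hh (NeZero.pos q)) c d using 3 with n
    simp only [hca, hdb, residueInd]
    by_cases hn : h ∣ n <;> simp [hn]
  · rw [sum_eq_zero fun n _ => ?_, abs_zero]
    · positivity
    · dsimp only
      split_ifs with hn
      · have hnq : ¬n.Coprime q := fun hnq => hc (hnq.coprime_dvd_left hn)
        simp [residueInd_eq_zero_of_not_coprime _ hnq]
      · exact zero_mul _

lemma discrepancyLE_multiples_Ico (a b : ℕ) {h : ℕ} (hh : 0 < h) :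
    DiscrepancyLE (Ico a b) (fun n => if h ∣ n then 1 else 0) 2 := by
  intro q _ x y
  rcases le_total a b with hab | hba
  · have hrange (R : ℕ) := discrepancyLE_multiples (fun _ => 1) R hh q x y
    simp only [abs_one, sub_self, abs_zero, sum_const_zero, add_zero] at hrange
    rw [sum_Ico_eq_sub _ hab]
    exact (abs_sub _ _).trans (by linarith [hrange a, hrange b])
  · simp [Ico_eq_empty_of_le hba]

end Discrepancy

section CenteredClasses

variable {D : ℕ} [NeZero D]

/-- The indicator of the reduced class `a` modulo `D`, minus its average over all reduced
classes. -/
noncomputable def centeredInd (a : (ZMod D)ˣ) (n : ℕ) : ℝ :=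
  residueInd (a : ZMod D) n - 𝔼 b : (ZMod D)ˣ, residueInd (b : ZMod D) n

lemma centeredInd_eq_expect (a : (ZMod D)ˣ) (n : ℕ) :
    centeredInd a n =
      𝔼 b : (ZMod D)ˣ, (residueInd (a : ZMod D) n - residueInd (b : ZMod D) n) := by
  rw [expect_sub_distrib, Fintype.expect_const, centeredInd]

lemma expect_residueInd (n : ℕ) :
    𝔼 b : (ZMod D)ˣ, residueInd (b : ZMod D) n = if n.Coprime D then (D.totient : ℝ)⁻¹ else 0 := by
  rw [Fintype.expect_eq_sum_div_card, sum_residueInd_units, ZMod.card_units_eq_totient]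
  split_ifs <;> simp

lemma totient_mul_expect_residueInd_le_one (n : ℕ) :
    (D.totient : ℝ) * 𝔼 b : (ZMod D)ˣ, residueInd (b : ZMod D) n ≤ 1 := by
  rw [← ZMod.card_units_eq_totient, Fintype.card_mul_expect, sum_residueInd_units]
  split_ifs <;> norm_num

lemma expect_residueInd_nonneg (n : ℕ) : 0 ≤ 𝔼 b : (ZMod D)ˣ, residueInd (b : ZMod D) n :=
  expect_nonneg fun _ _ => residueInd_nonneg _ _

lemma centeredInd_eq_zero_of_not_coprime {n : ℕ} (a : (ZMod D)ˣ) (hn : ¬n.Coprime D) :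
    centeredInd a n = 0 := by
  rw [centeredInd, expect_residueInd, residueInd_eq_zero_of_not_coprime a hn, if_neg hn, sub_zero]

lemma abs_centeredInd_le (a : (ZMod D)ˣ) (n : ℕ) :
    |centeredInd a n| ≤
      residueInd (a : ZMod D) n + 𝔼 b : (ZMod D)ˣ, residueInd (b : ZMod D) n := by
  have h1 := residueInd_nonneg (a : ZMod D) n
  have h2 := expect_residueInd_nonneg (D := D) n
  rw [centeredInd, abs_le]
  constructor <;> linarith

lemma sum_abs_centeredInd_le_two (n : ℕ) : ∑ a : (ZMod D)ˣ, |centeredInd a n| ≤ 2 := by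
  refine (sum_le_sum fun a _ => abs_centeredInd_le a n).trans ?_
  rw [sum_add_distrib, sum_residueInd_units, sum_const, card_univ, nsmul_eq_mul,
    ZMod.card_units_eq_totient]
  have h := totient_mul_expect_residueInd_le_one (D := D) n
  split_ifs <;> linarith

/-- The variance of the sums of `f` over the reduced residue classes modulo `D`. -/
noncomputable def residueVariance (D : ℕ) [NeZero D] (s : Finset ℕ) (f : ℕ → ℝ) : ℝ :=
  ∑ a : (ZMod D)ˣ, (∑ n ∈ s, f n * centeredInd a n) ^ 2

variable {s : Finset ℕ} {f : ℕ → ℝ} {K : ℝ}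

lemma DiscrepancyLE.abs_sum_mul_centeredInd_le (h : DiscrepancyLE s f K) (a : (ZMod D)ˣ) :
    |∑ n ∈ s, f n * centeredInd a n| ≤ K := by
  simp only [centeredInd_eq_expect, mul_expect]
  rw [← expect_sum_comm]
  exact (abs_expect_le _ _).trans (expect_le univ_nonempty fun b _ => h D a b)

end CenteredClasses

section LargeSieve

/-- Schur's test, from `2 |xᵢ xⱼ| ≤ xᵢ² + xⱼ²`. -/
lemma sum_sum_mul_le_of_sum_abs_le {ι : Type*} {T : Finset ι} {ω x : ι → ℝ} {Z : ι → ι → ℝ} {R : ℝ}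
    (hω : ∀ i ∈ T, 0 ≤ ω i) (hZ : ∀ i j, Z i j = Z j i)
    (hR : ∀ i ∈ T, ∑ j ∈ T, ω j * |Z i j| ≤ R) :
    ∑ i ∈ T, ∑ j ∈ T, ω i * ω j * (x i * x j) * Z i j ≤ R * ∑ i ∈ T, ω i * x i ^ 2 := by
  have hterm : ∀ i ∈ T, ∀ j ∈ T, ω i * ω j * (x i * x j) * Z i j ≤
      (ω i * x i ^ 2 * (ω j * |Z i j|) + ω j * x j ^ 2 * (ω i * |Z j i|)) / 2 := by
    intro i hi j hj
    have hxz : x i * x j * Z i j ≤ (x i ^ 2 + x j ^ 2) / 2 * |Z i j| := by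
      refine (le_abs_self _).trans ?_
      rw [abs_mul, abs_mul]
      gcongr
      nlinarith [sq_nonneg (|x i| - |x j|), sq_abs (x i), sq_abs (x j)]
    rw [hZ j i]
    nlinarith [mul_le_mul_of_nonneg_left hxz (mul_nonneg (hω i hi) (hω j hj))]
  have hrow : ∑ i ∈ T, ∑ j ∈ T, ω i * x i ^ 2 * (ω j * |Z i j|) ≤ R * ∑ i ∈ T, ω i * x i ^ 2 := by
    rw [mul_sum]
    refine sum_le_sum fun i hi => ?_
    rw [← mul_sum, mul_comm R]
    exact mul_le_mul_of_nonneg_left (hR i hi) (mul_nonneg (hω i hi) (sq_nonneg _))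
  have hcol : ∑ i ∈ T, ∑ j ∈ T, ω j * x j ^ 2 * (ω i * |Z j i|) =
      ∑ i ∈ T, ∑ j ∈ T, ω i * x i ^ 2 * (ω j * |Z i j|) := sum_comm
  refine (sum_le_sum fun i hi => sum_le_sum fun j hj => hterm i hi j hj).trans ?_
  simp only [← sum_div, sum_add_distrib]
  linarith

/-- The duality principle of the large sieve. -/
lemma sum_mul_sq_le_of_dual_bound {ι κ : Type*} {T : Finset ι} {s : Finset κ} {ω : ι → ℝ}
    {c : ι → κ → ℝ} {W : κ → ℝ} {R : ℝ} (f : κ → ℝ) (hW : ∀ n ∈ s, 0 < W n)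
    (hω : ∀ i ∈ T, 0 ≤ ω i) (hR0 : 0 ≤ R)
    (hR : ∀ i ∈ T, ∑ j ∈ T, ω j * |∑ n ∈ s, W n * c i n * c j n| ≤ R) :
    ∑ i ∈ T, ω i * (∑ n ∈ s, f n * c i n) ^ 2 ≤ R * ∑ n ∈ s, f n ^ 2 / W n := by
  set S : ι → ℝ := fun i => ∑ n ∈ s, f n * c i n with hS
  set t := ∑ i ∈ T, ω i * S i ^ 2 with ht
  set g : κ → ℝ := fun n => ∑ i ∈ T, ω i * S i * c i n with hg
  have hdual : t = ∑ n ∈ s, f n * g n := by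
    simp only [ht, hg, mul_sum]
    rw [sum_comm]
    refine sum_congr rfl fun i _ => ?_
    rw [sq, ← mul_assoc, hS, mul_sum]
    exact sum_congr rfl fun n _ => by ring
  have hquad : ∑ n ∈ s, W n * g n ^ 2 ≤ R * t := by
    have hexp : ∑ n ∈ s, W n * g n ^ 2 =
        ∑ i ∈ T, ∑ j ∈ T, ω i * ω j * (S i * S j) * ∑ n ∈ s, W n * c i n * c j n := by
      have hsq (n : κ) : W n * g n ^ 2 =
          ∑ i ∈ T, ∑ j ∈ T, ω i * ω j * (S i * S j) * (W n * c i n * c j n) := by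
        rw [hg, sq, sum_mul_sum, mul_sum]
        refine sum_congr rfl fun i _ => ?_
        rw [mul_sum]
        exact sum_congr rfl fun j _ => by ring
      simp only [hsq, mul_sum _ _ (_ * _ * _)]
      rw [sum_comm]
      exact sum_congr rfl fun i _ => sum_comm
    rw [hexp]
    exact sum_sum_mul_le_of_sum_abs_le hω
      (fun i j => sum_congr rfl fun n _ => by ring) hR
  have hcauchy : t ^ 2 ≤ (∑ n ∈ s, f n ^ 2 / W n) * ∑ n ∈ s, W n * g n ^ 2 := by
    rw [hdual]
    refine sum_sq_le_sum_mul_sum_of_sq_le_mul s (fun n hn => ?_) (fun n hn => ?_) fun n hn => ?_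
    · exact div_nonneg (sq_nonneg _) (hW n hn).le
    · exact mul_nonneg (hW n hn).le (sq_nonneg _)
    · have := (hW n hn).ne'
      apply le_of_eq
      field_simp
  have hA : 0 ≤ ∑ n ∈ s, f n ^ 2 / W n :=
    sum_nonneg fun n hn => div_nonneg (sq_nonneg _) (hW n hn).le
  have ht0 : 0 ≤ t := sum_nonneg fun i hi => mul_nonneg (hω i hi) (sq_nonneg _)
  rcases ht0.eq_or_lt with h | h
  · rw [← h]
    positivity
  · nlinarith [mul_le_mul_of_nonneg_left hquad hA]

variable {s : Finset ℕ} {W : ℕ → ℝ} {K : ℝ}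

lemma abs_sum_mul_centeredInd_mul_centeredInd_le {D D' : ℕ} [NeZero D] [NeZero D']
    (hK : DiscrepancyLE s W K) (hc : D.Coprime D') (a : (ZMod D)ˣ) (a' : (ZMod D')ˣ) :
    |∑ n ∈ s, W n * centeredInd a n * centeredInd a' n| ≤ 2 * K := by
  have hdiff (b : (ZMod D)ˣ) (b' : (ZMod D')ˣ) : |∑ n ∈ s, W n *
      (residueInd (a : ZMod D) n - residueInd (b : ZMod D) n) * residueInd (b' : ZMod D') n|
      ≤ K := by
    let lift (x : (ZMod D)ˣ) : (ZMod (D * D'))ˣ :=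
      Units.map (ZMod.chineseRemainder hc).symm.toMonoidHom (MulEquiv.prodUnits.symm (x, b'))
    convert hK (D * D') (lift a) (lift b) using 3 with n
    rw [mul_assoc, sub_mul, residueInd_mul_residueInd hc, residueInd_mul_residueInd hc]
    rfl
  have hexp : ∑ n ∈ s, W n * centeredInd a n * centeredInd a' n =
      𝔼 b : (ZMod D)ˣ, 𝔼 b' : (ZMod D')ˣ, ∑ n ∈ s,
        W n * (residueInd (a : ZMod D) n - residueInd (b : ZMod D) n) *
          (residueInd (a' : ZMod D') n - residueInd (b' : ZMod D') n) := by
    simp only [expect_sum_comm]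
    refine sum_congr rfl fun n _ => ?_
    rw [centeredInd_eq_expect, centeredInd_eq_expect, mul_assoc, Fintype.expect_mul_expect]
    simp only [mul_expect, mul_assoc]
  rw [hexp]
  refine (abs_expect_le _ _).trans (expect_le univ_nonempty fun b _ =>
    (abs_expect_le _ _).trans (expect_le univ_nonempty fun b' _ => ?_))
  simp only [mul_sub (W _ * _), sum_sub_distrib]
  linarith [abs_sub (∑ n ∈ s, W n * (residueInd (a : ZMod D) n - residueInd (b : ZMod D) n) *
    residueInd (a' : ZMod D') n) (∑ n ∈ s, W n * (residueInd (a : ZMod D) n -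
      residueInd (b : ZMod D) n) * residueInd (b' : ZMod D') n), hdiff b a', hdiff b b']

lemma sum_totient_mul_abs_sum_mul_centeredInd_le {D : ℕ} [NeZero D] (hW : ∀ n ∈ s, 0 ≤ W n)
    (hK : DiscrepancyLE s W K) (a : (ZMod D)ˣ) :
    ∑ a' : (ZMod D)ˣ, (D.totient : ℝ) * |∑ n ∈ s, W n * centeredInd a n * centeredInd a' n| ≤
      4 * ∑ n ∈ s, W n + 2 * D.totient * K := by
  set e : ℕ → ℝ := fun n => 𝔼 b : (ZMod D)ˣ, residueInd (b : ZMod D) n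
  have hmean : D.totient * ∑ n ∈ s, W n * e n ≤ ∑ n ∈ s, W n := by
    rw [mul_sum]
    refine sum_le_sum fun n hn => ?_
    nlinarith [hW n hn, totient_mul_expect_residueInd_le_one (D := D) n]
  have hclass : ∑ n ∈ s, W n * residueInd (a : ZMod D) n ≤ K + ∑ n ∈ s, W n * e n := by
    have h := (abs_le.1 (hK.abs_sum_mul_centeredInd_le a)).2
    simp only [centeredInd, mul_sub, sum_sub_distrib] at h
    linarith
  have hcolumn : ∑ a' : (ZMod D)ˣ, |∑ n ∈ s, W n * centeredInd a n * centeredInd a' n| ≤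
      ∑ n ∈ s, W n * (residueInd (a : ZMod D) n + e n) * 2 := by
    refine (sum_le_sum fun a' _ => abs_sum_le_sum_abs _ _).trans ?_
    rw [sum_comm]
    refine sum_le_sum fun n hn => ?_
    simp only [abs_mul, ← mul_sum, abs_of_nonneg (hW n hn)]
    have h := hW n hn
    have ha := abs_centeredInd_le a n
    exact mul_le_mul (mul_le_mul_of_nonneg_left ha h) (sum_abs_centeredInd_le_two n)
      (sum_nonneg fun _ _ => abs_nonneg _) (mul_nonneg h ((abs_nonneg _).trans ha))
  rw [← sum_mul] at hcolumn
  simp only [mul_add, sum_add_distrib] at hcolumn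
  rw [← mul_sum]
  nlinarith [mul_le_mul_of_nonneg_left hcolumn (Nat.cast_nonneg (α := ℝ) D.totient),
    mul_le_mul_of_nonneg_left hclass (Nat.cast_nonneg (α := ℝ) D.totient)]

theorem large_sieve_coprime_moduli {ι : Type*} [Fintype ι] {D : ι → ℕ} [∀ i, NeZero (D i)]
    (hD : Pairwise fun i j => (D i).Coprime (D j)) {Q : ℝ} (hQ : ∀ i, (D i : ℝ) ≤ Q)
    (hW : ∀ n ∈ s, 0 < W n) (hK0 : 0 ≤ K) (hK : DiscrepancyLE s W K) (f : ℕ → ℝ) :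
    ∑ i, ((D i).totient : ℝ) * residueVariance (D i) s f ≤
      (4 * ∑ n ∈ s, W n + 2 * K * Q ^ 2 * Fintype.card ι) * ∑ n ∈ s, f n ^ 2 / W n := by
  classical
  have hW0 : 0 ≤ ∑ n ∈ s, W n := sum_nonneg fun n hn => (hW n hn).le
  have hφQ (i : ι) : ((D i).totient : ℝ) ≤ Q :=
    le_trans (mod_cast Nat.totient_le _) (hQ i)
  simp only [residueVariance, mul_sum _ _ (Nat.cast _)]
  rw [← Fintype.sum_sigma' (fun i (a : (ZMod (D i))ˣ) =>
    ((D i).totient : ℝ) * (∑ n ∈ s, f n * centeredInd a n) ^ 2)]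
  refine sum_mul_sq_le_of_dual_bound (c := fun x : Σ i, (ZMod (D i))ˣ => centeredInd x.2)
    f hW (fun _ _ => Nat.cast_nonneg _) (by positivity) ?_
  rintro ⟨i, a⟩ -
  have hdiag := sum_totient_mul_abs_sum_mul_centeredInd_le (fun n hn => (hW n hn).le) hK a
  have hoff (j : ι) (hj : j ∈ univ.erase i) : ∑ a' : (ZMod (D j))ˣ, ((D j).totient : ℝ) *
      |∑ n ∈ s, W n * centeredInd a n * centeredInd a' n| ≤ 2 * K * Q ^ 2 := by
    calc _ ≤ ∑ _a' : (ZMod (D j))ˣ, ((D j).totient : ℝ) * (2 * K) := by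
          gcongr
          exact abs_sum_mul_centeredInd_mul_centeredInd_le hK (hD (ne_of_mem_erase hj).symm) _ _
      _ = 2 * K * ((D j).totient : ℝ) ^ 2 := by
          rw [sum_const, card_univ, ZMod.card_units_eq_totient, nsmul_eq_mul]
          ring
      _ ≤ 2 * K * Q ^ 2 := by
          gcongr
          exact hφQ j
  have hdiagQ : 2 * ((D i).totient : ℝ) * K ≤ 2 * K * Q ^ 2 := by
    have hQ1 : 1 ≤ Q := le_trans (mod_cast NeZero.one_le) (hQ i)
    nlinarith [mul_le_mul_of_nonneg_left ((hφQ i).trans (le_self_pow₀ hQ1 two_ne_zero)) hK0]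
  have hcard := sum_le_card_nsmul _ _ _ hoff
  rw [card_erase_of_mem (mem_univ i), card_univ, nsmul_eq_mul,
    Nat.cast_sub (Fintype.card_pos_iff.2 ⟨i⟩), Nat.cast_one] at hcard
  rw [Fintype.sum_sigma, ← add_sum_erase _ _ (mem_univ i)]
  dsimp only
  linarith

end LargeSieve

section CoprimeMoebius

open ArithmeticFunction
open scoped ArithmeticFunction.Moebius ArithmeticFunction.zeta

lemma abs_cast_div_sub_natDiv_le_one (N k : ℕ) : |(N : ℝ) / k - (N / k : ℕ)| ≤ 1 := by
  rw [← Nat.floor_natCast (R := ℝ) N, ← Nat.floor_div_natCast, Nat.floor_natCast]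
  exact Nat.abs_sub_floor_le (by positivity)

lemma abs_moebius_cast_le_one (n : ℕ) : |(μ n : ℝ)| ≤ 1 := by
  exact_mod_cast abs_moebius_le_one (n := n)

lemma sum_moebius_divisors (n : ℕ) : ∑ k ∈ n.divisors, (μ k : ℝ) = if n = 1 then 1 else 0 := by
  have h := congrArg (fun f : ArithmeticFunction ℤ => f n) moebius_mul_coe_zeta
  simp only [coe_mul_zeta_apply, one_apply] at h
  exact_mod_cast h

lemma sum_Ioc_sum_divisors_mul (f g : ℕ → ℝ) (N : ℕ) :
    ∑ n ∈ Ioc 0 N, ∑ k ∈ n.divisors, f k * g (n / k) =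
      ∑ k ∈ Ioc 0 N, f k * ∑ j ∈ Ioc 0 (N / k), g j := by
  have happly (h : ℕ → ℝ) {n : ℕ} (hn : n ≠ 0) : toArithmeticFunction h n = h n := if_neg hn
  convert sum_Ioc_mul_eq_sum_sum (toArithmeticFunction f) (toArithmeticFunction g) N using 2
    with n _ k hk
  · rw [mul_apply, Nat.sum_divisorsAntidiagonal
      fun i j => toArithmeticFunction f i * toArithmeticFunction g j]
    refine sum_congr rfl fun k hk => ?_
    rw [happly f (Nat.pos_of_mem_divisors hk).ne',
      happly g (Nat.div_pos (Nat.divisor_le hk) (Nat.pos_of_mem_divisors hk)).ne']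
  · exact congrArg₂ _ (happly f (mem_Ioc.1 hk).1.ne').symm
      (sum_congr rfl fun j hj => (happly g (mem_Ioc.1 hj).1.ne').symm)

lemma sum_Ioc_ite_dvd (f : ℕ → ℝ) {δ : ℕ} (hδ : 0 < δ) (z : ℕ) :
    ∑ d ∈ Ioc 0 z, (if δ ∣ d then f d else 0) = ∑ k ∈ Ioc 0 (z / δ), f (δ * k) := by
  rw [← sum_filter]
  refine (sum_nbij' (δ * ·) (· / δ) ?_ ?_ ?_ ?_ fun _ _ => rfl).symm
  · intro k hk
    rw [mem_Ioc] at hk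
    rw [mem_filter, mem_Ioc]
    exact ⟨⟨Nat.mul_pos hδ hk.1, (Nat.mul_le_mul_left δ hk.2).trans (Nat.mul_div_le z δ)⟩,
      dvd_mul_right δ k⟩
  · intro d hd
    rw [mem_filter, mem_Ioc] at hd
    exact mem_Ioc.2 ⟨Nat.div_pos (Nat.le_of_dvd hd.1.1 hd.2) hδ, Nat.div_le_div_right hd.1.2⟩
  · exact fun k _ => Nat.mul_div_cancel_left k hδ
  · exact fun d hd => Nat.mul_div_cancel' (mem_filter.1 hd).2

/-- The Möbius function restricted to the integers coprime to `δ`. -/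
noncomputable def coprimeMoebius (δ : ℕ) : ArithmeticFunction ℝ :=
  ⟨fun k => if k.Coprime δ then μ k else 0, by simp⟩

lemma coprimeMoebius_apply (δ k : ℕ) :
    coprimeMoebius δ k = if k.Coprime δ then (μ k : ℝ) else 0 := rfl

lemma abs_coprimeMoebius_le_one (δ k : ℕ) : |coprimeMoebius δ k| ≤ 1 := by
  rw [coprimeMoebius_apply]
  split_ifs
  · exact abs_moebius_cast_le_one k
  · simp

lemma isMultiplicative_coprimeMoebius (δ : ℕ) : (coprimeMoebius δ).IsMultiplicative := by
  refine ⟨by simp [coprimeMoebius_apply], fun {m n} hmn => ?_⟩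
  simp only [coprimeMoebius_apply, Nat.coprime_mul_iff_left,
    isMultiplicative_moebius.map_mul_of_coprime hmn]
  rw [ite_zero_mul_ite_zero]
  push_cast
  rfl

lemma moebius_mul_eq_mul_coprimeMoebius (δ k : ℕ) :
    (μ (δ * k) : ℝ) = μ δ * coprimeMoebius δ k := by
  rw [coprimeMoebius_apply]
  split_ifs with hc
  · exact_mod_cast isMultiplicative_moebius.map_mul_of_coprime hc.symm
  · rw [moebius_eq_zero_of_not_squarefree fun hsq => hc (Nat.coprime_of_squarefree_mul hsq).symm]
    simp

lemma sum_coprimeMoebius_divisors_prime_pow (δ : ℕ) {p k : ℕ} (hp : p.Prime) (hk : k ≠ 0) :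
    ∑ d ∈ (p ^ k).divisors, coprimeMoebius δ d = if p ∣ δ then 1 else 0 := by
  obtain ⟨k, rfl⟩ := Nat.exists_eq_add_one_of_ne_zero hk
  have hhigh : ∑ i ∈ range k, coprimeMoebius δ (p ^ (i + 1 + 1)) = 0 :=
    sum_eq_zero fun i _ => by
      have hμ : μ (p ^ (i + 1 + 1)) = 0 := by simp [moebius_apply_prime_pow hp]
      simp [coprimeMoebius_apply, hμ]
  rw [Nat.sum_divisors_prime_pow hp, sum_range_succ', sum_range_succ', hhigh]
  by_cases hpδ : p ∣ δ
  · simp [coprimeMoebius_apply, hp.coprime_iff_not_dvd, hpδ]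
  · simp [coprimeMoebius_apply, hp.coprime_iff_not_dvd, hpδ, moebius_apply_prime hp]

lemma sum_coprimeMoebius_divisors (δ : ℕ) {n : ℕ} (hn : n ≠ 0) :
    ∑ k ∈ n.divisors, coprimeMoebius δ k = if ∀ p ∈ n.primeFactors, p ∣ δ then 1 else 0 := by
  rw [← coe_mul_zeta_apply, ((isMultiplicative_coprimeMoebius δ).mul
    isMultiplicative_zeta.natCast).multiplicative_factorization _ hn, Finsupp.prod,
    Nat.support_factorization]
  have hfactor (p : ℕ) (hp : p ∈ n.primeFactors) :
      (coprimeMoebius δ * (ζ : ArithmeticFunction ℝ)) (p ^ n.factorization p) =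
        if p ∣ δ then 1 else 0 := by
    rw [coe_mul_zeta_apply]
    exact sum_coprimeMoebius_divisors_prime_pow δ (Nat.prime_of_mem_primeFactors hp)
      (Finsupp.mem_support_iff.1 (by rwa [Nat.support_factorization]))
  rw [prod_congr rfl hfactor, prod_ite_zero, prod_const_one]

lemma sum_coprimeMoebius_divisors_mem_Icc (δ : ℕ) {n : ℕ} (hn : n ≠ 0) :
    ∑ k ∈ n.divisors, coprimeMoebius δ k ∈ Set.Icc (0 : ℝ) 1 := by
  rw [sum_coprimeMoebius_divisors δ hn]
  split_ifs <;> simp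

lemma abs_sum_coprimeMoebius_div_le_two (δ N : ℕ) :
    |∑ k ∈ Ioc 0 N, coprimeMoebius δ k / k| ≤ 2 := by
  rcases Nat.eq_zero_or_pos N with rfl | hN
  · simp
  have hN' : (0 : ℝ) < N := mod_cast hN
  have hcount : |∑ k ∈ Ioc 0 N, coprimeMoebius δ k * (N / k : ℕ)| ≤ N := by
    have h := sum_Ioc_sum_divisors_mul (coprimeMoebius δ) 1 N
    simp only [Pi.one_apply, mul_one, sum_const, Nat.card_Ioc, tsub_zero, nsmul_eq_mul] at h
    rw [← h]
    refine (abs_sum_le_sum_abs _ _).trans ((sum_le_card_nsmul _ _ 1 fun n hn => ?_).trans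
      (by simp))
    obtain ⟨h0, h1⟩ := sum_coprimeMoebius_divisors_mem_Icc δ (mem_Ioc.1 hn).1.ne'
    rwa [abs_of_nonneg h0]
  have hround : |∑ k ∈ Ioc 0 N, coprimeMoebius δ k * ((N : ℝ) / k - (N / k : ℕ))| ≤ N := by
    refine (abs_sum_le_sum_abs _ _).trans ((sum_le_card_nsmul _ _ 1 fun k _ => ?_).trans
      (by simp))
    rw [abs_mul]
    exact mul_le_one₀ (abs_coprimeMoebius_le_one δ k) (abs_nonneg _)
      (abs_cast_div_sub_natDiv_le_one N k)
  have hsplit : N * ∑ k ∈ Ioc 0 N, coprimeMoebius δ k / k =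
      ∑ k ∈ Ioc 0 N, coprimeMoebius δ k * ((N : ℝ) / k - (N / k : ℕ)) +
        ∑ k ∈ Ioc 0 N, coprimeMoebius δ k * (N / k : ℕ) := by
    rw [mul_sum, ← sum_add_distrib]
    exact sum_congr rfl fun k _ => by ring
  refine le_of_mul_le_mul_left ?_ hN'
  rw [← abs_of_pos hN', ← abs_mul, hsplit, abs_of_pos hN']
  linarith [abs_add_le (∑ k ∈ Ioc 0 N, coprimeMoebius δ k * ((N : ℝ) / k - (N / k : ℕ)))
    (∑ k ∈ Ioc 0 N, coprimeMoebius δ k * (N / k : ℕ))]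

lemma prod_primeFactors_inv_one_sub_inv {δ : ℕ} (hδ : 0 < δ) :
    ∏ p ∈ δ.primeFactors, (1 - (p : ℝ)⁻¹)⁻¹ = δ / δ.totient := by
  have h : (δ.totient : ℝ) = δ * ∏ p ∈ δ.primeFactors, (1 - (p : ℝ)⁻¹) := by
    have h := congrArg (Rat.cast : ℚ → ℝ) (Nat.totient_eq_mul_prod_factors δ)
    push_cast at h
    exact h
  have hδ' : (δ : ℝ) ≠ 0 := mod_cast hδ.ne'
  rw [h, prod_inv_distrib, div_mul_cancel_left₀ hδ']

lemma hasSum_inv_factoredNumbers {δ : ℕ} (hδ : 0 < δ) :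
    HasSum (fun n : Nat.factoredNumbers δ.primeFactors => (n : ℝ)⁻¹) (δ / δ.totient) := by
  let inv : ℕ →* ℝ := ⟨⟨fun n => (n : ℝ)⁻¹, by simp⟩, fun a b => by simp [mul_comm]⟩
  have h := (EulerProduct.summable_and_hasSum_factoredNumbers_prod_filter_prime_geometric (f := inv)
    (fun {p} hp => by
      simpa [inv] using inv_lt_one_of_one_lt₀ (mod_cast hp.one_lt : (1 : ℝ) < p))
    δ.primeFactors).2
  rw [filter_true_of_mem fun p hp => Nat.prime_of_mem_primeFactors hp] at h
  rw [← prod_primeFactors_inv_one_sub_inv hδ]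
  exact h

lemma sum_sum_coprimeMoebius_divisors_div_le {δ : ℕ} (hδ : 0 < δ) (N : ℕ) :
    ∑ n ∈ Ioc 0 N, (∑ k ∈ n.divisors, coprimeMoebius δ k) / n ≤ δ / δ.totient := by
  classical
  have hmem (n : ℕ) (hn : n ∈ (Ioc 0 N).filter fun n => ∀ p ∈ n.primeFactors, p ∣ δ) :
      n ∈ Nat.factoredNumbers δ.primeFactors := by
    obtain ⟨hnN, hp⟩ := mem_filter.1 hn
    exact Nat.mem_factoredNumbers_of_primeFactors_subset (mem_Ioc.1 hnN).1.ne' fun p hpn =>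
      Nat.mem_primeFactors.2 ⟨Nat.prime_of_mem_primeFactors hpn, hp p hpn, hδ.ne'⟩
  calc ∑ n ∈ Ioc 0 N, (∑ k ∈ n.divisors, coprimeMoebius δ k) / n
      = ∑ n ∈ Ioc 0 N with ∀ p ∈ n.primeFactors, p ∣ δ, (n : ℝ)⁻¹ := by
        rw [sum_filter]
        refine sum_congr rfl fun n hn => ?_
        rw [sum_coprimeMoebius_divisors δ (mem_Ioc.1 hn).1.ne', ite_div, one_div, zero_div]
    _ ≤ δ / δ.totient := by
        rw [← sum_subtype_of_mem _ hmem]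
        exact sum_le_hasSum _ (fun _ _ => by positivity) (hasSum_inv_factoredNumbers hδ)

lemma sum_Ioc_inv_eq_harmonic (n : ℕ) : ∑ j ∈ Ioc 0 n, (j : ℝ)⁻¹ = harmonic n := by
  rw [harmonic_eq_sum_Icc, ← Icc_add_one_left_eq_Ioc]
  push_cast
  rfl

lemma abs_sum_inv_sub_log_sub_eulerMascheroni_le {v : ℝ} (hv : 1 ≤ v) :
    |∑ j ∈ Ioc 0 ⌊v⌋₊, (j : ℝ)⁻¹ - Real.log v - Real.eulerMascheroniConstant| ≤ 2 / v := by
  set n := ⌊v⌋₊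
  have hn0 : n ≠ 0 := (Nat.floor_pos.2 hv).ne'
  have hn1 : (1 : ℝ) ≤ n := mod_cast Nat.floor_pos.2 hv
  have hnv : (n : ℝ) ≤ v := Nat.floor_le (by linarith)
  have hvn : v < n + 1 := Nat.lt_floor_add_one v
  have hlower := Real.eulerMascheroniSeq_lt_eulerMascheroniConstant n
  have hupper := Real.eulerMascheroniConstant_lt_eulerMascheroniSeq' n
  rw [Real.eulerMascheroniSeq] at hlower
  rw [Real.eulerMascheroniSeq', if_neg hn0] at hupper
  have hlog {a b : ℝ} (ha : 0 < a) (hb : 0 < b) : Real.log b - Real.log a ≤ (b - a) / a := by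
    rw [← Real.log_div hb.ne' ha.ne', sub_div, div_self ha.ne']
    exact Real.log_le_sub_one_of_pos (by positivity)
  have hdown : Real.log v - Real.log n ≤ 2 / v := by
    refine (hlog (by linarith) (by linarith)).trans ?_
    rw [div_le_div_iff₀ (by linarith) (by linarith)]
    nlinarith
  have hup : Real.log (n + 1) - Real.log v ≤ 2 / v :=
    (hlog (by linarith) (by linarith)).trans (by gcongr; linarith)
  rw [sum_Ioc_inv_eq_harmonic, abs_le]
  constructor <;> linarith

lemma sum_sum_coprimeMoebius_divisors_div_eq (δ N : ℕ) :
    ∑ n ∈ Ioc 0 N, (∑ k ∈ n.divisors, coprimeMoebius δ k) / n =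
      ∑ k ∈ Ioc 0 N, coprimeMoebius δ k / k * ∑ j ∈ Ioc 0 (N / k), (j : ℝ)⁻¹ := by
  rw [← sum_Ioc_sum_divisors_mul]
  refine sum_congr rfl fun n _ => ?_
  rw [sum_div]
  refine sum_congr rfl fun k hk => ?_
  have hk0 : (k : ℝ) ≠ 0 := mod_cast (Nat.pos_of_mem_divisors hk).ne'
  rw [Nat.cast_div (Nat.dvd_of_mem_divisors hk) hk0]
  field_simp

lemma abs_sum_coprimeMoebius_div_mul_log_le {δ : ℕ} (hδ : 0 < δ) {Y : ℝ} (hY : 1 ≤ Y) :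
    |∑ k ∈ Ioc 0 ⌊Y⌋₊, coprimeMoebius δ k / k * Real.log (Y / k)| ≤ 6 * (δ / δ.totient) := by
  set N := ⌊Y⌋₊
  set γ := Real.eulerMascheroniConstant
  set F := ∑ n ∈ Ioc 0 N, (∑ k ∈ n.divisors, coprimeMoebius δ k) / n with hF
  set H := ∑ k ∈ Ioc 0 N, coprimeMoebius δ k / k * Real.log (Y / k) with hH
  have hNY : (N : ℝ) ≤ Y := Nat.floor_le (by linarith)
  have hcompare : |F - H - γ * ∑ k ∈ Ioc 0 N, coprimeMoebius δ k / k| ≤ 2 := by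
    rw [hF, hH, sum_sum_coprimeMoebius_divisors_div_eq, mul_sum, ← sum_sub_distrib,
      ← sum_sub_distrib]
    refine (abs_sum_le_sum_abs _ _).trans
      ((sum_le_card_nsmul _ _ (2 / Y) fun k hk => ?_).trans ?_)
    · obtain ⟨hk0, hkN⟩ := mem_Ioc.1 hk
      have hk0' : (0 : ℝ) < k := mod_cast hk0
      have hkY : (k : ℝ) ≤ Y := le_trans (mod_cast hkN) hNY
      have hv := abs_sum_inv_sub_log_sub_eulerMascheroni_le ((one_le_div hk0').2 hkY)
      rw [Nat.floor_div_natCast] at hv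
      rw [← mul_sub, mul_comm γ, ← mul_sub, abs_mul, abs_div, abs_of_pos hk0']
      calc |coprimeMoebius δ k| / k * _ ≤ 1 / k * (2 / (Y / k)) := by
            gcongr
            exact abs_coprimeMoebius_le_one δ k
        _ = 2 / Y := by field_simp
    · rw [Nat.card_Ioc, tsub_zero, nsmul_eq_mul, mul_div_assoc', div_le_iff₀ (by linarith)]
      linarith
  have hF0 : 0 ≤ F := sum_nonneg fun n hn =>
    div_nonneg (sum_coprimeMoebius_divisors_mem_Icc δ (mem_Ioc.1 hn).1.ne').1 (Nat.cast_nonneg n)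
  have hF1 := sum_sum_coprimeMoebius_divisors_div_le hδ N
  have hratio : (1 : ℝ) ≤ δ / δ.totient :=
    (one_le_div (mod_cast Nat.totient_pos.2 hδ)).2 (mod_cast Nat.totient_le δ)
  have hS := abs_le.1 (abs_sum_coprimeMoebius_div_le_two δ N)
  have hγ : 1 / 2 < γ := Real.one_half_lt_eulerMascheroniConstant
  have hγ' : γ < 2 / 3 := Real.eulerMascheroniConstant_lt_two_thirds
  rw [abs_le] at hcompare ⊢
  constructor <;> nlinarith

end CoprimeMoebius

section TruncatedVonMangoldt

open scoped ArithmeticFunction.Moebius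
open Real (posLog)

lemma le_totient_sq_mul_gcd_two (e : ℕ) : e ≤ e.totient ^ 2 * e.gcd 2 := by
  induction e using Nat.recOnPosPrimePosCoprime with
  | prime_pow p n hp hn =>
    obtain ⟨m, rfl⟩ := Nat.exists_eq_add_one_of_ne_zero hn.ne'
    have hpow : 1 ≤ p ^ m := Nat.one_le_pow _ _ hp.pos
    have hp2 : p ≤ (p - 1) ^ 2 * (p ^ (m + 1)).gcd 2 := by
      rcases hp.eq_two_or_odd' with rfl | hodd
      · simp [pow_succ]
      · rw [Nat.Coprime.gcd_eq_one ((Nat.coprime_two_right.2 hodd).pow_left _), mul_one]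
        obtain ⟨q, rfl⟩ : ∃ q, p = q + 3 := ⟨p - 3, by have := hp.two_le; grind⟩
        simp only [Nat.add_succ_sub_one]
        nlinarith
    calc p ^ (m + 1) = p ^ m * p := pow_succ _ _
      _ ≤ (p ^ m) ^ 2 * ((p - 1) ^ 2 * (p ^ (m + 1)).gcd 2) :=
        Nat.mul_le_mul (Nat.le_self_pow two_ne_zero _) hp2
      _ = (p ^ (m + 1)).totient ^ 2 * (p ^ (m + 1)).gcd 2 := by
        rw [Nat.totient_prime_pow_succ hp]
        ring
  | zero => simp
  | one => simp
  | coprime a b _ _ hab iha ihb =>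
    calc a * b ≤ (a.totient ^ 2 * a.gcd 2) * (b.totient ^ 2 * b.gcd 2) := Nat.mul_le_mul iha ihb
      _ = (a * b).totient ^ 2 * (a * b).gcd 2 := by
        rw [Nat.totient_mul hab, Nat.gcd_comm (a * b), Nat.Coprime.gcd_mul 2 hab,
          Nat.gcd_comm 2, Nat.gcd_comm 2]
        ring

lemma inv_mul_totient_le_two_mul_rpow (e : ℕ) :
    ((e : ℝ) * e.totient)⁻¹ ≤ 2 * (e : ℝ) ^ (-(3 / 2) : ℝ) := by
  rcases Nat.eq_zero_or_pos e with rfl | he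
  · simp [Real.zero_rpow]
  have he' : (0 : ℝ) < e := mod_cast he
  have : (0 : ℝ) < e.totient := mod_cast Nat.totient_pos.2 he
  have hsq : (e : ℝ) ≤ e.totient ^ 2 * 2 := mod_cast
    (le_totient_sq_mul_gcd_two e).trans (Nat.mul_le_mul_left _ (Nat.gcd_le_right e two_pos))
  have hsqrt : √e ≤ 2 * e.totient := by
    rw [Real.sqrt_le_left (by positivity)]
    nlinarith
  have : 0 < √(e : ℝ) := Real.sqrt_pos.2 he'
  have hpow : (e : ℝ) ^ (3 / 2 : ℝ) = e * √e := by
    rw [show (3 / 2 : ℝ) = 1 + 1 / 2 by norm_num, Real.rpow_add he', Real.rpow_one,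
      Real.sqrt_eq_rpow]
  rw [Real.rpow_neg he'.le, hpow, ← one_div, ← div_eq_mul_inv,
    div_le_div_iff₀ (by positivity) (by positivity)]
  nlinarith

lemma div_totient_le_sum_divisors_inv_totient (δ : ℕ) :
    (δ : ℝ) / δ.totient ≤ ∑ e ∈ δ.divisors, (e.totient : ℝ)⁻¹ := by
  rcases Nat.eq_zero_or_pos δ with rfl | hδ
  · simp
  have hφ : (0 : ℝ) < δ.totient := mod_cast Nat.totient_pos.2 hδ
  have hsum : (δ : ℝ) = ∑ e ∈ δ.divisors, ((δ / e).totient : ℝ) := by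
    rw [Nat.sum_div_divisors δ fun e => (e.totient : ℝ)]
    exact_mod_cast (Nat.sum_totient δ).symm
  rw [div_le_iff₀ hφ, hsum, sum_mul]
  refine sum_le_sum fun e he => ?_
  have hφe : (0 : ℝ) < e.totient := mod_cast Nat.totient_pos.2 (Nat.pos_of_mem_divisors he)
  have hsuper := Nat.totient_super_multiplicative (δ / e) e
  rw [Nat.div_mul_cancel (Nat.dvd_of_mem_divisors he)] at hsuper
  rw [← div_eq_inv_mul, le_div_iff₀ hφe]
  exact_mod_cast hsuper

lemma inv_totient_le_sum_divisors (δ : ℕ) :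
    (δ.totient : ℝ)⁻¹ ≤
      ∑ e ∈ δ.divisors, ((e : ℝ) * e.totient)⁻¹ * ((δ / e : ℕ) : ℝ)⁻¹ := by
  rcases Nat.eq_zero_or_pos δ with rfl | hδ
  · simp
  calc (δ.totient : ℝ)⁻¹ = δ / δ.totient * (δ : ℝ)⁻¹ := by field_simp
    _ ≤ (∑ e ∈ δ.divisors, (e.totient : ℝ)⁻¹) * (δ : ℝ)⁻¹ := by
      gcongr
      exact div_totient_le_sum_divisors_inv_totient δ
    _ = ∑ e ∈ δ.divisors, ((e : ℝ) * e.totient)⁻¹ * ((δ / e : ℕ) : ℝ)⁻¹ := by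
      rw [sum_mul]
      refine sum_congr rfl fun e he => ?_
      have he0 : (e : ℝ) ≠ 0 := mod_cast (Nat.pos_of_mem_divisors he).ne'
      rw [Nat.cast_div (Nat.dvd_of_mem_divisors he) he0]
      field_simp

lemma half_le_log_natCast {z : ℕ} (hz : 2 ≤ z) : 1 / 2 ≤ Real.log z := by
  have h := Real.log_le_log two_pos (mod_cast hz : (2 : ℝ) ≤ z)
  linarith [Real.log_two_gt_d9]

lemma exists_sum_inv_totient_le_mul_log :
    ∃ C : ℝ, 0 < C ∧ ∀ z : ℕ, 2 ≤ z → ∑ δ ∈ Ioc 0 z, (δ.totient : ℝ)⁻¹ ≤ C * Real.log z := by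
  have hs : Summable fun n : ℕ => (n : ℝ) ^ (-(3 / 2) : ℝ) :=
    Real.summable_nat_rpow.2 (by norm_num)
  set S := ∑' n : ℕ, (n : ℝ) ^ (-(3 / 2) : ℝ)
  have hS : 0 ≤ S := tsum_nonneg fun n => by positivity
  refine ⟨6 * S + 1, by positivity, fun z hz => ?_⟩
  have hlog := half_le_log_natCast hz
  calc ∑ δ ∈ Ioc 0 z, (δ.totient : ℝ)⁻¹
      ≤ ∑ e ∈ Ioc 0 z, ((e : ℝ) * e.totient)⁻¹ * ∑ j ∈ Ioc 0 (z / e), (j : ℝ)⁻¹ := by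
        rw [← sum_Ioc_sum_divisors_mul]
        exact sum_le_sum fun δ _ => inv_totient_le_sum_divisors δ
    _ ≤ ∑ e ∈ Ioc 0 z, 2 * (e : ℝ) ^ (-(3 / 2) : ℝ) * (1 + Real.log z) := by
        refine sum_le_sum fun e _ => mul_le_mul (inv_mul_totient_le_two_mul_rpow e) ?_
          (sum_nonneg fun j _ => by positivity) (by positivity)
        rw [sum_Ioc_inv_eq_harmonic]
        refine (harmonic_le_one_add_log _).trans (add_le_add_right ?_ 1)
        rw [← Real.log_of_nat_eq_posLog, ← Real.log_of_nat_eq_posLog]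
        exact Real.posLog_le_posLog (by positivity) (mod_cast Nat.div_le_self z e)
    _ ≤ 2 * S * (1 + Real.log z) := by
        rw [← sum_mul, ← mul_sum]
        gcongr
        exact hs.sum_le_tsum _ fun n _ => by positivity
    _ ≤ (6 * S + 1) * Real.log z := by nlinarith

lemma sum_sum_mul_div_lcm_eq_sum_totient_mul_sq (c : ℕ → ℝ) (z : ℕ) :
    ∑ d ∈ Ioc 0 z, ∑ e ∈ Ioc 0 z, c d * c e / (d.lcm e : ℕ) =
      ∑ δ ∈ Ioc 0 z, (δ.totient : ℝ) * (∑ d ∈ Ioc 0 z, if δ ∣ d then c d / d else 0) ^ 2 := by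
  have hgcd {d e : ℕ} (hd : d ∈ Ioc 0 z) :
      (d.gcd e : ℝ) = ∑ δ ∈ Ioc 0 z, if δ ∣ d ∧ δ ∣ e then (δ.totient : ℝ) else 0 := by
    obtain ⟨hd0, hdz⟩ := mem_Ioc.1 hd
    have hset : (Ioc 0 z).filter (fun δ => δ ∣ d ∧ δ ∣ e) = (d.gcd e).divisors := by
      ext δ
      simp only [mem_filter, mem_Ioc, Nat.mem_divisors, Nat.dvd_gcd_iff]
      exact ⟨fun h => ⟨h.2, (Nat.gcd_pos_of_pos_left e hd0).ne'⟩, fun h =>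
        ⟨⟨Nat.pos_of_dvd_of_pos h.1.1 hd0, (Nat.le_of_dvd hd0 h.1.1).trans hdz⟩, h.1⟩⟩
    rw [← sum_filter, hset]
    exact_mod_cast (Nat.sum_totient _).symm
  have hterm {d e : ℕ} (hd : d ∈ Ioc 0 z) (he : e ∈ Ioc 0 z) : c d * c e / (d.lcm e : ℕ) =
      ∑ δ ∈ Ioc 0 z, (δ.totient : ℝ) *
        ((if δ ∣ d then c d / d else 0) * (if δ ∣ e then c e / e else 0)) := by
    have hd0 : (d : ℝ) ≠ 0 := mod_cast (mem_Ioc.1 hd).1.ne'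
    have he0 : (e : ℝ) ≠ 0 := mod_cast (mem_Ioc.1 he).1.ne'
    have hlcm : (d.gcd e : ℝ) * (d.lcm e : ℕ) = d * e := mod_cast Nat.gcd_mul_lcm d e
    have hlcm0 : ((d.lcm e : ℕ) : ℝ) ≠ 0 := right_ne_zero_of_mul (hlcm ▸ mul_ne_zero hd0 he0)
    calc c d * c e / (d.lcm e : ℕ) = (d.gcd e : ℝ) * (c d / d * (c e / e)) := by
          field_simp
          linear_combination -(c d * c e) * hlcm
      _ = _ := by
          rw [hgcd hd, sum_mul]
          refine sum_congr rfl fun δ _ => ?_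
          rw [ite_zero_mul_ite_zero, ite_mul, zero_mul, mul_ite, mul_zero]
  rw [sum_congr rfl fun d hd => (sum_congr rfl fun e he => hterm hd he).trans sum_comm, sum_comm]
  refine sum_congr rfl fun δ _ => ?_
  rw [sq, sum_mul_sum, mul_sum]
  exact sum_congr rfl fun d _ => (mul_sum _ _ _).symm

lemma sum_sq_sum_ite_dvd_le (c : ℕ → ℝ) (s : Finset ℕ) (N : ℕ) :
    ∑ n ∈ Ioc 0 N, (∑ d ∈ s, if d ∣ n then c d else 0) ^ 2 ≤
      N * ∑ d ∈ s, ∑ e ∈ s, c d * c e / (d.lcm e : ℕ) + (∑ d ∈ s, |c d|) ^ 2 := by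
  have hexpand (n : ℕ) : (∑ d ∈ s, if d ∣ n then c d else 0) ^ 2 =
      ∑ d ∈ s, ∑ e ∈ s, if d.lcm e ∣ n then c d * c e else 0 := by
    simp only [sq, sum_mul_sum, ite_zero_mul_ite_zero, Nat.lcm_dvd_iff]
  have hcount : ∑ n ∈ Ioc 0 N, (∑ d ∈ s, if d ∣ n then c d else 0) ^ 2 =
      ∑ d ∈ s, ∑ e ∈ s, c d * c e * (N / d.lcm e : ℕ) := by
    rw [sum_congr rfl fun n _ => hexpand n, sum_comm]
    refine sum_congr rfl fun d _ => sum_comm.trans (sum_congr rfl fun e _ => ?_)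
    rw [← sum_filter, sum_const, Nat.Ioc_filter_dvd_card_eq_div, nsmul_eq_mul, mul_comm]
  rw [hcount, sq (∑ d ∈ s, |c d|), sum_mul_sum, mul_sum, ← sum_add_distrib]
  refine sum_le_sum fun d _ => ?_
  rw [mul_sum, ← sum_add_distrib]
  refine sum_le_sum fun e _ => ?_
  have hround : c d * c e * ((N / d.lcm e : ℕ) - (N : ℝ) / (d.lcm e : ℕ)) ≤ |c d| * |c e| := by
    refine (le_abs_self _).trans ?_
    rw [abs_mul, abs_mul, abs_sub_comm]
    exact mul_le_of_le_one_right (by positivity) (abs_cast_div_sub_natDiv_le_one N _)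
  linear_combination hround

/-- Goldston's truncated von Mangoldt function `Λ_z(n) = ∑_{d ∣ n, d ≤ z} μ(d) log (z / d)`; the
truncation `d ≤ z` is built into the positive part `log⁺` of the logarithm. -/
noncomputable def truncatedVonMangoldt (z n : ℕ) : ℝ :=
  ∑ d ∈ n.divisors, (μ d : ℝ) * posLog ((z : ℝ) / d)

lemma posLog_natCast_div_le_log (z d : ℕ) : posLog ((z : ℝ) / d) ≤ Real.log z := by
  rcases Nat.eq_zero_or_pos d with rfl | hd
  · simpa using Real.log_natCast_nonneg z
  rw [← Real.log_of_nat_eq_posLog]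
  exact Real.posLog_le_posLog (by positivity) (div_le_self z.cast_nonneg (mod_cast hd))

lemma posLog_natCast_div_eq_zero {z d : ℕ} (h : z ≤ d) : posLog ((z : ℝ) / d) = 0 := by
  rw [Real.posLog_eq_zero_iff, abs_of_nonneg (by positivity)]
  exact div_le_one_of_le₀ (mod_cast h) (Nat.cast_nonneg d)

lemma posLog_natCast_div_eq_log {z d : ℕ} (hd : 0 < d) (h : d ≤ z) :
    posLog ((z : ℝ) / d) = Real.log (z / d) := by
  refine Real.posLog_eq_log ?_
  rw [abs_of_nonneg (by positivity)]
  exact (one_le_div (mod_cast hd)).2 (mod_cast h)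

lemma sum_divisors_eq_sum_Ioc_ite_dvd {c : ℕ → ℝ} {z : ℕ} (hc : ∀ d, z < d → c d = 0) {n : ℕ}
    (hn : 0 < n) : ∑ d ∈ n.divisors, c d = ∑ d ∈ Ioc 0 z, if d ∣ n then c d else 0 := by
  rw [← sum_filter]
  refine (sum_subset_zero_on_sdiff ?_ ?_ fun _ _ => rfl).symm
  · intro d hd
    exact Nat.mem_divisors.2 ⟨(mem_filter.1 hd).2, hn.ne'⟩
  · intro d hd
    obtain ⟨hdn, hdz⟩ := mem_sdiff.1 hd
    refine hc d (not_le.1 fun hle => hdz (mem_filter.2 ⟨mem_Ioc.2 ⟨?_, hle⟩, ?_⟩))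
    exacts [Nat.pos_of_mem_divisors hdn, Nat.dvd_of_mem_divisors hdn]

lemma abs_sum_moebius_mul_posLog_div_le {z δ : ℕ} (hδ : 0 < δ) (hδz : δ ≤ z) :
    |∑ d ∈ Ioc 0 z, if δ ∣ d then (μ d : ℝ) * posLog ((z : ℝ) / d) / d else 0| ≤
      6 / δ.totient := by
  have hδ' : (0 : ℝ) < δ := mod_cast hδ
  have hfactor : ∑ d ∈ Ioc 0 z, (if δ ∣ d then (μ d : ℝ) * posLog ((z : ℝ) / d) / d else 0) =
      μ δ / δ * ∑ k ∈ Ioc 0 (z / δ), coprimeMoebius δ k / k * Real.log (z / δ / k) := by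
    rw [sum_Ioc_ite_dvd _ hδ, mul_sum]
    refine sum_congr rfl fun k hk => ?_
    obtain ⟨hk0, hkz⟩ := mem_Ioc.1 hk
    rw [posLog_natCast_div_eq_log (Nat.mul_pos hδ hk0)
      ((Nat.mul_le_mul_left δ hkz).trans (Nat.mul_div_le z δ)), moebius_mul_eq_mul_coprimeMoebius]
    push_cast
    rw [div_div (z : ℝ)]
    ring
  have hsum := abs_sum_coprimeMoebius_div_mul_log_le hδ (Y := z / δ)
    ((one_le_div hδ').2 (mod_cast hδz))
  rw [Nat.floor_div_natCast, Nat.floor_natCast] at hsum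
  rw [hfactor, abs_mul, abs_div, abs_of_pos hδ']
  calc |(μ δ : ℝ)| / δ * _ ≤ 1 / δ * (6 * (δ / δ.totient)) := by
        gcongr
        exact abs_moebius_cast_le_one δ
    _ = 6 / δ.totient := by field_simp

lemma exists_sum_sum_moebius_mul_posLog_div_lcm_le : ∃ C : ℝ, 0 < C ∧ ∀ z : ℕ, 2 ≤ z →
    ∑ d ∈ Ioc 0 z, ∑ e ∈ Ioc 0 z, (μ d : ℝ) * posLog ((z : ℝ) / d) *
      (μ e * posLog ((z : ℝ) / e)) / (d.lcm e : ℕ) ≤ C * Real.log z := by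
  obtain ⟨C, hC, hsum⟩ := exists_sum_inv_totient_le_mul_log
  refine ⟨36 * C, by positivity, fun z hz => ?_⟩
  rw [sum_sum_mul_div_lcm_eq_sum_totient_mul_sq fun d => (μ d : ℝ) * posLog ((z : ℝ) / d)]
  calc _ ≤ ∑ δ ∈ Ioc 0 z, 36 * (δ.totient : ℝ)⁻¹ := by
        refine sum_le_sum fun δ hδ => ?_
        obtain ⟨hδ0, hδz⟩ := mem_Ioc.1 hδ
        have hφ : (0 : ℝ) < δ.totient := mod_cast Nat.totient_pos.2 hδ0
        calc _ ≤ (δ.totient : ℝ) * (6 / δ.totient) ^ 2 :=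
              mul_le_mul_of_nonneg_left (sq_le_sq' (abs_le.1 ?_).1 (abs_le.1 ?_).2) hφ.le
          _ = 36 * (δ.totient : ℝ)⁻¹ := by field_simp; norm_num
        all_goals exact abs_sum_moebius_mul_posLog_div_le hδ0 hδz
    _ ≤ 36 * C * Real.log z := by
        rw [← mul_sum, mul_assoc]
        exact mul_le_mul_of_nonneg_left (hsum z hz) (by norm_num)

lemma exists_sum_truncatedVonMangoldt_sq_le : ∃ C : ℝ, 0 < C ∧ ∀ z : ℕ, 2 ≤ z → ∀ N : ℕ,
    ∑ n ∈ Ioc 0 N, truncatedVonMangoldt z n ^ 2 ≤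
      C * N * Real.log z + (z * Real.log z) ^ 2 := by
  obtain ⟨C, hC, hquad⟩ := exists_sum_sum_moebius_mul_posLog_div_lcm_le
  refine ⟨C, hC, fun z hz N => ?_⟩
  set c : ℕ → ℝ := fun d => (μ d : ℝ) * posLog ((z : ℝ) / d)
  have hc0 (d : ℕ) (hd : z < d) : c d = 0 := by
    simp only [c, posLog_natCast_div_eq_zero hd.le, mul_zero]
  have hc (d : ℕ) : |c d| ≤ Real.log z := by
    rw [abs_mul, abs_of_nonneg Real.posLog_nonneg]
    exact (mul_le_of_le_one_left Real.posLog_nonneg (abs_moebius_cast_le_one d)).trans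
      (posLog_natCast_div_le_log z d)
  calc ∑ n ∈ Ioc 0 N, truncatedVonMangoldt z n ^ 2
      = ∑ n ∈ Ioc 0 N, (∑ d ∈ Ioc 0 z, if d ∣ n then c d else 0) ^ 2 :=
        sum_congr rfl fun n hn => congrArg (· ^ 2)
          (sum_divisors_eq_sum_Ioc_ite_dvd hc0 (mem_Ioc.1 hn).1)
    _ ≤ N * ∑ d ∈ Ioc 0 z, ∑ e ∈ Ioc 0 z, c d * c e / (d.lcm e : ℕ) +
          (∑ d ∈ Ioc 0 z, |c d|) ^ 2 := sum_sq_sum_ite_dvd_le c _ N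
    _ ≤ N * (C * Real.log z) + (z * Real.log z) ^ 2 := by
        gcongr
        · exact hquad z hz
        · exact (sum_le_card_nsmul _ _ _ fun d _ => hc d).trans_eq (by simp)
    _ = C * N * Real.log z + (z * Real.log z) ^ 2 := by ring

end TruncatedVonMangoldt

section PrimeFactorAveraging

open Filter

lemma primeCounting_le_add_card_primes_Ioc (x T : ℕ) :
    T.primeCounting ≤ x + 1 + #{p ∈ Ioc x T | p.Prime} := by
  rw [Nat.primeCounting, Nat.primeCounting', Nat.count_eq_card_filter_range]
  refine (card_le_card (t := range (x + 1) ∪ {p ∈ Ioc x T | p.Prime}) fun p hp => ?_).trans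
    ((card_union_le _ _).trans_eq (by rw [card_range]))
  grind

lemma eventually_half_le_card_primes_mul_log : ∀ᶠ x : ℕ in atTop, ∀ T : ℕ, x ^ 2 ≤ T →
    (T : ℝ) / 2 ≤ #{p ∈ Ioc x T | p.Prime} * Real.log T := by
  have hlog : ∀ᶠ y : ℝ in atTop, ‖Real.log y‖ ≤ 0.02 * ‖y ^ (1 / 2 : ℝ)‖ :=
    (isLittleO_log_rpow_atTop one_half_pos).bound (by norm_num)
  filter_upwards [tendsto_natCast_atTop_atTop.eventually (eventually_forall_ge_atTop.2 hlog),
    eventually_ge_atTop 3] with x hlog hx T hT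
  have hx' : (3 : ℝ) ≤ x := mod_cast hx
  have hT' : (x : ℝ) ^ 2 ≤ T := mod_cast hT
  have hT9 : (9 : ℝ) ≤ T := by nlinarith
  have hlogT := hlog T (by nlinarith)
  rw [Real.norm_of_nonneg (Real.log_natCast_nonneg T), Real.norm_of_nonneg (by positivity),
    ← Real.sqrt_eq_rpow] at hlogT
  have hxs : x ≤ √(T : ℝ) := Real.le_sqrt_of_sq_le hT'
  have hss : √(T : ℝ) * √T = T := Real.mul_self_sqrt (by positivity)
  have hlogT0 : 0 < Real.log T := Real.log_pos (by linarith)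
  have hlog1 : Real.log (T + 1) ≤ 2 * Real.log T := by
    rw [← Real.log_rpow (by linarith), Real.rpow_ofNat]
    exact Real.log_le_log (by positivity) (by nlinarith)
  have hπ := Chebyshev.pi_ge T
  rw [div_le_iff₀ hlogT0] at hπ
  have hcard : (T.primeCounting : ℝ) ≤ x + 1 + #{p ∈ Ioc x T | p.Prime} :=
    mod_cast primeCounting_le_add_card_primes_Ioc x T
  have hmul := mul_le_mul_of_nonneg_right hcard hlogT0.le
  have hsmall : (x + 3) * Real.log T ≤ 0.1 * T := by
    calc (x + 3) * Real.log T ≤ (2 * √(T : ℝ)) * (0.02 * √(T : ℝ)) := by gcongr; linarith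
      _ ≤ 0.1 * T := by linarith
  nlinarith [Real.log_two_gt_d9]

lemma eventually_pow_three_div_le_card_primes_mul_log : ∀ᶠ x : ℕ in atTop, ∀ k ∈ Ioc 0 x,
    (x : ℝ) ^ 3 / k ≤ 12 * Real.log x * #{p ∈ Ioc x (x ^ 3 / k) | p.Prime} := by
  filter_upwards [eventually_half_le_card_primes_mul_log, eventually_ge_atTop 1]
    with x hcount hx k hk
  obtain ⟨hk0, hkx⟩ := mem_Ioc.1 hk
  have hT : x ^ 2 ≤ x ^ 3 / k := by
    rw [Nat.le_div_iff_mul_le hk0, pow_succ x 2]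
    exact Nat.mul_le_mul_left _ hkx
  have hT1 : (1 : ℝ) ≤ (x ^ 3 / k : ℕ) := mod_cast (Nat.one_le_pow _ _ hx).trans hT
  have hround := (abs_le.1 (abs_cast_div_sub_natDiv_le_one (x ^ 3) k)).2
  have hlog : Real.log (x ^ 3 / k : ℕ) ≤ 3 * Real.log x := by
    rw [show 3 * Real.log x = Real.log (x ^ 3) by simp]
    exact Real.log_le_log (by linarith) (mod_cast Nat.div_le_self _ _)
  have hmul := mul_le_mul_of_nonneg_left hlog
    (Nat.cast_nonneg (α := ℝ) #{p ∈ Ioc x (x ^ 3 / k) | p.Prime})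
  push_cast at hround
  linarith [hcount _ hT]

lemma injOn_mul_sigma_primes (x : ℕ) (T : ℕ → ℕ) :
    Set.InjOn (fun q : (_ : ℕ) × ℕ => q.1 * q.2)
      ((Ioc 0 x).sigma fun k => {p ∈ Ioc x (T k) | p.Prime} : Finset _) := by
  rintro ⟨k, p⟩ h ⟨k', p'⟩ h' heq
  simp only [coe_sigma, Set.mem_sigma_iff, mem_coe, mem_filter, mem_Ioc] at h h' heq
  have hpp : p = p' := by
    rcases (h.2.2.dvd_mul).1 (heq ▸ dvd_mul_left p k) with hdvd | hdvd
    · exact absurd (Nat.le_of_dvd h'.1.1 hdvd) (by omega)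
    · exact (Nat.prime_dvd_prime_iff_eq h.2.2 h'.2.2).1 hdvd
  subst hpp
  rw [Nat.eq_of_mul_eq_mul_right h.2.2.pos heq]

/- Averaging over a prime factor: every `k ≤ x` has about `x ^ 3 / (k log x)` multiples `k * p`
up to `x ^ 3` with `p > x` prime, and these are all distinct. -/
lemma eventually_sum_div_le_of_mul_prime_eq : ∀ᶠ x : ℕ in atTop, ∀ f : ℕ → ℝ, (∀ n, 0 ≤ f n) →
    (∀ k p, p.Prime → x < p → f (k * p) = f k) →
    (x : ℝ) ^ 3 * ∑ k ∈ Ioc 0 x, f k / k ≤ 12 * Real.log x * ∑ n ∈ Ioc 0 (x ^ 3), f n := by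
  filter_upwards [eventually_pow_three_div_le_card_primes_mul_log] with x hcount f hf hfp
  have hinject : ∑ k ∈ Ioc 0 x, ∑ p ∈ Ioc x (x ^ 3 / k) with p.Prime, f (k * p) ≤
      ∑ n ∈ Ioc 0 (x ^ 3), f n := by
    rw [sum_sigma', ← sum_image (f := f) (injOn_mul_sigma_primes x fun k => x ^ 3 / k)]
    refine sum_le_sum_of_subset_of_nonneg (fun n hn => ?_) fun n _ _ => hf n
    simp only [mem_image, mem_sigma, mem_filter, mem_Ioc] at hn ⊢
    obtain ⟨⟨k, p⟩, ⟨⟨hk, -⟩, ⟨-, hpT⟩, hp⟩, rfl⟩ := hn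
    exact ⟨mul_pos hk hp.pos, (Nat.mul_le_mul_left k hpT).trans (Nat.mul_div_le _ k)⟩
  calc (x : ℝ) ^ 3 * ∑ k ∈ Ioc 0 x, f k / k
      ≤ 12 * Real.log x * ∑ k ∈ Ioc 0 x, ∑ p ∈ Ioc x (x ^ 3 / k) with p.Prime, f (k * p) := by
        rw [mul_sum, mul_sum]
        refine sum_le_sum fun k hk => ?_
        rw [sum_congr rfl fun p hp =>
          hfp k p (mem_filter.1 hp).2 (mem_Ioc.1 (mem_filter.1 hp).1).1, sum_const, nsmul_eq_mul]
        linear_combination mul_le_mul_of_nonneg_left (hcount k hk) (hf k)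
    _ ≤ 12 * Real.log x * ∑ n ∈ Ioc 0 (x ^ 3), f n := by
        gcongr

end PrimeFactorAveraging

section BarbanVehov

open Filter
open scoped ArithmeticFunction.Moebius
open Real (posLog)

/-- The Barban–Vehov weights: equal to `μ d` for `d ≤ y`, and tapering off logarithmically to `0`
for `y ≤ d ≤ z`. -/
noncomputable def barbanVehov (y z d : ℕ) : ℝ :=
  μ d * (posLog ((z : ℝ) / d) - posLog ((y : ℝ) / d)) / Real.log (z / y)

/-- The divisor sums of the Barban–Vehov weights, which vanish for `1 < n ≤ y` and whose mean
square up to `N` is of order `1 / log (z / y)`. -/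
noncomputable def barbanVehovSum (y z n : ℕ) : ℝ := ∑ d ∈ n.divisors, barbanVehov y z d

variable {y z : ℕ}

lemma abs_barbanVehov_le_one (hy : 0 < y) (hyz : y ≤ z) (d : ℕ) : |barbanVehov y z d| ≤ 1 := by
  have hy' : (0 : ℝ) < y := mod_cast hy
  have hyz' : (y : ℝ) ≤ z := mod_cast hyz
  have hratio : 1 ≤ (z : ℝ) / y := (one_le_div hy').2 hyz'
  have hnonneg : 0 ≤ posLog ((z : ℝ) / d) - posLog ((y : ℝ) / d) :=
    sub_nonneg.2 (Real.posLog_le_posLog (by positivity) (by gcongr))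
  have hle : posLog ((z : ℝ) / d) - posLog ((y : ℝ) / d) ≤ Real.log (z / y) := by
    rw [← Real.posLog_eq_log (hratio.trans (le_abs_self _)), sub_le_iff_le_add,
      show (z : ℝ) / d = z / y * (y / d) by field_simp]
    exact Real.posLog_mul
  have hdiv := div_nonneg hnonneg (Real.log_nonneg hratio)
  rw [barbanVehov, mul_div_assoc, abs_mul, abs_of_nonneg hdiv]
  exact mul_le_one₀ (abs_moebius_cast_le_one d) hdiv
    (div_le_one_of_le₀ hle (Real.log_nonneg hratio))

lemma barbanVehov_eq_zero {d : ℕ} (hyz : y ≤ z) (hd : z ≤ d) : barbanVehov y z d = 0 := by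
  rw [barbanVehov, posLog_natCast_div_eq_zero hd, posLog_natCast_div_eq_zero (hyz.trans hd)]
  simp

lemma barbanVehov_eq_moebius {d : ℕ} (hyz : y < z) (hd0 : 0 < d) (hd : d ≤ y) :
    barbanVehov y z d = μ d := by
  have hd' : (0 : ℝ) < d := mod_cast hd0
  have hy : (0 : ℝ) < y := hd'.trans_le (mod_cast hd)
  have hz : (y : ℝ) < z := mod_cast hyz
  have hz0 : (0 : ℝ) < z := hy.trans hz
  have hlog : 0 < Real.log (z / y) := Real.log_pos ((one_lt_div hy).2 hz)
  rw [barbanVehov, posLog_natCast_div_eq_log hd0 (hd.trans hyz.le),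
    posLog_natCast_div_eq_log hd0 hd, ← Real.log_div (by positivity) (by positivity),
    div_div_div_cancel_right₀ hd'.ne', mul_div_cancel_right₀ _ hlog.ne']

lemma barbanVehovSum_of_le {n : ℕ} (hyz : y < z) (hn0 : 0 < n) (hn : n ≤ y) :
    barbanVehovSum y z n = if n = 1 then 1 else 0 := by
  rw [barbanVehovSum, ← sum_moebius_divisors]
  exact sum_congr rfl fun d hd => barbanVehov_eq_moebius hyz (Nat.pos_of_mem_divisors hd)
    ((Nat.le_of_dvd hn0 (Nat.dvd_of_mem_divisors hd)).trans hn)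

lemma barbanVehovSum_eq_truncatedVonMangoldt (n : ℕ) : barbanVehovSum y z n =
    (truncatedVonMangoldt z n - truncatedVonMangoldt y n) / Real.log (z / y) := by
  rw [barbanVehovSum, truncatedVonMangoldt, truncatedVonMangoldt, ← sum_sub_distrib, sum_div]
  exact sum_congr rfl fun d _ => by rw [barbanVehov, mul_sub]

lemma barbanVehovSum_mul_prime (hyz : y ≤ z) (k : ℕ) {p : ℕ} (hp : p.Prime) (hzp : z < p) :
    barbanVehovSum y z (k * p) = barbanVehovSum y z k := by
  rcases Nat.eq_zero_or_pos k with rfl | hk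
  · rw [zero_mul]
  have hkp : 0 < k * p := mul_pos hk hp.pos
  refine (sum_subset_zero_on_sdiff (Nat.divisors_subset_of_dvd hkp.ne' (dvd_mul_right k p)) ?_
    fun _ _ => rfl).symm
  intro d hd
  obtain ⟨hdkp, hdk⟩ := mem_sdiff.1 hd
  have hdkp := Nat.dvd_of_mem_divisors hdkp
  have hpd : p ∣ d := by
    by_contra hpd
    exact hdk (Nat.mem_divisors.2
      ⟨((hp.coprime_iff_not_dvd.2 hpd).symm).dvd_of_dvd_mul_right hdkp, hk.ne'⟩)
  exact barbanVehov_eq_zero hyz (hzp.le.trans (Nat.le_of_dvd (Nat.pos_of_dvd_of_pos hdkp hkp) hpd))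

lemma exists_sum_barbanVehovSum_sq_le : ∃ C : ℝ, 0 < C ∧ ∀ y z : ℕ, 2 ≤ y → y ≤ z → ∀ N : ℕ,
    ∑ n ∈ Ioc 0 N, barbanVehovSum y z n ^ 2 ≤
      (C * N * Real.log z + 4 * (z * Real.log z) ^ 2) / Real.log (z / y) ^ 2 := by
  obtain ⟨C, hC, hsq⟩ := exists_sum_truncatedVonMangoldt_sq_le
  refine ⟨4 * C, by positivity, fun y z hy hyz N => ?_⟩
  have hy' : (2 : ℝ) ≤ y := mod_cast hy
  have hyz' : (y : ℝ) ≤ z := mod_cast hyz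
  have : 0 ≤ Real.log y := Real.log_natCast_nonneg y
  have hlog : Real.log y ≤ Real.log z := Real.log_le_log (by linarith) hyz'
  have hy_le : C * N * Real.log y + (y * Real.log y) ^ 2 ≤
      C * N * Real.log z + (z * Real.log z) ^ 2 := by gcongr
  simp only [barbanVehovSum_eq_truncatedVonMangoldt, div_pow, ← sum_div]
  gcongr
  calc ∑ n ∈ Ioc 0 N, (truncatedVonMangoldt z n - truncatedVonMangoldt y n) ^ 2
      ≤ ∑ n ∈ Ioc 0 N, 2 * (truncatedVonMangoldt z n ^ 2 + truncatedVonMangoldt y n ^ 2) :=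
        sum_le_sum fun n _ => by
          nlinarith [sq_nonneg (truncatedVonMangoldt z n + truncatedVonMangoldt y n)]
    _ ≤ 4 * C * N * Real.log z + 4 * (z * Real.log z) ^ 2 := by
        rw [← mul_sum, sum_add_distrib]
        linarith [hsq z (hy.trans hyz) N, hsq y hy N]

lemma exists_sum_barbanVehovSum_pow_sq_le : ∃ C : ℝ, 0 < C ∧ ∀ M : ℕ, 2 ≤ M → ∀ N : ℕ,
    ∑ n ∈ Ioc 0 N, barbanVehovSum (M ^ 30) (M ^ 35) n ^ 2 ≤
      C * (N / Real.log M + (M : ℝ) ^ 70) := by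
  obtain ⟨C, hC, hsq⟩ := exists_sum_barbanVehovSum_sq_le
  refine ⟨7 / 5 * C + 196, by positivity, fun M hM N => ?_⟩
  have hM' : (M : ℝ) ≠ 0 := by positivity
  have hlog : 0 < Real.log M := Real.log_pos (mod_cast hM)
  have hratio : Real.log (((M ^ 35 : ℕ) : ℝ) / (M ^ 30 : ℕ)) = 5 * Real.log M := by
    rw [Nat.cast_pow, Nat.cast_pow, div_eq_mul_inv, ← pow_sub₀ _ hM' (by norm_num), Real.log_pow]
    norm_num
  refine (hsq (M ^ 30) (M ^ 35) (hM.trans (Nat.le_self_pow (by norm_num) M))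
    (Nat.pow_le_pow_right (by omega) (by norm_num)) N).trans ?_
  rw [hratio, Nat.cast_pow, Real.log_pow]
  calc _ = 7 / 5 * C * (N / Real.log M) + 196 * (M : ℝ) ^ 70 := by
        field_simp
        push_cast
        ring
    _ ≤ (7 / 5 * C + 196) * (N / Real.log M + (M : ℝ) ^ 70) := by
        have : 0 ≤ N / Real.log M := by positivity
        have : (0 : ℝ) ≤ (M : ℝ) ^ 70 := by positivity
        nlinarith

lemma exists_eventually_sum_barbanVehovSum_pow_sq_div_le : ∃ C : ℝ, ∀ᶠ M : ℕ in atTop,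
    ∑ k ∈ Ioc 0 (M ^ 100), barbanVehovSum (M ^ 30) (M ^ 35) k ^ 2 / k ≤ C := by
  obtain ⟨C, hC, hsq⟩ := exists_sum_barbanVehovSum_pow_sq_le
  refine ⟨2400 * C, ?_⟩
  filter_upwards [(tendsto_pow_atTop (by norm_num : (100 : ℕ) ≠ 0)).eventually
    eventually_sum_div_le_of_mul_prime_eq, eventually_ge_atTop 2] with M haverage hM
  have hM' : (1 : ℝ) < M := mod_cast hM
  have hlog : 0 < Real.log M := Real.log_pos hM'
  have h := haverage (fun k => barbanVehovSum (M ^ 30) (M ^ 35) k ^ 2) (fun _ => sq_nonneg _)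
    fun k p hp hMp => by
      rw [barbanVehovSum_mul_prime (Nat.pow_le_pow_right (by omega) (by norm_num)) k hp
        ((Nat.pow_le_pow_right (by omega) (by norm_num)).trans_lt hMp)]
  have hpow : (M : ℝ) ^ 70 * Real.log M ≤ (M : ℝ) ^ 300 :=
    calc (M : ℝ) ^ 70 * Real.log M ≤ (M : ℝ) ^ 70 * M := by
          gcongr
          exact Real.log_le_self (by linarith)
      _ = (M : ℝ) ^ 71 := by ring
      _ ≤ (M : ℝ) ^ 300 := pow_le_pow_right₀ hM'.le (by norm_num)
  have hmain := hsq M hM ((M ^ 100) ^ 3)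
  refine le_of_mul_le_mul_left ?_ (by positivity : (0 : ℝ) < (M : ℝ) ^ 300)
  push_cast [← pow_mul] at h hmain
  rw [Real.log_pow] at h
  calc _ ≤ _ := h
    _ ≤ 12 * (100 * Real.log M) * (C * ((M : ℝ) ^ 300 / Real.log M + (M : ℝ) ^ 70)) := by
        push_cast
        gcongr
    _ = 1200 * C * ((M : ℝ) ^ 300 + (M : ℝ) ^ 70 * Real.log M) := by
        field_simp
        norm_num
    _ ≤ (M : ℝ) ^ 300 * (2400 * C) := by nlinarith

end BarbanVehov

open scoped ArithmeticFunction.Moebius ArithmeticFunction.vonMangoldt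

section PrimeMajorant

/-- Selberg's majorant of the indicator of the primes above `M`, increased by `1 / M ^ 5` to make it
positive, as the large sieve requires of its weights. -/
noncomputable def primeMajorant (M n : ℕ) : ℝ :=
  (truncatedVonMangoldt M n / Real.log M) ^ 2 + 1 / (M : ℝ) ^ 5

/-- The von Mangoldt function restricted to the integers above `z`. -/
noncomputable def largeVonMangoldt (z n : ℕ) : ℝ := if z < n then Λ n else 0

lemma largeVonMangoldt_nonneg (z n : ℕ) : 0 ≤ largeVonMangoldt z n := by
  rw [largeVonMangoldt]
  split_ifs
  exacts [ArithmeticFunction.vonMangoldt_nonneg, le_rfl]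

variable {M : ℕ}

lemma inv_pow_le_primeMajorant (M n : ℕ) : 1 / (M : ℝ) ^ 5 ≤ primeMajorant M n :=
  le_add_of_nonneg_left (sq_nonneg _)

lemma primeMajorant_pos (hM : 0 < M) (n : ℕ) : 0 < primeMajorant M n :=
  lt_of_lt_of_le (by positivity) (inv_pow_le_primeMajorant M n)

lemma one_le_primeMajorant_of_prime (hM : 2 ≤ M) {p : ℕ} (hp : p.Prime) (hMp : M < p) :
    1 ≤ primeMajorant M p := by
  have hlog : 0 < Real.log M := Real.log_pos (mod_cast hM)
  have hp' : truncatedVonMangoldt M p = Real.log M := by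
    rw [truncatedVonMangoldt, hp.sum_divisors, posLog_natCast_div_eq_zero hMp.le,
      posLog_natCast_div_eq_log one_pos (by omega)]
    simp
  rw [primeMajorant, hp', div_self hlog.ne']
  exact (one_pow (M := ℝ) 2).ge.trans (le_add_of_nonneg_right (by positivity))

lemma abs_moebius_mul_posLog_div_log_le_one (hM : 2 ≤ M) (d : ℕ) :
    |(μ d : ℝ) * Real.posLog ((M : ℝ) / d) / Real.log M| ≤ 1 := by
  have hlog : 0 < Real.log M := Real.log_pos (mod_cast hM)
  rw [abs_div, abs_of_pos hlog, div_le_one hlog, abs_mul, abs_of_nonneg Real.posLog_nonneg]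
  exact (mul_le_of_le_one_left Real.posLog_nonneg (abs_moebius_cast_le_one d)).trans
    (posLog_natCast_div_le_log M d)

lemma primeMajorant_eq_sum_lcm {n : ℕ} (hn : 0 < n) :
    primeMajorant M n =
      ∑ p ∈ Ioc 0 M ×ˢ Ioc 0 M,
        (μ p.1 * Real.posLog ((M : ℝ) / p.1) / Real.log M) *
          (μ p.2 * Real.posLog ((M : ℝ) / p.2) / Real.log M) *
          (if p.1.lcm p.2 ∣ n then 1 else 0) + 1 / (M : ℝ) ^ 5 := by
  have hvanish (d : ℕ) (hd : M < d) : (μ d : ℝ) * Real.posLog ((M : ℝ) / d) / Real.log M = 0 := by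
    rw [posLog_natCast_div_eq_zero hd.le, mul_zero, zero_div]
  rw [primeMajorant, truncatedVonMangoldt, sum_div,
    sum_divisors_eq_sum_Ioc_ite_dvd hvanish hn, sq, sum_mul_sum, sum_product]
  congr 1
  refine sum_congr rfl fun d _ => sum_congr rfl fun e _ => ?_
  by_cases hd : d ∣ n <;> by_cases he : e ∣ n <;> simp [Nat.lcm_dvd_iff, hd, he]

lemma discrepancyLE_primeMajorant (hM : 2 ≤ M) (a b : ℕ) :
    DiscrepancyLE (Ioc a b) (primeMajorant M) (4 * (M : ℝ) ^ 2) := by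
  have hmult {h : ℕ} (hh : 0 < h) :
      DiscrepancyLE (Ioc a b) (fun n => if h ∣ n then 1 else 0) 2 := by
    rw [← Ico_add_one_add_one_eq_Ioc]
    exact discrepancyLE_multiples_Ico _ _ hh
  have hM1 : (1 : ℝ) ≤ M := mod_cast (by omega : 1 ≤ M)
  have hsum := DiscrepancyLE.sum (s := Ioc a b) (T := Ioc 0 M ×ˢ Ioc 0 M)
    (F := fun p n => if p.1.lcm p.2 ∣ n then 1 else 0) (κ := fun _ => 2)
    (fun p => (μ p.1 * Real.posLog ((M : ℝ) / p.1) / Real.log M) *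
      (μ p.2 * Real.posLog ((M : ℝ) / p.2) / Real.log M))
    fun p hp => hmult <| by
      rw [mem_product, mem_Ioc, mem_Ioc] at hp
      exact Nat.lcm_pos hp.1.1 hp.2.1
  have hconst := DiscrepancyLE.sum (s := Ioc a b) (T := {()})
    (F := fun _ n => if 1 ∣ n then 1 else 0) (κ := fun _ => 2) (fun _ => 1 / (M : ℝ) ^ 5)
    fun _ _ => hmult one_pos
  refine ((hsum.add hconst).congr fun n hn => ?_).mono ?_
  · rw [primeMajorant_eq_sum_lcm (by grind)]
    simp
  · have hinv : 1 / (M : ℝ) ^ 5 ≤ 1 := div_le_one_of_le₀ (one_le_pow₀ hM1) (by positivity)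
    have hcoeff : ∑ p ∈ Ioc 0 M ×ˢ Ioc 0 M, |(μ p.1 * Real.posLog ((M : ℝ) / p.1) / Real.log M) *
        (μ p.2 * Real.posLog ((M : ℝ) / p.2) / Real.log M)| * 2 ≤
          ∑ p ∈ Ioc 0 M ×ˢ Ioc 0 M, 2 := by
      refine sum_le_sum fun p _ => mul_le_of_le_one_left zero_le_two ?_
      rw [abs_mul]
      exact mul_le_one₀ (abs_moebius_mul_posLog_div_log_le_one hM _) (abs_nonneg _)
        (abs_moebius_mul_posLog_div_log_le_one hM _)
    refine (add_le_add_left hcoeff _).trans ?_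
    rw [sum_singleton, abs_of_nonneg (by positivity), sum_const, card_product, Nat.card_Ioc]
    simp only [tsub_zero, nsmul_eq_mul, Nat.cast_mul]
    nlinarith

lemma exists_sum_primeMajorant_le : ∃ C : ℝ, 0 < C ∧ ∀ M : ℕ, 2 ≤ M → ∀ N : ℕ, M ^ 3 ≤ N →
    ∑ n ∈ Ioc 0 N, primeMajorant M n ≤ C * (N / Real.log M) := by
  obtain ⟨C, hC, hsq⟩ := exists_sum_truncatedVonMangoldt_sq_le
  refine ⟨C + 2, by positivity, fun M hM N hN => ?_⟩
  have hlog : 0 < Real.log M := Real.log_pos (mod_cast hM)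
  have hM0 : (1 : ℝ) ≤ M := mod_cast (by omega : 1 ≤ M)
  have hlogM : Real.log M ≤ M := Real.log_le_self (by positivity)
  have hN' : (M : ℝ) ^ 3 ≤ N := mod_cast hN
  have hsquare : (M : ℝ) ^ 2 ≤ N / Real.log M := by
    rw [le_div_iff₀ hlog]
    nlinarith [mul_le_mul_of_nonneg_left hlogM (sq_nonneg (M : ℝ))]
  have hconst : (N : ℝ) * (1 / (M : ℝ) ^ 5) ≤ N / Real.log M := by
    rw [mul_one_div]
    gcongr
    exact hlogM.trans (le_self_pow₀ hM0 (by norm_num))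
  calc ∑ n ∈ Ioc 0 N, primeMajorant M n
      = (∑ n ∈ Ioc 0 N, truncatedVonMangoldt M n ^ 2) / Real.log M ^ 2 +
          N * (1 / (M : ℝ) ^ 5) := by
        simp only [primeMajorant, div_pow, sum_add_distrib, sum_const, Nat.card_Ioc, tsub_zero,
          nsmul_eq_mul]
        rw [sum_div]
    _ ≤ (C * N * Real.log M + (M * Real.log M) ^ 2) / Real.log M ^ 2 + N / Real.log M := by
        gcongr
        exact hsq M hM N
    _ = (C + 1) * (N / Real.log M) + (M : ℝ) ^ 2 := by
        field_simp
        ring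
    _ ≤ (C + 2) * (N / Real.log M) := by linarith

lemma largeVonMangoldt_sq_div_primeMajorant_le (hM : 2 ≤ M) {z n : ℕ} (hz : M ≤ z) :
    largeVonMangoldt z n ^ 2 / primeMajorant M n ≤
      Real.log n * (Λ n + (M : ℝ) ^ 5 * if n.Prime then 0 else Λ n) := by
  have hΛ := ArithmeticFunction.vonMangoldt_nonneg (n := n)
  have hlog := Real.log_natCast_nonneg n
  have hW := primeMajorant_pos (M := M) (by omega) n
  have hΛsq : Λ n ^ 2 ≤ Real.log n * Λ n := by
    rw [sq]
    exact mul_le_mul_of_nonneg_right ArithmeticFunction.vonMangoldt_le_log hΛ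
  rw [largeVonMangoldt]
  split_ifs with hn hp
  · have h1 := one_le_primeMajorant_of_prime hM hp (hz.trans_lt hn)
    rw [mul_zero, add_zero]
    exact (div_le_self (sq_nonneg _) h1).trans hΛsq
  · have hM5 : 1 ≤ (M : ℝ) ^ 5 * primeMajorant M n := by
      have hM5 : (0 : ℝ) < (M : ℝ) ^ 5 := by positivity
      simpa [hM5.ne'] using mul_le_mul_of_nonneg_left (inv_pow_le_primeMajorant M n) hM5.le
    rw [div_le_iff₀ hW]
    nlinarith [mul_nonneg (mul_nonneg hlog hΛ) hW.le]
  all_goals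
    rw [zero_pow two_ne_zero, zero_div]
    positivity

lemma sum_vonMangoldt_ite_prime (N : ℕ) :
    ∑ n ∈ Ioc 0 N, (if n.Prime then 0 else Λ n) = Chebyshev.psi N - Chebyshev.theta N := by
  simp only [Chebyshev.psi_sub_theta_eq_sum_not_prime, Nat.floor_natCast, sum_filter, ite_not]

lemma exists_sum_largeVonMangoldt_sq_div_primeMajorant_le :
    ∃ C : ℝ, 0 < C ∧ ∀ M z N : ℕ, 2 ≤ M → M ≤ z → M ^ 10 ≤ N →
      ∑ n ∈ Ioc 0 N, largeVonMangoldt z n ^ 2 / primeMajorant M n ≤ C * (N * Real.log N) := by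
  obtain ⟨C, hpsi⟩ := Chebyshev.psi_sub_theta_le_mul_sqrt
  have hC : 0 ≤ C := by simpa using hpsi 1
  refine ⟨Real.log 4 + 4 + C, by positivity, fun M z N hM hz hN => ?_⟩
  have := Real.log_natCast_nonneg N
  have hsqrt : (M : ℝ) ^ 5 ≤ √N :=
    Real.le_sqrt_of_sq_le (by exact_mod_cast (pow_mul M 5 2).symm.trans_le hN)
  calc ∑ n ∈ Ioc 0 N, largeVonMangoldt z n ^ 2 / primeMajorant M n
      ≤ ∑ n ∈ Ioc 0 N, Real.log N * (Λ n + (M : ℝ) ^ 5 * if n.Prime then 0 else Λ n) := by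
        refine sum_le_sum fun n hn =>
          (largeVonMangoldt_sq_div_primeMajorant_le hM hz).trans ?_
        rw [mem_Ioc] at hn
        have := ArithmeticFunction.vonMangoldt_nonneg (n := n)
        gcongr ?_ * _
        exact Real.log_le_log (mod_cast hn.1) (mod_cast hn.2)
    _ = Real.log N * (Chebyshev.psi N +
          (M : ℝ) ^ 5 * (Chebyshev.psi N - Chebyshev.theta N)) := by
        rw [← mul_sum, sum_add_distrib, ← mul_sum, sum_vonMangoldt_ite_prime, Chebyshev.psi,
          Nat.floor_natCast]
    _ ≤ Real.log N * ((Real.log 4 + 4) * N + √N * (C * √N)) := by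
        gcongr
        · exact Chebyshev.psi_le_const_mul_self (Nat.cast_nonneg N)
        · exact sub_nonneg.2 (Chebyshev.theta_le_psi _)
        · exact hpsi N
    _ = (Real.log 4 + 4 + C) * (N * Real.log N) := by
        linear_combination Real.log N * C * Real.mul_self_sqrt (Nat.cast_nonneg N)

end PrimeMajorant

section CoprimeFamily

/-- A family of at most `M` pairwise coprime moduli, each at most `M ^ 12`. -/
structure IsCoprimeFamily {ι : Type*} [Fintype ι] (M : ℕ) (D : ι → ℕ) : Prop where
  pairwise_coprime : Pairwise fun i j => (D i).Coprime (D j)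
  le_pow : ∀ i, D i ≤ M ^ 12
  card_le : Fintype.card ι ≤ M

variable {ι : Type*} [Fintype ι] {M : ℕ} {D : ι → ℕ} [∀ i, NeZero (D i)]

lemma IsCoprimeFamily.sum_totient_mul_residueVariance_le (hD : IsCoprimeFamily M D)
    {s : Finset ℕ} {W : ℕ → ℝ} (hW : ∀ n ∈ s, 0 < W n) {K : ℝ} (hK0 : 0 ≤ K)
    (hK : DiscrepancyLE s W K) (f : ℕ → ℝ) :
    ∑ i, ((D i).totient : ℝ) * residueVariance (D i) s f ≤
      (4 * ∑ n ∈ s, W n + 2 * K * (M : ℝ) ^ 25) * ∑ n ∈ s, f n ^ 2 / W n := by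
  refine (large_sieve_coprime_moduli hD.pairwise_coprime
    (fun i => by exact_mod_cast hD.le_pow i : ∀ i, (D i : ℝ) ≤ (M : ℝ) ^ 12) hW hK0 hK f).trans ?_
  have hcard : (Fintype.card ι : ℝ) ≤ M := mod_cast hD.card_le
  have henergy : 0 ≤ ∑ n ∈ s, f n ^ 2 / W n :=
    sum_nonneg fun n hn => div_nonneg (sq_nonneg _) (hW n hn).le
  calc _ ≤ (4 * ∑ n ∈ s, W n + 2 * K * ((M : ℝ) ^ 12) ^ 2 * M) * ∑ n ∈ s, f n ^ 2 / W n := by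
        gcongr
    _ = _ := by ring

lemma IsCoprimeFamily.sum_totient_mul_residueVariance_Ico_le (hD : IsCoprimeFamily M D) {x : ℝ}
    (hM : 2 ≤ M) (hx : (M : ℝ) ^ 30 / 16 ≤ x) (f : ℕ → ℝ) :
    ∑ i, ((D i).totient : ℝ) * residueVariance (D i) (Ico ⌈x⌉₊ ⌈16 * x⌉₊) f ≤
      200 * x * ∑ n ∈ Ico ⌈x⌉₊ ⌈16 * x⌉₊, f n ^ 2 := by
  have hM2 : (2 : ℝ) ≤ M := mod_cast hM
  have hMx : 2 * (M : ℝ) ^ 25 ≤ x := by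
    refine le_trans ?_ hx
    rw [show (M : ℝ) ^ 30 = M ^ 5 * M ^ 25 by ring]
    have : (2 : ℝ) ^ 5 ≤ (M : ℝ) ^ 5 := by gcongr
    nlinarith [pow_nonneg (zero_le_two.trans hM2) 25]
  have hx1 : 1 ≤ x := by linarith [one_le_pow₀ (one_le_two.trans hM2) (n := 25)]
  have hsieve := hD.sum_totient_mul_residueVariance_le (s := Ico ⌈x⌉₊ ⌈16 * x⌉₊)
    (fun _ _ => one_pos) zero_le_two
    ((discrepancyLE_multiples_Ico ⌈x⌉₊ ⌈16 * x⌉₊ one_pos).congr (g := fun _ => 1)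
      fun n _ => if_pos (one_dvd n)) f
  simp only [div_one, sum_const, Nat.card_Ico, nsmul_eq_mul, mul_one] at hsieve
  refine hsieve.trans ?_
  have hcard : ((⌈16 * x⌉₊ - ⌈x⌉₊ : ℕ) : ℝ) ≤ 16 * x + 1 :=
    (Nat.cast_le.2 (Nat.sub_le _ _)).trans (Nat.ceil_lt_add_one (by linarith)).le
  gcongr
  linarith

lemma log_floor_mul_le (hM : 2 ≤ M) {y : ℝ} (hy : 1 ≤ y) (hyM : y ≤ (M : ℝ) ^ 100) :
    Real.log ⌊16 * y⌋₊ ≤ 104 * Real.log M := by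
  have hM2 : (2 : ℝ) ≤ M := mod_cast hM
  have hfloor : (0 : ℝ) < ⌊16 * y⌋₊ := mod_cast Nat.floor_pos.2 (by linarith)
  rw [show (104 : ℝ) = (104 : ℕ) by norm_num, ← Real.log_pow]
  refine Real.log_le_log hfloor ((Nat.floor_le (by positivity)).trans ?_)
  calc 16 * y ≤ 2 ^ 4 * (M : ℝ) ^ 100 := by linarith
    _ ≤ (M : ℝ) ^ 4 * (M : ℝ) ^ 100 := by gcongr
    _ = (M : ℝ) ^ 104 := by ring

lemma mul_pow_le_div_log (hM : 2 ≤ M) {y : ℝ} (hy : (M : ℝ) ^ 35 / 16 ≤ y) :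
    8 * (M : ℝ) ^ 27 ≤ y / Real.log M := by
  have hM2 : (2 : ℝ) ≤ M := mod_cast hM
  have hlogM : Real.log M ≤ M := Real.log_le_self (by positivity)
  rw [le_div_iff₀ (Real.log_pos (mod_cast hM))]
  calc 8 * (M : ℝ) ^ 27 * Real.log M ≤ 2 ^ 7 * (M : ℝ) ^ 27 * M / 16 := by
        nlinarith [pow_pos (zero_lt_two.trans_le hM2) 27]
    _ ≤ (M : ℝ) ^ 7 * (M : ℝ) ^ 27 * M / 16 := by gcongr
    _ = (M : ℝ) ^ 35 / 16 := by ring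
    _ ≤ y := hy

lemma IsCoprimeFamily.exists_sum_totient_mul_residueVariance_largeVonMangoldt_le :
    ∃ C : ℝ, 0 < C ∧ ∀ {ι : Type*} [Fintype ι] {M : ℕ} {D : ι → ℕ} [∀ i, NeZero (D i)],
      IsCoprimeFamily M D → 2 ≤ M → ∀ y : ℝ, (M : ℝ) ^ 35 / 16 ≤ y → y ≤ (M : ℝ) ^ 100 →
        ∑ i, ((D i).totient : ℝ) *
            residueVariance (D i) (Ioc ⌊y⌋₊ ⌊16 * y⌋₊) (largeVonMangoldt (M ^ 35)) ≤
          C * y ^ 2 := by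
  obtain ⟨A, hA, hmass⟩ := exists_sum_primeMajorant_le
  obtain ⟨B, hB, henergy⟩ := exists_sum_largeVonMangoldt_sq_div_primeMajorant_le
  refine ⟨(64 * A + 1) * (16 * B * 104), by positivity,
    fun {ι} _ {M} {D} _ hD hM y hy hyM => ?_⟩
  have hlog : 0 < Real.log M := Real.log_pos (mod_cast hM)
  have hMN : M ^ 35 ≤ ⌊16 * y⌋₊ := Nat.le_floor (by push_cast; linarith)
  have hy1 : 1 ≤ y := by
    have : (2 : ℝ) ^ 35 ≤ (M : ℝ) ^ 35 := by gcongr; exact_mod_cast hM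
    linarith
  have hfloor : (⌊16 * y⌋₊ : ℝ) ≤ 16 * y := Nat.floor_le (by positivity)
  have hpow {a : ℕ} (ha : a ≤ 35) : M ^ a ≤ ⌊16 * y⌋₊ :=
    (Nat.pow_le_pow_right (by omega) ha).trans hMN
  have hW := primeMajorant_pos (M := M) (by omega)
  have hsub : Ioc ⌊y⌋₊ ⌊16 * y⌋₊ ⊆ Ioc 0 ⌊16 * y⌋₊ := Ioc_subset_Ioc_left (Nat.zero_le _)
  have hmass' : ∑ n ∈ Ioc ⌊y⌋₊ ⌊16 * y⌋₊, primeMajorant M n ≤ A * (16 * y / Real.log M) :=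
    (sum_le_sum_of_subset_of_nonneg hsub fun n _ _ => (hW n).le).trans <|
      (hmass M hM _ (hpow (by norm_num))).trans (by gcongr)
  have henergy' : ∑ n ∈ Ioc ⌊y⌋₊ ⌊16 * y⌋₊, largeVonMangoldt (M ^ 35) n ^ 2 / primeMajorant M n ≤
      B * (16 * y * (104 * Real.log M)) :=
    (sum_le_sum_of_subset_of_nonneg hsub fun n _ _ => div_nonneg (sq_nonneg _) (hW n).le).trans <|
      (henergy M (M ^ 35) _ hM (Nat.le_self_pow (by norm_num) M) (hpow (by norm_num))).trans <| by
        gcongr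
        exact log_floor_mul_le hM hy1 hyM
  refine (hD.sum_totient_mul_residueVariance_le (fun n _ => hW n) (by positivity)
    (discrepancyLE_primeMajorant hM _ _) _).trans ?_
  calc _ ≤ (4 * (A * (16 * y / Real.log M)) + y / Real.log M) *
          (B * (16 * y * (104 * Real.log M))) := by
        gcongr
        · exact sum_nonneg fun n _ => div_nonneg (sq_nonneg _) (hW n).le
        · linarith [mul_pow_le_div_log hM hy]
    _ = _ := by
        field_simp
        ring

end CoprimeFamily

section Pairing

variable {D : ℕ} [NeZero D]

lemma centeredInd_of_natCast_eq (a u : (ZMod D)ˣ) {n : ℕ} (hn : (n : ZMod D) = u) :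
    centeredInd a n = (if a = u then 1 else 0) - (D.totient : ℝ)⁻¹ := by
  have hcop : n.Coprime D := (ZMod.isUnit_iff_coprime n D).1 (hn ▸ u.isUnit)
  rw [centeredInd, expect_residueInd, if_pos hcop, residueInd, hn]
  simp only [Units.val_inj, eq_comm]

lemma sum_centeredInd_mul_centeredInd_inv (m n : ℕ) :
    ∑ a : (ZMod D)ˣ, centeredInd a m * centeredInd a⁻¹ n = centeredInd (1 : (ZMod D)ˣ) (m * n) := by
  by_cases hm : m.Coprime D
  swap
  · have hmn : ¬(m * n).Coprime D := fun h => hm h.coprime_mul_right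
    simp [centeredInd_eq_zero_of_not_coprime, hm, hmn]
  by_cases hn : n.Coprime D
  swap
  · have hmn : ¬(m * n).Coprime D := fun h => hn h.coprime_mul_left
    simp [centeredInd_eq_zero_of_not_coprime, hn, hmn]
  obtain ⟨u, hu⟩ := (ZMod.isUnit_iff_coprime m D).2 hm
  obtain ⟨w, hw⟩ := (ZMod.isUnit_iff_coprime n D).2 hn
  have hφ : (D.totient : ℝ) ≠ 0 := mod_cast (Nat.totient_pos.2 (NeZero.pos D)).ne'
  have huw : ((m * n : ℕ) : ZMod D) = (u * w : (ZMod D)ˣ) := by simp [hu, hw]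
  have hone : 1 = u * w ↔ u = w⁻¹ := by rw [eq_comm, mul_eq_one_iff_eq_inv]
  simp only [centeredInd_of_natCast_eq _ _ hu.symm, centeredInd_of_natCast_eq _ _ hw.symm,
    centeredInd_of_natCast_eq _ _ huw, hone, inv_eq_iff_eq_inv, sub_mul, mul_sub, sum_sub_distrib,
    ← mul_sum, sum_ite_eq', mem_univ, if_true, ite_mul, one_mul, zero_mul, sum_const,
    card_univ, ZMod.card_units_eq_totient, nsmul_eq_mul, mul_inv_cancel₀ hφ]
  ring

lemma residueVariance_nonneg (s : Finset ℕ) (f : ℕ → ℝ) : 0 ≤ residueVariance D s f :=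
  sum_nonneg fun _ _ => sq_nonneg _

lemma sq_sum_sum_mul_centeredInd_le (s t : Finset ℕ) (f g : ℕ → ℝ) :
    (∑ m ∈ s, ∑ n ∈ t, f m * g n * centeredInd (1 : (ZMod D)ˣ) (m * n)) ^ 2 ≤
      residueVariance D s f * residueVariance D t g := by
  have hpair : ∑ m ∈ s, ∑ n ∈ t, f m * g n * centeredInd (1 : (ZMod D)ˣ) (m * n) =
      ∑ a : (ZMod D)ˣ, (∑ m ∈ s, f m * centeredInd a m) * ∑ n ∈ t, g n * centeredInd a⁻¹ n := by
    simp_rw [← sum_centeredInd_mul_centeredInd_inv, sum_mul_sum, mul_sum]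
    refine (sum_congr rfl fun m _ => sum_comm).trans (sum_comm.trans ?_)
    exact sum_congr rfl fun a _ => sum_congr rfl fun m _ => sum_congr rfl fun n _ => by ring
  have hinv : ∑ a : (ZMod D)ˣ, (∑ n ∈ t, g n * centeredInd a⁻¹ n) ^ 2 = residueVariance D t g :=
    Equiv.sum_comp (Equiv.inv (ZMod D)ˣ) fun a => (∑ n ∈ t, g n * centeredInd a n) ^ 2
  rw [hpair, ← hinv]
  exact sum_mul_sq_le_sq_mul_sq _ _ _

lemma abs_sum_sum_mul_centeredInd_le (s t : Finset ℕ) (f g : ℕ → ℝ) {ε : ℝ} (hε : 0 < ε) :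
    |∑ m ∈ s, ∑ n ∈ t, f m * g n * centeredInd (1 : (ZMod D)ˣ) (m * n)| ≤
      (ε⁻¹ * residueVariance D s f + ε * residueVariance D t g) / 2 := by
  have hf := residueVariance_nonneg (D := D) s f
  have hg := residueVariance_nonneg (D := D) t g
  refine abs_le_of_sq_le_sq ((sq_sum_sum_mul_centeredInd_le s t f g).trans ?_) (by positivity)
  have hprod : ε⁻¹ * residueVariance D s f * (ε * residueVariance D t g) =
      residueVariance D s f * residueVariance D t g := by
    field_simp
  nlinarith [sq_nonneg (ε⁻¹ * residueVariance D s f - ε * residueVariance D t g)]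

end Pairing

section LogWindow

open MeasureTheory

/-- The indicator function of the interval of length `log 16` starting at `a`. -/
noncomputable def logWindow (a : ℝ) : ℝ → ℝ := (Set.Ico a (a + Real.log 16)).indicator 1

/-- A tent in the logarithmic variable, supported on `(y / 16, 16 * y)`. It is a convolution of two
windows, which lets one separate the variables `k` and `j` in `logTent y (k * j)`. As `log 0 = 0`,
it vanishes at `n = 0`. -/
noncomputable def logTent (y : ℝ) (n : ℕ) : ℝ :=
  max 0 (min (Real.log (16 * n / y)) (Real.log (16 * y / n)))

lemma logTent_eq_max_sub_abs {y : ℝ} {n : ℕ} (hy : 0 < y) (hn : 0 < n) :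
    logTent y n = max 0 (Real.log 16 - |Real.log n - Real.log y|) := by
  have hn' : (n : ℝ) ≠ 0 := mod_cast hn.ne'
  rw [logTent, ← max_sub_min_eq_abs', sub_sub_eq_add_sub, Real.log_div (by positivity) hy.ne',
    Real.log_div (by positivity) hn', Real.log_mul (by norm_num) hn',
    Real.log_mul (by norm_num) hy.ne']
  rcases le_total (Real.log n) (Real.log y) with h | h
  · rw [min_eq_left (by linarith), min_eq_left h, max_eq_right h]
  · rw [min_eq_right (by linarith), min_eq_right h, max_eq_left h]

lemma logWindow_nonneg (a v : ℝ) : 0 ≤ logWindow a v :=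
  Set.indicator_nonneg (fun _ _ => zero_le_one) v

lemma integrable_indicator_Ico_one (a b : ℝ) : Integrable ((Set.Ico a b).indicator (1 : ℝ → ℝ)) :=
  (integrable_indicator_iff measurableSet_Ico).2 (integrableOn_const (by simp))

lemma integral_indicator_Ico_one (a b : ℝ) :
    ∫ v, (Set.Ico a b).indicator (1 : ℝ → ℝ) v = max 0 (b - a) := by
  rw [integral_indicator_one measurableSet_Ico, measureReal_def, Real.volume_Ico,
    ENNReal.toReal_ofReal', max_comm]

lemma integral_logWindow (a : ℝ) : ∫ v, logWindow a v = Real.log 16 := by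
  rw [logWindow, integral_indicator_Ico_one, add_sub_cancel_left, max_eq_right (by positivity)]

lemma logWindow_mul_logWindow (a b : ℝ) :
    (fun v => logWindow a v * logWindow b v) =
      (Set.Ico (max a b) (min a b + Real.log 16)).indicator 1 := by
  rw [← min_add_add_right, ← Set.Ico_inter_Ico, Set.inter_indicator_one]
  rfl

lemma integrable_logWindow_mul_logWindow (a b : ℝ) :
    Integrable fun v => logWindow a v * logWindow b v := by
  rw [logWindow_mul_logWindow]
  exact integrable_indicator_Ico_one _ _

lemma integral_logWindow_mul_logWindow (a b : ℝ) :
    ∫ v, logWindow a v * logWindow b v = max 0 (Real.log 16 - |a - b|) := by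
  rw [logWindow_mul_logWindow, integral_indicator_Ico_one, ← max_sub_min_eq_abs']
  ring_nf

lemma integral_logWindow_log_mul_logWindow_log {x : ℝ} (hx : 0 < x) {k j : ℕ} (hk : 0 < k)
    (hj : 0 < j) :
    ∫ v, logWindow (Real.log x - Real.log k) v * logWindow (Real.log j - Real.log 16) v =
      logTent (16 * x) (k * j) := by
  have hk' : (k : ℝ) ≠ 0 := mod_cast hk.ne'
  have hj' : (j : ℝ) ≠ 0 := mod_cast hj.ne'
  rw [integral_logWindow_mul_logWindow, logTent_eq_max_sub_abs (by positivity) (Nat.mul_pos hk hj),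
    Nat.cast_mul, Real.log_mul hk' hj', Real.log_mul (by norm_num) hx.ne', abs_sub_comm]
  ring_nf

lemma logWindow_log_sub_log (v : ℝ) {j : ℕ} (hj : 0 < j) :
    logWindow (Real.log j - Real.log 16) v =
      if j ∈ Ioc ⌊Real.exp v⌋₊ ⌊16 * Real.exp v⌋₊ then 1 else 0 := by
  have hj' : (0 : ℝ) < j := mod_cast hj
  have hlower : v < Real.log j ↔ ⌊Real.exp v⌋₊ < j := by
    rw [Real.lt_log_iff_exp_lt hj', Nat.floor_lt (Real.exp_pos v).le]
  have hupper : Real.log j - Real.log 16 ≤ v ↔ j ≤ ⌊16 * Real.exp v⌋₊ := by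
    rw [Nat.le_floor_iff (by positivity), ← Real.log_div hj'.ne' (by norm_num),
      Real.log_le_iff_le_exp (by positivity), div_le_iff₀ (by norm_num), mul_comm]
  rw [logWindow, Set.indicator_apply]
  simp only [sub_add_cancel, mem_Ioc, ← hlower, ← hupper, Set.mem_Ico, Pi.one_apply, and_comm]

lemma logWindow_log_sub_log_natCast {x : ℝ} (hx : 0 < x) (v : ℝ) {k : ℕ} (hk : 0 < k) :
    logWindow (Real.log x - Real.log k) v =
      if k ∈ Ico ⌈x / Real.exp v⌉₊ ⌈16 * (x / Real.exp v)⌉₊ then 1 else 0 := by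
  have hk' : (0 : ℝ) < k := mod_cast hk
  have he := Real.exp_pos v
  have hlower : Real.log x - Real.log k ≤ v ↔ ⌈x / Real.exp v⌉₊ ≤ k := by
    rw [Nat.ceil_le, ← Real.log_div hx.ne' hk'.ne', Real.log_le_iff_le_exp (by positivity),
      div_le_iff₀ hk', div_le_iff₀ he, mul_comm]
  have hupper : v < Real.log x - Real.log k + Real.log 16 ↔ k < ⌈16 * (x / Real.exp v)⌉₊ := by
    rw [Nat.lt_ceil, sub_add_eq_add_sub, ← Real.log_mul hx.ne' (by norm_num),
      ← Real.log_div (by positivity) hk'.ne', Real.lt_log_iff_exp_lt (by positivity),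
      lt_div_iff₀ hk', ← mul_div_assoc, lt_div_iff₀ he, mul_comm, mul_comm x]
  rw [logWindow, Set.indicator_apply]
  simp only [mem_Ico, ← hlower, ← hupper, Set.mem_Ico, Pi.one_apply]

variable {N : ℕ} {v : ℝ}

lemma sum_Ioc_mul_logWindow_log_sub_log (hN : 16 * Real.exp v ≤ N) (f : ℕ → ℝ) :
    ∑ j ∈ Ioc 0 N, f j * logWindow (Real.log j - Real.log 16) v =
      ∑ j ∈ Ioc ⌊Real.exp v⌋₊ ⌊16 * Real.exp v⌋₊, f j := by
  have hsub : Ioc ⌊Real.exp v⌋₊ ⌊16 * Real.exp v⌋₊ ⊆ Ioc 0 N :=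
    Ioc_subset_Ioc (Nat.zero_le _) (Nat.floor_le_of_le hN)
  rw [← inter_eq_right.2 hsub, ← sum_ite_mem]
  refine sum_congr rfl fun j hj => ?_
  rw [logWindow_log_sub_log v (mem_Ioc.1 hj).1, mul_ite, mul_one, mul_zero]

lemma sum_Ioc_mul_logWindow_log_sub_log_natCast {x : ℝ} (hx : 0 < x)
    (hN : 16 * (x / Real.exp v) ≤ N) (f : ℕ → ℝ) :
    ∑ k ∈ Ioc 0 N, f k * logWindow (Real.log x - Real.log k) v =
      ∑ k ∈ Ico ⌈x / Real.exp v⌉₊ ⌈16 * (x / Real.exp v)⌉₊, f k := by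
  have hsub : Ico ⌈x / Real.exp v⌉₊ ⌈16 * (x / Real.exp v)⌉₊ ⊆ Ioc 0 N := fun k hk => by
    rw [mem_Ico] at hk
    exact mem_Ioc.2 ⟨(Nat.ceil_pos.2 (by positivity)).trans_le hk.1,
      hk.2.le.trans (Nat.ceil_le.2 hN)⟩
  rw [← inter_eq_right.2 hsub, ← sum_ite_mem]
  refine sum_congr rfl fun k hk => ?_
  rw [logWindow_log_sub_log_natCast hx v (mem_Ioc.1 hk).1, mul_ite, mul_one, mul_zero]

end LogWindow

section TypeII

open MeasureTheory Filter

/-- The divisor sum of the Barban–Vehov weights, with its leading term `k = 1` removed; it vanishes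
on `k ≤ M ^ 30`. -/
noncomputable def barbanVehovTail (M k : ℕ) : ℝ :=
  if k = 1 then 0 else barbanVehovSum (M ^ 30) (M ^ 35) k

/-- The bilinear part of the sum of `largeVonMangoldt (M ^ 35)` over the residue class of `1`
modulo `D`, centred and weighted by the tent at `M ^ 100 / 16`. -/
noncomputable def typeIISum (M D : ℕ) [NeZero D] : ℝ :=
  ∑ k ∈ Ioc 0 (M ^ 100), ∑ j ∈ Ioc 0 (M ^ 100),
    barbanVehovTail M k * largeVonMangoldt (M ^ 35) j * centeredInd (1 : (ZMod D)ˣ) (k * j) *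
      logTent (M ^ 100 / 16) (k * j)

/-- The part of `typeIISum M D` in which `j` is localised near `exp v`, and `k` near
`M ^ 100 / exp v`. -/
noncomputable def typeIISlice (M D : ℕ) [NeZero D] (v : ℝ) : ℝ :=
  ∑ k ∈ Ioc 0 (M ^ 100), ∑ j ∈ Ioc 0 (M ^ 100),
    barbanVehovTail M k * logWindow (Real.log (M ^ 100 / 256) - Real.log k) v *
      (largeVonMangoldt (M ^ 35) j * logWindow (Real.log j - Real.log 16) v) *
      centeredInd (1 : (ZMod D)ˣ) (k * j)

variable {M : ℕ}

lemma one_le_pow_div_sixteen (hM : 2 ≤ M) {n : ℕ} (hn : 4 ≤ n) : 1 ≤ (M : ℝ) ^ n / 16 := by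
  rw [le_div_iff₀ (by norm_num)]
  calc (1 : ℝ) * 16 = 2 ^ 4 := by norm_num
    _ ≤ (M : ℝ) ^ 4 := by gcongr; exact_mod_cast hM
    _ ≤ (M : ℝ) ^ n := pow_le_pow_right₀ (mod_cast (by omega : 1 ≤ M)) hn

lemma barbanVehovTail_eq_zero (hM : 2 ≤ M) {k : ℕ} (hk : k ≤ M ^ 30) : barbanVehovTail M k = 0 := by
  rw [barbanVehovTail]
  split_ifs with h1
  · rfl
  · rcases k.eq_zero_or_pos with rfl | hk0
    · simp [barbanVehovSum]
    · rw [barbanVehovSum_of_le (Nat.pow_lt_pow_right hM (by norm_num)) hk0 hk, if_neg h1]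

lemma barbanVehovTail_sq_le (M k : ℕ) :
    barbanVehovTail M k ^ 2 ≤ barbanVehovSum (M ^ 30) (M ^ 35) k ^ 2 := by
  rw [barbanVehovTail]
  split_ifs
  · rw [zero_pow two_ne_zero]
    exact sq_nonneg _
  · exact le_rfl

lemma typeIISlice_eq_sum (M D : ℕ) [NeZero D] (v : ℝ) :
    typeIISlice M D v = ∑ k ∈ Ioc 0 (M ^ 100), ∑ j ∈ Ioc 0 (M ^ 100),
      barbanVehovTail M k * largeVonMangoldt (M ^ 35) j * centeredInd (1 : (ZMod D)ˣ) (k * j) *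
        (logWindow (Real.log (M ^ 100 / 256) - Real.log k) v *
          logWindow (Real.log j - Real.log 16) v) :=
  sum_congr rfl fun k _ => sum_congr rfl fun j _ => by ring

lemma integrable_typeIISlice (M D : ℕ) [NeZero D] : Integrable (typeIISlice M D) := by
  rw [funext (typeIISlice_eq_sum M D)]
  exact integrable_finsetSum _ fun k _ => integrable_finsetSum _ fun j _ =>
    (integrable_logWindow_mul_logWindow _ _).const_mul _

lemma integral_typeIISlice (hM : 0 < M) (D : ℕ) [NeZero D] :
    ∫ v, typeIISlice M D v = typeIISum M D := by
  have hintegrable (c : ℝ) (k j : ℕ) : Integrable fun v => c *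
      (logWindow (Real.log (M ^ 100 / 256) - Real.log k) v *
        logWindow (Real.log j - Real.log 16) v) :=
    (integrable_logWindow_mul_logWindow _ _).const_mul _
  simp only [typeIISlice_eq_sum]
  rw [integral_finsetSum _ fun k _ => integrable_finsetSum _ fun j _ => hintegrable _ k j,
    typeIISum]
  refine sum_congr rfl fun k hk => ?_
  rw [integral_finsetSum _ fun j _ => hintegrable _ k j]
  refine sum_congr rfl fun j hj => ?_
  rw [integral_const_mul, integral_logWindow_log_mul_logWindow_log (by positivity)
    (mem_Ioc.1 hk).1 (mem_Ioc.1 hj).1]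
  ring_nf

lemma typeIISlice_eq_zero_of_exp_lt {v : ℝ} (hv : Real.exp v < (M : ℝ) ^ 35 / 16) (D : ℕ)
    [NeZero D] : typeIISlice M D v = 0 := by
  refine sum_eq_zero fun k _ => sum_eq_zero fun j hj => ?_
  rw [logWindow_log_sub_log v (mem_Ioc.1 hj).1, largeVonMangoldt]
  by_cases hMj : M ^ 35 < j
  · have hj' : (M : ℝ) ^ 35 < j := mod_cast hMj
    have hfloor : j ∉ Ioc ⌊Real.exp v⌋₊ ⌊16 * Real.exp v⌋₊ := fun h => by
      have := (Nat.le_floor_iff (by positivity)).1 (mem_Ioc.1 h).2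
      linarith
    rw [if_neg hfloor, mul_zero, mul_zero, zero_mul]
  · rw [if_neg hMj, zero_mul, mul_zero, zero_mul]

lemma typeIISlice_eq_zero_of_div_exp_lt (hM : 2 ≤ M) {v : ℝ}
    (hv : (M : ℝ) ^ 100 / 256 / Real.exp v < (M : ℝ) ^ 30 / 16) (D : ℕ) [NeZero D] :
    typeIISlice M D v = 0 := by
  refine sum_eq_zero fun k hk => sum_eq_zero fun j _ => ?_
  rw [logWindow_log_sub_log_natCast (by positivity) v (mem_Ioc.1 hk).1]
  rcases le_or_gt k (M ^ 30) with hMk | hMk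
  · rw [barbanVehovTail_eq_zero hM hMk, zero_mul, zero_mul, zero_mul]
  · have hk' : (M : ℝ) ^ 30 < k := mod_cast hMk
    have hceil : k ∉ Ico ⌈(M : ℝ) ^ 100 / 256 / Real.exp v⌉₊
        ⌈16 * ((M : ℝ) ^ 100 / 256 / Real.exp v)⌉₊ := fun h => by
      have := Nat.lt_ceil.1 (mem_Ico.1 h).2
      linarith
    rw [if_neg hceil, mul_zero, zero_mul, zero_mul]

lemma residueVariance_mul_logWindow_log_sub_log {D N : ℕ} [NeZero D] {v : ℝ}
    (hN : 16 * Real.exp v ≤ N) (f : ℕ → ℝ) :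
    residueVariance D (Ioc 0 N) (fun j => f j * logWindow (Real.log j - Real.log 16) v) =
      residueVariance D (Ioc ⌊Real.exp v⌋₊ ⌊16 * Real.exp v⌋₊) f := by
  simp only [residueVariance, mul_right_comm (f _), sum_Ioc_mul_logWindow_log_sub_log hN]

variable {ι : Type*} [Fintype ι] {D : ι → ℕ} [∀ i, NeZero (D i)]

lemma IsCoprimeFamily.sum_totient_mul_residueVariance_logWindow_le (hD : IsCoprimeFamily M D)
    (hM : 2 ≤ M) {x v : ℝ} (hx : 0 < x) (hxv : (M : ℝ) ^ 30 / 16 ≤ x / Real.exp v) {N : ℕ}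
    (hN : 16 * (x / Real.exp v) ≤ N) (f : ℕ → ℝ) :
    ∑ i, ((D i).totient : ℝ) * residueVariance (D i) (Ioc 0 N)
        (fun k => f k * logWindow (Real.log x - Real.log k) v) ≤
      3200 * (x / Real.exp v) ^ 2 *
        ∑ k ∈ Ioc 0 N, f k ^ 2 / k * logWindow (Real.log x - Real.log k) v := by
  set t := x / Real.exp v with ht
  have hvar (i : ι) : residueVariance (D i) (Ioc 0 N)
      (fun k => f k * logWindow (Real.log x - Real.log k) v) =
        residueVariance (D i) (Ico ⌈t⌉₊ ⌈16 * t⌉₊) f := by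
    simp only [residueVariance, mul_right_comm (f _),
      sum_Ioc_mul_logWindow_log_sub_log_natCast hx hN, ← ht]
  simp only [hvar]
  rw [sum_Ioc_mul_logWindow_log_sub_log_natCast hx hN, ← ht]
  refine (hD.sum_totient_mul_residueVariance_Ico_le hM hxv f).trans ?_
  rw [mul_sum, mul_sum]
  refine sum_le_sum fun k hk => ?_
  have hk0 : (0 : ℝ) < k := mod_cast (Nat.ceil_pos.2 (by positivity)).trans_le (mem_Ico.1 hk).1
  have hkt : (k : ℝ) ≤ 16 * t := (Nat.lt_ceil.1 (mem_Ico.1 hk).2).le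
  have ht0 : 0 < t := by positivity
  calc 200 * t * f k ^ 2 = 200 * t * (k * (f k ^ 2 / k)) := by field_simp
    _ ≤ 200 * t * (16 * t * (f k ^ 2 / k)) := by gcongr
    _ = 3200 * t ^ 2 * (f k ^ 2 / k) := by ring

lemma IsCoprimeFamily.exists_sum_totient_mul_abs_typeIISlice_le :
    ∃ C : ℝ, 0 < C ∧ ∀ {ι : Type*} [Fintype ι] {M : ℕ} {D : ι → ℕ} [∀ i, NeZero (D i)],
      IsCoprimeFamily M D → 2 ≤ M → ∀ v : ℝ, (M : ℝ) ^ 35 / 16 ≤ Real.exp v →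
        (M : ℝ) ^ 30 / 16 ≤ (M : ℝ) ^ 100 / 256 / Real.exp v → ∀ θ : ℝ, 0 < θ →
          ∑ i, ((D i).totient : ℝ) * |typeIISlice M (D i) v| ≤
            (M : ℝ) ^ 100 / 256 * (C / θ + 1600 * θ * ∑ k ∈ Ioc 0 (M ^ 100),
              barbanVehovSum (M ^ 30) (M ^ 35) k ^ 2 / k *
                logWindow (Real.log (M ^ 100 / 256) - Real.log k) v) := by
  obtain ⟨C, hC, hΛ⟩ :=
    IsCoprimeFamily.exists_sum_totient_mul_residueVariance_largeVonMangoldt_le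
  refine ⟨C / 2, half_pos hC, fun {ι} _ {M} {D} _ hD hM v hv hxv θ hθ => ?_⟩
  set x : ℝ := (M : ℝ) ^ 100 / 256 with hx
  set y := Real.exp v with hy
  have hx0 : 0 < x := by positivity
  have hy0 : 0 < y := Real.exp_pos v
  have hyx : y ≤ x := (one_le_div hy0).1 ((one_le_pow_div_sixteen hM (by norm_num)).trans hxv)
  have hxM : 256 * x = ((M ^ 100 : ℕ) : ℝ) := by
    push_cast
    linarith
  have hxN : 16 * (x / y) ≤ ((M ^ 100 : ℕ) : ℝ) := by
    have := div_le_self hx0.le ((one_le_pow_div_sixteen hM (by norm_num)).trans hv)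
    linarith
  have hyN : 16 * y ≤ ((M ^ 100 : ℕ) : ℝ) := by linarith
  have hyM : y ≤ (M : ℝ) ^ 100 := by linarith
  have hbv := (hD.sum_totient_mul_residueVariance_logWindow_le hM hx0 hxv hxN
    (barbanVehovTail M)).trans <| mul_le_mul_of_nonneg_left (sum_le_sum fun k _ =>
      mul_le_mul_of_nonneg_right (div_le_div_of_nonneg_right (barbanVehovTail_sq_le M k)
        (Nat.cast_nonneg k)) (logWindow_nonneg _ v)) (by positivity)
  set ε := x / (y ^ 2 * θ) with hε
  have hε0 : 0 < ε := by positivity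
  refine (sum_le_sum fun i _ => mul_le_mul_of_nonneg_left
    (abs_sum_sum_mul_centeredInd_le _ _ _ _ hε0) (Nat.cast_nonneg _)).trans ?_
  simp only [residueVariance_mul_logWindow_log_sub_log hyN, mul_div_assoc', mul_add, ← sum_div,
    sum_add_distrib, mul_left_comm _ ε, mul_left_comm _ ε⁻¹, ← mul_sum]
  refine (div_le_div_of_nonneg_right (add_le_add
    (mul_le_mul_of_nonneg_left hbv (inv_nonneg.2 hε0.le))
    (mul_le_mul_of_nonneg_left (hΛ hD hM y hv hyM) hε0.le)) zero_le_two).trans_eq ?_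
  rw [hε, ← hy]
  field_simp
  ring

lemma IsCoprimeFamily.exists_sum_totient_mul_abs_typeIISlice_le_indicator :
    ∃ C : ℝ, 0 < C ∧ ∀ {ι : Type*} [Fintype ι] {M : ℕ} {D : ι → ℕ} [∀ i, NeZero (D i)],
      IsCoprimeFamily M D → 2 ≤ M → ∀ θ : ℝ, 0 < θ → ∀ v : ℝ,
        ∑ i, ((D i).totient : ℝ) * |typeIISlice M (D i) v| ≤
          (M : ℝ) ^ 100 / 256 * (C / θ * (Set.Ico 0 (100 * Real.log M)).indicator 1 v +
            1600 * θ * ∑ k ∈ Ioc 0 (M ^ 100), barbanVehovSum (M ^ 30) (M ^ 35) k ^ 2 / k *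
              logWindow (Real.log (M ^ 100 / 256) - Real.log k) v) := by
  obtain ⟨C, hC, hslice⟩ := IsCoprimeFamily.exists_sum_totient_mul_abs_typeIISlice_le
  refine ⟨C, hC, fun {ι} _ {M} {D} _ hD hM θ hθ v => ?_⟩
  have hM1 : (1 : ℝ) ≤ M := mod_cast (by omega : 1 ≤ M)
  have hind : 0 ≤ (Set.Ico 0 (100 * Real.log M)).indicator (1 : ℝ → ℝ) v :=
    Set.indicator_nonneg (fun _ _ => zero_le_one) v
  have hsum : 0 ≤ ∑ k ∈ Ioc 0 (M ^ 100), barbanVehovSum (M ^ 30) (M ^ 35) k ^ 2 / k *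
      logWindow (Real.log (M ^ 100 / 256) - Real.log k) v :=
    sum_nonneg fun k _ => mul_nonneg (by positivity) (logWindow_nonneg _ v)
  rcases lt_or_ge (Real.exp v) ((M : ℝ) ^ 35 / 16) with hv | hv
  · simp only [typeIISlice_eq_zero_of_exp_lt hv, abs_zero, mul_zero, sum_const_zero]
    positivity
  rcases lt_or_ge ((M : ℝ) ^ 100 / 256 / Real.exp v) ((M : ℝ) ^ 30 / 16) with hxv | hxv
  · simp only [typeIISlice_eq_zero_of_div_exp_lt hM hxv, abs_zero, mul_zero, sum_const_zero]
    positivity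
  have hlower : 0 ≤ v := Real.one_le_exp_iff.1 ((one_le_pow_div_sixteen hM (by norm_num)).trans hv)
  have hupper : v < 100 * Real.log M := by
    rw [show (100 : ℝ) = (100 : ℕ) by norm_num, ← Real.log_pow,
      Real.lt_log_iff_exp_lt (by positivity)]
    have hle := (one_le_div (Real.exp_pos v)).1
      ((one_le_pow_div_sixteen hM (by norm_num)).trans hxv)
    linarith [pow_pos (zero_lt_one.trans_le hM1) 100]
  rw [Set.indicator_of_mem (Set.mem_Ico.2 ⟨hlower, hupper⟩), Pi.one_apply, mul_one]
  exact hslice hD hM v hv hxv θ hθ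

lemma IsCoprimeFamily.exists_eventually_sum_totient_mul_abs_typeIISum_le :
    ∃ C : ℝ, ∀ᶠ M : ℕ in atTop, ∀ {ι : Type*} [Fintype ι] {D : ι → ℕ} [∀ i, NeZero (D i)],
      IsCoprimeFamily M D →
        ∑ i, ((D i).totient : ℝ) * |typeIISum M (D i)| ≤ C * M ^ 100 * √(Real.log M) := by
  obtain ⟨A, -, hslice⟩ :=
    IsCoprimeFamily.exists_sum_totient_mul_abs_typeIISlice_le_indicator
  obtain ⟨B, hsq⟩ := exists_eventually_sum_barbanVehovSum_pow_sq_div_le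
  refine ⟨(100 * A + 1600 * (B * Real.log 16)) / 256, ?_⟩
  filter_upwards [hsq, eventually_ge_atTop 2] with M hB hM ι _ D _ hD
  have hlog : 0 < Real.log M := Real.log_pos (mod_cast hM)
  have hθ : 0 < √(Real.log M) := Real.sqrt_pos.2 hlog
  have hintegrable₁ :=
    (integrable_indicator_Ico_one 0 (100 * Real.log M)).const_mul (A / √(Real.log M))
  have hwindow (k : ℕ) : Integrable fun v => barbanVehovSum (M ^ 30) (M ^ 35) k ^ 2 / k *
      logWindow (Real.log (M ^ 100 / 256) - Real.log k) v :=
    (integrable_indicator_Ico_one _ _).const_mul _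
  have hintegrable₂ := (integrable_finsetSum (Ioc 0 (M ^ 100)) fun k _ => hwindow k).const_mul
    (1600 * √(Real.log M))
  have hintegrable (i : ι) : Integrable fun v => ((D i).totient : ℝ) * |typeIISlice M (D i) v| :=
    (integrable_typeIISlice M (D i)).abs.const_mul _
  calc ∑ i, ((D i).totient : ℝ) * |typeIISum M (D i)|
      ≤ ∑ i, ∫ v, ((D i).totient : ℝ) * |typeIISlice M (D i) v| := by
        gcongr with i
        rw [integral_const_mul, ← integral_typeIISlice (by omega)]
        gcongr
        exact abs_integral_le_integral_abs
    _ = ∫ v, ∑ i, ((D i).totient : ℝ) * |typeIISlice M (D i) v| :=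
        (integral_finsetSum _ fun i _ => hintegrable i).symm
    _ ≤ _ := integral_mono (integrable_finsetSum _ fun i _ => hintegrable i)
        ((hintegrable₁.add hintegrable₂).const_mul _) (hslice hD hM _ hθ)
    _ = M ^ 100 / 256 * (A / √(Real.log M) * (100 * Real.log M) + 1600 * √(Real.log M) *
          ((∑ k ∈ Ioc 0 (M ^ 100), barbanVehovSum (M ^ 30) (M ^ 35) k ^ 2 / k) *
            Real.log 16)) := by
        simp only [integral_const_mul, Pi.add_apply]
        rw [integral_add hintegrable₁ hintegrable₂, integral_const_mul, integral_const_mul,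
          integral_finsetSum _ fun k _ => hwindow k, integral_indicator_Ico_one, sub_zero,
          max_eq_right (by positivity), sum_mul]
        simp only [integral_const_mul, integral_logWindow]
    _ ≤ M ^ 100 / 256 * (A / √(Real.log M) * (100 * (√(Real.log M) * √(Real.log M))) +
          1600 * √(Real.log M) * (B * Real.log 16)) := by
        rw [Real.mul_self_sqrt hlog.le]
        gcongr
    _ = _ := by field_simp

end TypeII

section TentVariation

variable {y : ℝ} {n : ℕ}

lemma logTent_nonneg (y : ℝ) (n : ℕ) : 0 ≤ logTent y n := le_max_left _ _

lemma logTent_le (hy : 0 < y) (hn : 0 < n) : logTent y n ≤ Real.log 16 := by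
  rw [logTent_eq_max_sub_abs hy hn]
  exact max_le (by positivity) (sub_le_self _ (abs_nonneg _))

lemma logTent_eq_zero_of_le (hy : 0 < y) (hn : 16 * n ≤ y) : logTent y n = 0 :=
  max_eq_left <| (min_le_left _ _).trans <|
    Real.log_nonpos (by positivity) ((div_le_one hy).2 hn)

lemma logTent_eq_zero_of_ge (hy : 0 < y) (hn : 16 * y ≤ n) : logTent y n = 0 :=
  max_eq_left <| (min_le_right _ _).trans <|
    Real.log_nonpos (by positivity) ((div_le_one (by linarith)).2 hn)

lemma abs_log_succ_sub_log_le (hn : 0 < n) :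
    |Real.log (n + 1 : ℕ) - Real.log n| ≤ (n : ℝ)⁻¹ := by
  have hn' : (0 : ℝ) < n := mod_cast hn
  have hle := Real.log_le_sub_one_of_pos (show (0 : ℝ) < (n + 1 : ℕ) / n by positivity)
  rw [Real.log_div (by positivity) hn'.ne', Nat.cast_succ, add_div, div_self hn'.ne',
    one_div] at hle
  rw [abs_of_nonneg (sub_nonneg.2 (Real.log_le_log hn' (by simp))), Nat.cast_succ]
  linarith

lemma abs_logTent_succ_sub_le (hy : 0 < y) (hn : 0 < n) :
    |logTent y (n + 1) - logTent y n| ≤ (n : ℝ)⁻¹ := by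
  rw [logTent_eq_max_sub_abs hy hn, logTent_eq_max_sub_abs hy n.succ_pos]
  refine (abs_max_sub_max_le_max _ _ _ _).trans (max_le (by simp) ?_)
  rw [sub_sub_sub_cancel_left]
  refine (abs_abs_sub_abs_le_abs_sub _ _).trans ?_
  rw [sub_sub_sub_cancel_right, abs_sub_comm]
  exact abs_log_succ_sub_log_le hn

lemma abs_logTent_mul_log_succ_sub_le (hy : 0 < y) (hn : 0 < n) :
    |logTent y (n + 1) * Real.log (n + 1 : ℕ) - logTent y n * Real.log n| ≤
      (n : ℝ)⁻¹ * (Real.log (n + 1 : ℕ) + Real.log 16) := by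
  have hlog : 0 ≤ Real.log (n + 1 : ℕ) := Real.log_natCast_nonneg _
  calc
    _ = |(logTent y (n + 1) - logTent y n) * Real.log (n + 1 : ℕ) +
          (Real.log (n + 1 : ℕ) - Real.log n) * logTent y n| := by ring_nf
    _ ≤ |logTent y (n + 1) - logTent y n| * Real.log (n + 1 : ℕ) +
          |Real.log (n + 1 : ℕ) - Real.log n| * logTent y n := by
      refine (abs_add_le _ _).trans ?_
      rw [abs_mul, abs_mul, abs_of_nonneg hlog, abs_of_nonneg (logTent_nonneg y n)]
    _ ≤ (n : ℝ)⁻¹ * Real.log (n + 1 : ℕ) + (n : ℝ)⁻¹ * Real.log 16 := by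
      gcongr
      exacts [abs_logTent_succ_sub_le hy hn, logTent_nonneg y n, abs_log_succ_sub_log_le hn,
        logTent_le hy hn]
    _ = _ := by ring

lemma sum_range_le_mul_one_add_log {N : ℕ} {g : ℕ → ℝ} {B : ℝ} (hB : 0 ≤ B) (h0 : g 0 ≤ 0)
    (hg : ∀ n, 0 < n → n < N → g n ≤ (n : ℝ)⁻¹ * B) :
    ∑ n ∈ range N, g n ≤ (1 + Real.log N) * B := by
  calc
    ∑ n ∈ range N, g n ≤ ∑ n ∈ range N, (n : ℝ)⁻¹ * B := by
      refine sum_le_sum fun n hn => ?_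
      rcases n.eq_zero_or_pos with rfl | hn0
      · simpa using h0
      · exact hg n hn0 (mem_range.1 hn)
    _ ≤ (∑ n ∈ range (N + 1), (n : ℝ)⁻¹) * B := by
      rw [← sum_mul, sum_range_succ _ N]
      gcongr
      exact le_add_of_nonneg_right (by positivity)
    _ = harmonic N * B := by simp [sum_range_succ', harmonic]
    _ ≤ (1 + Real.log N) * B := by
      gcongr
      exact harmonic_le_one_add_log N

lemma sum_abs_logTent_succ_sub_le (hy : 16 ≤ y) (N : ℕ) :
    ∑ n ∈ range N, |logTent y (n + 1) - logTent y n| ≤ 1 + Real.log N := by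
  have hy0 : 0 < y := by linarith
  rw [← mul_one (1 + Real.log N)]
  refine sum_range_le_mul_one_add_log zero_le_one ?_ fun n hn _ => ?_
  · rw [logTent_eq_zero_of_le hy0 (by simpa), logTent_eq_zero_of_le hy0 (by simpa using hy0.le)]
    simp
  · simpa using abs_logTent_succ_sub_le hy0 hn

lemma sum_abs_logTent_mul_log_succ_sub_le (hy : 0 < y) (N : ℕ) :
    ∑ n ∈ range N, |logTent y (n + 1) * Real.log (n + 1 : ℕ) - logTent y n * Real.log n| ≤
      (1 + Real.log N) * (Real.log N + Real.log 16) := by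
  refine sum_range_le_mul_one_add_log (add_nonneg (Real.log_natCast_nonneg N) (by positivity))
    (by simp) fun n hn hnN => (abs_logTent_mul_log_succ_sub_le hy hn).trans ?_
  gcongr
  exact hnN

end TentVariation

section TypeI

lemma sum_divisors_sum_divisors_mul (f g : ℕ → ℝ) (n : ℕ) :
    ∑ k ∈ n.divisors, (∑ d ∈ k.divisors, f d) * g (n / k) =
      ∑ d ∈ n.divisors, f d * ∑ m ∈ (n / d).divisors, g m := by
  let f' : ArithmeticFunction ℝ := ⟨fun d => if d = 0 then 0 else f d, if_pos rfl⟩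
  let g' : ArithmeticFunction ℝ := ⟨fun d => if d = 0 then 0 else g d, if_pos rfl⟩
  have hf (d m : ℕ) (hd : d ∈ m.divisors) : f' d = f d := if_neg (Nat.pos_of_mem_divisors hd).ne'
  have hg (d m : ℕ) (hd : d ∈ m.divisors) : g' d = g d := if_neg (Nat.pos_of_mem_divisors hd).ne'
  have hassoc := congrArg (fun F : ArithmeticFunction ℝ => F n)
    (mul_assoc f' (ArithmeticFunction.zeta : ArithmeticFunction ℝ) g')
  simp only [ArithmeticFunction.mul_apply (f := f' * _),
    ArithmeticFunction.mul_apply (f := f') (g := _ * g')] at hassoc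
  rw [Nat.sum_divisorsAntidiagonal
      fun a b => (f' * (ArithmeticFunction.zeta : ArithmeticFunction ℝ)) a * g' b,
    Nat.sum_divisorsAntidiagonal
      fun a b => f' a * ((ArithmeticFunction.zeta : ArithmeticFunction ℝ) * g') b] at hassoc
  convert hassoc using 1
  · refine sum_congr rfl fun k hk => ?_
    rw [ArithmeticFunction.coe_mul_zeta_apply, sum_congr rfl fun d hd => hf d k hd,
      hg _ n (Nat.mem_divisors.2
        ⟨Nat.div_dvd_of_dvd (Nat.dvd_of_mem_divisors hk), (Nat.mem_divisors.1 hk).2⟩)]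
  · refine sum_congr rfl fun d hd => ?_
    rw [ArithmeticFunction.coe_zeta_mul_apply, hf d n hd, sum_congr rfl fun m hm => hg m _ hm]

lemma sum_divisors_largeVonMangoldt (w : ℕ) {n : ℕ} (hn : 0 < n) :
    ∑ m ∈ n.divisors, largeVonMangoldt w m =
      Real.log n - ∑ m ∈ Ioc 0 w, if m ∣ n then Λ m else 0 := by
  have hsmall : ∑ m ∈ n.divisors, (if m ≤ w then Λ m else 0) =
      ∑ m ∈ Ioc 0 w, if m ∣ n then Λ m else 0 := by
    rw [sum_divisors_eq_sum_Ioc_ite_dvd (fun m hm => if_neg hm.not_ge) hn]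
    refine sum_congr rfl fun m hm => ?_
    rw [if_pos (mem_Ioc.1 hm).2]
  rw [← ArithmeticFunction.vonMangoldt_sum, ← hsmall, ← sum_sub_distrib]
  refine sum_congr rfl fun m _ => ?_
  rcases lt_or_ge w m with h | h
  · simp [largeVonMangoldt, h, h.not_ge]
  · simp [largeVonMangoldt, h, h.not_gt]

variable {y z : ℕ}

lemma sum_divisors_barbanVehovSum_mul_largeVonMangoldt (hyz : y ≤ z) (w : ℕ) {n : ℕ}
    (hn : 0 < n) :
    ∑ k ∈ n.divisors, barbanVehovSum y z k * largeVonMangoldt w (n / k) =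
      ∑ d ∈ Ioc 0 z, barbanVehov y z d * (if d ∣ n then Real.log n else 0) +
      ∑ d ∈ Ioc 0 z, -(barbanVehov y z d * Real.log d) * (if d ∣ n then 1 else 0) +
      ∑ p ∈ Ioc 0 z ×ˢ Ioc 0 w, -(barbanVehov y z p.1 * Λ p.2) *
        (if p.1 * p.2 ∣ n then 1 else 0) := by
  unfold barbanVehovSum
  rw [sum_divisors_sum_divisors_mul, sum_product, ← sum_add_distrib, ← sum_add_distrib,
    sum_divisors_eq_sum_Ioc_ite_dvd (z := z) (fun d hd => by
      rw [barbanVehov_eq_zero hyz hd.le, zero_mul]) hn]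
  refine sum_congr rfl fun d hd => ?_
  have hd0 := (mem_Ioc.1 hd).1
  by_cases hdn : d ∣ n
  · obtain ⟨e, rfl⟩ := hdn
    have he : 0 < e := Nat.pos_of_mul_pos_left hn
    have hd0' : (d : ℝ) ≠ 0 := mod_cast hd0.ne'
    have he' : (e : ℝ) ≠ 0 := mod_cast he.ne'
    simp only [dvd_mul_right, if_true, Nat.mul_div_cancel_left e hd0,
      sum_divisors_largeVonMangoldt w he, Nat.mul_dvd_mul_iff_left hd0, Nat.cast_mul,
      Real.log_mul hd0' he', mul_ite, mul_zero, mul_one]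
    have hpull : ∑ m ∈ Ioc 0 w, (if m ∣ e then -(barbanVehov y z d * Λ m) else 0) =
        -barbanVehov y z d * ∑ m ∈ Ioc 0 w, if m ∣ e then Λ m else 0 := by
      simp only [mul_sum, mul_ite, mul_zero, neg_mul]
    rw [hpull]
    ring
  · have hdm (m : ℕ) : ¬d * m ∣ n := fun h => hdn ((dvd_mul_right d m).trans h)
    simp [hdn, hdm]

lemma sum_abs_mul_le {α : Type*} {T : Finset α} {c : α → ℝ} {B K N : ℝ} (hK : 0 ≤ K)
    (hN : (#T : ℝ) = N) (hc : ∀ i ∈ T, |c i| ≤ B) : ∑ i ∈ T, |c i| * K ≤ N * B * K := by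
  rw [← sum_mul, ← hN, ← nsmul_eq_mul]
  gcongr
  exact sum_le_card_nsmul _ _ _ hc

lemma discrepancyLE_mul_sum_divisors_barbanVehovSum (hy : 0 < y) (hyz : y ≤ z) {w N : ℕ}
    {t : ℕ → ℝ} {V V' : ℝ} (ht : t 0 = 0)
    (hV : ∀ h, 0 < h → DiscrepancyLE (range N) (fun n => if h ∣ n then t n else 0) V)
    (hV' : ∀ h, 0 < h →
      DiscrepancyLE (range N) (fun n => if h ∣ n then t n * Real.log n else 0) V') :
    DiscrepancyLE (range N)
      (fun n => t n * ∑ k ∈ n.divisors, barbanVehovSum y z k * largeVonMangoldt w (n / k))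
      (z * V' + z * Real.log z * V + z * w * Real.log w * V) := by
  have hV0 : 0 ≤ V := (abs_nonneg _).trans (hV 1 one_pos 1 1 1)
  have hV0' : 0 ≤ V' := (abs_nonneg _).trans (hV' 1 one_pos 1 1 1)
  have hbv := abs_barbanVehov_le_one hy hyz
  have hlog := DiscrepancyLE.sum (barbanVehov y z) fun d (hd : d ∈ Ioc 0 z) =>
    hV' d (mem_Ioc.1 hd).1
  have hlogd := DiscrepancyLE.sum (fun d => -(barbanVehov y z d * Real.log d))
    fun d (hd : d ∈ Ioc 0 z) => hV d (mem_Ioc.1 hd).1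
  have hprod := DiscrepancyLE.sum (fun p : ℕ × ℕ => -(barbanVehov y z p.1 * Λ p.2))
    fun p (hp : p ∈ Ioc 0 z ×ˢ Ioc 0 w) => hV (p.1 * p.2) <|
      Nat.mul_pos (mem_Ioc.1 (mem_product.1 hp).1).1 (mem_Ioc.1 (mem_product.1 hp).2).1
  refine (((hlog.add hlogd).add hprod).congr fun n _ => ?_).mono ?_
  · rcases n.eq_zero_or_pos with rfl | hn
    · simp [ht]
    · rw [sum_divisors_barbanVehovSum_mul_largeVonMangoldt hyz w hn, mul_add, mul_add]
      simp only [mul_sum]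
      refine congr_arg₂ _ (congr_arg₂ _ ?_ ?_) ?_ <;>
        exact sum_congr rfl fun _ _ => by split_ifs <;> ring
  · gcongr
    · simpa using sum_abs_mul_le hV0' (by simp) fun d (_ : d ∈ Ioc 0 z) => hbv d
    · refine sum_abs_mul_le hV0 (by simp) fun d hd => ?_
      rw [abs_neg, abs_mul, abs_of_nonneg (Real.log_natCast_nonneg d)]
      have hd0 : (0 : ℝ) < d := mod_cast (mem_Ioc.1 hd).1
      have hdz : (d : ℝ) ≤ z := mod_cast (mem_Ioc.1 hd).2
      exact (mul_le_of_le_one_left (Real.log_natCast_nonneg d) (hbv d)).trans (by gcongr)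
    · refine sum_abs_mul_le hV0 (by simp) fun p hp => ?_
      have hp2 := mem_Ioc.1 (mem_product.1 hp).2
      have hp0 : (0 : ℝ) < p.2 := mod_cast hp2.1
      have hpw : (p.2 : ℝ) ≤ w := mod_cast hp2.2
      rw [abs_neg, abs_mul, abs_of_nonneg ArithmeticFunction.vonMangoldt_nonneg]
      exact (mul_le_of_le_one_left ArithmeticFunction.vonMangoldt_nonneg (hbv _)).trans
        (ArithmeticFunction.vonMangoldt_le_log.trans (by gcongr))

lemma discrepancyLE_typeI {M : ℕ} (hM : 16 ≤ M) :
    DiscrepancyLE (range (M ^ 100))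
      (fun n => logTent (M ^ 100 / 16) n * ∑ k ∈ n.divisors,
        barbanVehovSum (M ^ 30) (M ^ 35) k * largeVonMangoldt (M ^ 35) (n / k))
      ((M : ℝ) ^ 77) := by
  have hM' : (16 : ℝ) ≤ M := mod_cast hM
  have hY : (16 : ℝ) ≤ M ^ 100 / 16 := by
    rw [le_div_iff₀ (by norm_num)]
    calc (16 : ℝ) * 16 ≤ M ^ 2 := by nlinarith
      _ ≤ M ^ 100 := pow_le_pow_right₀ (by linarith) (by norm_num)
  have hend : logTent (M ^ 100 / 16) (M ^ 100) = 0 :=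
    logTent_eq_zero_of_ge (by linarith) (by push_cast; linarith)
  have hvar := sum_abs_logTent_succ_sub_le hY (M ^ 100)
  have hvar' := sum_abs_logTent_mul_log_succ_sub_le (by linarith) (M ^ 100)
    (y := (M : ℝ) ^ 100 / 16)
  refine (discrepancyLE_mul_sum_divisors_barbanVehovSum (by positivity)
    (Nat.pow_le_pow_right (by omega) (by norm_num))
    (logTent_eq_zero_of_le (by linarith) (by rw [Nat.cast_zero, mul_zero]; positivity))
    (fun h hh => (discrepancyLE_multiples _ _ hh).mono (by simpa only [hend, abs_zero, zero_add]
      using hvar))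
    (fun h hh => (discrepancyLE_multiples _ _ hh).mono (by simpa only [hend, abs_zero, zero_mul,
      zero_add] using hvar'))).mono ?_
  have hlog : Real.log M ≤ M := Real.log_le_self (by linarith)
  have hlog16 : Real.log 16 ≤ M := (Real.log_le_log (by norm_num) hM').trans hlog
  push_cast
  simp only [Real.log_pow, Nat.cast_ofNat]
  calc
    _ ≤ (M : ℝ) ^ 35 * ((M + 100 * M) * (100 * M + M)) + M ^ 35 * (35 * M) * (M + 100 * M) +
          M ^ 35 * M ^ 35 * (35 * M) * (M + 100 * M) := by
      gcongr <;> linarith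
    _ = 13736 * (M : ℝ) ^ 37 + 3535 * M ^ 72 := by ring
    _ ≤ 13736 * (M : ℝ) ^ 72 + 3535 * M ^ 72 := by
      gcongr
      · linarith
      · norm_num
    _ ≤ (M : ℝ) ^ 5 * M ^ 72 := by
      rw [← add_mul]
      gcongr
      calc (13736 + 3535 : ℝ) ≤ 16 ^ 5 := by norm_num
        _ ≤ M ^ 5 := by gcongr
    _ = (M : ℝ) ^ 77 := by ring

end TypeI

section PrimeInClass

open Filter

lemma eventually_half_le_theta : ∀ᶠ x : ℝ in atTop, x / 2 ≤ Chebyshev.theta x := by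
  have hlog : ∀ᶠ x : ℝ in atTop, ‖Real.log x‖ ≤ 0.01 * ‖x ^ (1 / 2 : ℝ)‖ :=
    (isLittleO_log_rpow_atTop one_half_pos).bound (by norm_num)
  filter_upwards [hlog, eventually_ge_atTop 100] with x hlog hx
  have hx0 : 0 ≤ x := by linarith
  rw [Real.norm_of_nonneg (Real.log_nonneg (by linarith)), Real.norm_of_nonneg (by positivity),
    ← Real.sqrt_eq_rpow] at hlog
  have hsq : √x * √x = x := Real.mul_self_sqrt hx0
  have hsqrt : √x ≤ x := Real.sqrt_le_iff.2 ⟨hx0, by nlinarith⟩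
  have hlog2 : Real.log (x + 2) ≤ 2 * Real.log x := by
    rw [← Real.log_rpow (by linarith), Real.rpow_ofNat]
    exact Real.log_le_log (by positivity) (by nlinarith)
  have hmul : √x * Real.log x ≤ √x * (0.01 * √x) := by gcongr
  have hθ := Chebyshev.theta_ge' (x := x) (by linarith)
  nlinarith [Real.log_two_gt_d9, Real.log_two_lt_d9]

lemma eventually_le_theta_sub_theta :
    ∀ᶠ y : ℝ in atTop, y ≤ Chebyshev.theta (4 * y) - Chebyshev.theta (y / 4) := by
  filter_upwards [(tendsto_id.const_mul_atTop (by norm_num : (0 : ℝ) < 4)).eventually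
    eventually_half_le_theta, eventually_ge_atTop 0] with y hlower hy
  have hupper := Chebyshev.theta_le_log4_mul_x (show 0 ≤ y / 4 by positivity)
  rw [Real.log_four_eq] at hupper
  rw [id] at hlower
  nlinarith [Real.log_two_lt_d9]

lemma theta_sub_theta_eq_sum {x y : ℝ} (hxy : x ≤ y) :
    Chebyshev.theta y - Chebyshev.theta x = ∑ p ∈ Ioc ⌊x⌋₊ ⌊y⌋₊ with p.Prime, Real.log p := by
  rw [Chebyshev.theta, Chebyshev.theta, sub_eq_iff_eq_add, sum_filter, sum_filter, sum_filter,
    add_comm]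
  exact (sum_Ioc_consecutive _ (Nat.zero_le _) (Nat.floor_mono hxy)).symm

variable {y : ℝ} {n D N z : ℕ}

lemma one_le_logTent (hy : 0 < y) (hlo : y / 4 ≤ n) (hhi : n ≤ 4 * y) : 1 ≤ logTent y n := by
  have hn : (0 : ℝ) < n := by linarith
  have hfour {t : ℝ} (ht : 4 ≤ t) : 1 ≤ Real.log t := by
    have := Real.log_le_log (by norm_num) ht
    rw [Real.log_four_eq] at this
    linarith [Real.log_two_gt_d9]
  exact le_max_of_le_right <| le_min
    (hfour <| (le_div_iff₀ hy).2 (by linarith)) (hfour <| (le_div_iff₀ hn).2 (by linarith))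

lemma theta_sub_theta_le_sum_logTent_mul_largeVonMangoldt [NeZero D] (hy : 0 < y)
    (hD : (D : ℝ) ≤ y / 4) (hz : (z : ℝ) ≤ y / 4) (hN : 4 * y ≤ N) :
    Chebyshev.theta (4 * y) - Chebyshev.theta (y / 4) ≤
      ∑ n ∈ Ioc 0 N, if n.Coprime D then logTent y n * largeVonMangoldt z n else 0 := by
  rw [theta_sub_theta_eq_sum (by linarith)]
  calc
    _ ≤ ∑ p ∈ Ioc ⌊y / 4⌋₊ ⌊4 * y⌋₊ with p.Prime,
          if p.Coprime D then logTent y p * largeVonMangoldt z p else 0 := by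
      refine sum_le_sum fun p hp => ?_
      obtain ⟨hIoc, hprime⟩ := mem_filter.1 hp
      have hlo : y / 4 < p := (Nat.floor_lt (by positivity)).1 (mem_Ioc.1 hIoc).1
      have hhi : (p : ℝ) ≤ 4 * y := (Nat.le_floor_iff (by positivity)).1 (mem_Ioc.1 hIoc).2
      have hDp : D < p := by exact_mod_cast hD.trans_lt hlo
      have hzp : z < p := by exact_mod_cast hz.trans_lt hlo
      have hcop : p.Coprime D := hprime.coprime_iff_not_dvd.2 fun h =>
        hDp.not_ge (Nat.le_of_dvd (NeZero.pos D) h)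
      rw [if_pos hcop, largeVonMangoldt, if_pos hzp,
        ArithmeticFunction.vonMangoldt_apply_prime hprime]
      exact le_mul_of_one_le_left (Real.log_natCast_nonneg p) (one_le_logTent hy hlo.le hhi)
    _ ≤ _ := by
      refine sum_le_sum_of_subset_of_nonneg ((filter_subset _ _).trans <|
        Ioc_subset_Ioc (Nat.zero_le _) (Nat.floor_le_of_le hN)) fun n _ _ => ?_
      split_ifs
      exacts [mul_nonneg (logTent_nonneg _ _) (largeVonMangoldt_nonneg _ _), le_rfl]

lemma sum_logTent_mul_largeVonMangoldt_mul_residueInd_le (hy : 0 < y)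
    (hno : ∀ q : ℕ, q.Prime → q ≤ N → (q : ZMod D) ≠ 1) :
    ∑ n ∈ Ioc 0 N, logTent y n * largeVonMangoldt z n * residueInd (1 : ZMod D) n ≤
      Real.log 16 * (Chebyshev.psi N - Chebyshev.theta N) := by
  rw [← sum_vonMangoldt_ite_prime, mul_sum]
  refine sum_le_sum fun n hn => ?_
  obtain ⟨hn0, hnN⟩ := mem_Ioc.1 hn
  split_ifs with hprime
  · rw [residueInd, if_neg (hno n hprime hnN), mul_zero, mul_zero]
  · have hΛ : 0 ≤ Λ n := ArithmeticFunction.vonMangoldt_nonneg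
    calc
      _ ≤ logTent y n * largeVonMangoldt z n * 1 := by
        have hle : residueInd (1 : ZMod D) n ≤ 1 := by
          rw [residueInd]
          split_ifs <;> norm_num
        exact mul_le_mul_of_nonneg_left hle
          (mul_nonneg (logTent_nonneg _ _) (largeVonMangoldt_nonneg _ _))
      _ ≤ Real.log 16 * Λ n := by
        rw [mul_one]
        refine mul_le_mul (logTent_le hy hn0) ?_ (largeVonMangoldt_nonneg _ _) (by positivity)
        rw [largeVonMangoldt]
        split_ifs
        exacts [le_rfl, hΛ]

lemma sum_mul_centeredInd_one [NeZero D] (s : Finset ℕ) (f : ℕ → ℝ) :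
    ∑ n ∈ s, f n * centeredInd (1 : (ZMod D)ˣ) n =
      ∑ n ∈ s, f n * residueInd (1 : ZMod D) n -
        (D.totient : ℝ)⁻¹ * ∑ n ∈ s, if n.Coprime D then f n else 0 := by
  simp only [centeredInd, expect_residueInd, Units.val_one, mul_sub, sum_sub_distrib, mul_sum]
  congr 1
  exact sum_congr rfl fun n _ => by split_ifs <;> ring

variable {M : ℕ}

lemma largeVonMangoldt_eq_sum_sub_sum (hM : 2 ≤ M) (hn : 0 < n) (z : ℕ) :
    largeVonMangoldt z n =
      ∑ k ∈ n.divisors, barbanVehovSum (M ^ 30) (M ^ 35) k * largeVonMangoldt z (n / k) -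
        ∑ k ∈ n.divisors, barbanVehovTail M k * largeVonMangoldt z (n / k) := by
  have hone : barbanVehovSum (M ^ 30) (M ^ 35) 1 = 1 := by
    rw [barbanVehovSum_of_le (Nat.pow_lt_pow_right hM (by norm_num)) one_pos
      (Nat.one_le_pow _ _ (by omega)), if_pos rfl]
  rw [← sum_sub_distrib, sum_eq_single_of_mem 1 (Nat.one_mem_divisors.2 hn.ne')]
  · simp [barbanVehovTail, hone]
  · intro k _ hk
    rw [barbanVehovTail, if_neg hk, sub_self]

lemma sum_Ioc_sum_Ioc_eq_sum_divisors {F : ℕ → ℕ → ℝ} (hF : ∀ k j, N < k * j → F k j = 0) :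
    ∑ k ∈ Ioc 0 N, ∑ j ∈ Ioc 0 N, F k j = ∑ n ∈ Ioc 0 N, ∑ k ∈ n.divisors, F k (n / k) := by
  have hmaps : ∀ p ∈ {p ∈ Ioc 0 N ×ˢ Ioc 0 N | p.1 * p.2 ≤ N}, p.1 * p.2 ∈ Ioc 0 N := by
    intro p hp
    simp only [mem_filter, mem_product, mem_Ioc] at hp
    exact mem_Ioc.2 ⟨Nat.mul_pos hp.1.1.1 hp.1.2.1, hp.2⟩
  rw [← sum_product', ← sum_filter_of_ne fun p _ hp => not_lt.1 fun h => hp (hF p.1 p.2 h),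
    ← sum_fiberwise_of_maps_to hmaps]
  refine sum_congr rfl fun n hn => ?_
  rw [← Nat.sum_divisorsAntidiagonal]
  refine sum_congr (ext fun p => ?_) fun _ _ => rfl
  simp only [mem_filter, mem_product, mem_Ioc, Nat.mem_divisorsAntidiagonal]
  obtain ⟨hn0, hnN⟩ := mem_Ioc.1 hn
  refine ⟨fun h => ⟨h.2, hn0.ne'⟩, fun ⟨h, _⟩ => ?_⟩
  have hpos : 0 < p.1 * p.2 := h ▸ hn0
  have h1 := Nat.pos_of_mul_pos_right hpos
  have h2 := Nat.pos_of_mul_pos_left hpos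
  have hle : p.1 * p.2 ≤ N := h ▸ hnN
  exact ⟨⟨⟨⟨h1, (Nat.le_mul_of_pos_right _ h2).trans hle⟩,
    ⟨h2, (Nat.le_mul_of_pos_left _ h1).trans hle⟩⟩, hle⟩, h⟩

lemma logTent_pow_eq_zero (hM : 0 < M) (hn : M ^ 100 ≤ n) : logTent (M ^ 100 / 16) n = 0 :=
  logTent_eq_zero_of_ge (by positivity) (by
    rw [mul_div_cancel₀ _ (by norm_num)]
    exact_mod_cast hn)

lemma typeIISum_eq_sum_divisors [NeZero D] (hM : 0 < M) :
    typeIISum M D = ∑ n ∈ Ioc 0 (M ^ 100), (logTent (M ^ 100 / 16) n *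
      ∑ k ∈ n.divisors, barbanVehovTail M k * largeVonMangoldt (M ^ 35) (n / k)) *
        centeredInd (1 : (ZMod D)ˣ) n := by
  rw [typeIISum, sum_Ioc_sum_Ioc_eq_sum_divisors fun k j h => by
    rw [logTent_pow_eq_zero hM h.le, mul_zero]]
  refine sum_congr rfl fun n _ => ?_
  rw [mul_sum, sum_mul]
  refine sum_congr rfl fun k hk => ?_
  rw [Nat.mul_div_cancel' (Nat.dvd_of_mem_divisors hk)]
  ring

lemma abs_sum_add_typeIISum_le [NeZero D] (hM : 16 ≤ M) :
    |∑ n ∈ Ioc 0 (M ^ 100), logTent (M ^ 100 / 16) n * largeVonMangoldt (M ^ 35) n *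
        centeredInd (1 : (ZMod D)ˣ) n + typeIISum M D| ≤ (M : ℝ) ^ 77 := by
  set F : ℕ → ℝ := fun n => (logTent (M ^ 100 / 16) n * ∑ k ∈ n.divisors,
    barbanVehovSum (M ^ 30) (M ^ 35) k * largeVonMangoldt (M ^ 35) (n / k)) *
      centeredInd (1 : (ZMod D)ˣ) n with hF
  have hend : F (M ^ 100) = 0 := by simp [hF, logTent_pow_eq_zero (by omega : 0 < M) le_rfl]
  have hzero : F 0 = 0 := by simp [hF]
  have hsum : ∑ n ∈ range (M ^ 100), F n = ∑ n ∈ Ioc 0 (M ^ 100), F n := by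
    rw [← add_zero (∑ n ∈ range (M ^ 100), F n), ← hend, ← sum_range_succ,
      Nat.range_succ_eq_Icc_zero, ← add_sum_Ioc_eq_sum_Icc (Nat.zero_le _), hzero, zero_add]
  convert (discrepancyLE_typeI hM).abs_sum_mul_centeredInd_le (1 : (ZMod D)ˣ) using 2
  rw [hsum, typeIISum_eq_sum_divisors (by omega), ← sum_add_distrib]
  refine sum_congr rfl fun n hn => ?_
  have hsplit := largeVonMangoldt_eq_sum_sub_sum (M := M) (by omega) (mem_Ioc.1 hn).1 (M ^ 35)
  simp only [hF]
  rw [hsplit]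
  ring

lemma log_sixteen_mul_psi_sub_theta_le (hM : 16 ≤ M) :
    Real.log 16 * (Chebyshev.psi (M ^ 100 : ℕ) - Chebyshev.theta (M ^ 100 : ℕ)) ≤
      (M : ℝ) ^ 54 := by
  have hM' : (16 : ℝ) ≤ M := mod_cast hM
  have hlog : Real.log M ≤ M := Real.log_le_self (by linarith)
  have hlog16 : Real.log 16 ≤ M := (Real.log_le_log (by norm_num) hM').trans hlog
  have hsqrt : √((M : ℝ) ^ 100) = M ^ 50 := by
    rw [show (M : ℝ) ^ 100 = (M ^ 50) ^ 2 by ring, Real.sqrt_sq (by positivity)]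
  have hdiff := Chebyshev.psi_sub_theta_le (one_le_pow₀ (by linarith) : (1 : ℝ) ≤ M ^ 100)
  rw [hsqrt, Real.log_pow, Nat.cast_ofNat] at hdiff
  rw [Nat.cast_pow]
  calc
    _ ≤ Real.log 16 * (2 * M ^ 50 * (100 * Real.log M)) := by gcongr
    _ ≤ (M : ℝ) * (2 * M ^ 50 * (100 * M)) := by gcongr
    _ = 200 * (M : ℝ) ^ 52 := by ring
    _ ≤ (M : ℝ) ^ 2 * M ^ 52 := by
      gcongr
      nlinarith
    _ = (M : ℝ) ^ 54 := by ring

lemma eventually_le_totient_mul_abs_typeIISum :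
    ∀ᶠ M : ℕ in atTop, ∀ D : ℕ, [NeZero D] → D ≤ M ^ 12 →
      (∀ q : ℕ, q.Prime → q ≤ M ^ 100 → (q : ZMod D) ≠ 1) →
        (M : ℝ) ^ 100 / 32 ≤ D.totient * |typeIISum M D| := by
  have hy : Tendsto (fun M : ℕ => (M : ℝ) ^ 100 / 16) atTop atTop :=
    ((tendsto_pow_atTop (by norm_num)).comp tendsto_natCast_atTop_atTop).atTop_div_const
      (by norm_num)
  filter_upwards [hy.eventually eventually_le_theta_sub_theta, eventually_ge_atTop 16]
    with M hθ hM D _ hD hno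
  have hM' : (16 : ℝ) ≤ M := mod_cast hM
  have hM1 : (1 : ℝ) ≤ M := by linarith
  have hy0 : (0 : ℝ) < M ^ 100 / 16 := by positivity
  have hsmall {k : ℕ} (hk : k ≤ 98) : (M : ℝ) ^ k ≤ M ^ 100 / 16 / 4 := by
    calc (M : ℝ) ^ k ≤ M ^ 98 := pow_le_pow_right₀ hM1 hk
      _ ≤ M ^ 100 / 16 / 4 := by
        rw [div_div, le_div_iff₀ (by norm_num), pow_add (M : ℝ) 98 2]
        gcongr
        nlinarith
  have hD' : (D : ℝ) ≤ M ^ 12 := mod_cast hD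
  have hφ : (D.totient : ℝ) ≤ M ^ 12 := (Nat.cast_le.2 D.totient_le).trans hD'
  have hφ0 : (0 : ℝ) < D.totient := mod_cast Nat.totient_pos.2 (NeZero.pos D)
  have hlower := hθ.trans <| theta_sub_theta_le_sum_logTent_mul_largeVonMangoldt hy0
    (hD'.trans (hsmall (by norm_num))) (z := M ^ 35) (N := M ^ 100)
    (by exact_mod_cast hsmall (k := 35) (by norm_num)) (by push_cast; linarith)
  have hupper := (sum_logTent_mul_largeVonMangoldt_mul_residueInd_le (z := M ^ 35) hy0 hno).trans
    (log_sixteen_mul_psi_sub_theta_le hM)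
  have hmain := (abs_le.1 (abs_sum_add_typeIISum_le (D := D) hM)).1
  rw [sum_mul_centeredInd_one] at hmain
  set E := ∑ n ∈ Ioc 0 (M ^ 100),
    if n.Coprime D then logTent (M ^ 100 / 16) n * largeVonMangoldt (M ^ 35) n else 0
  have hinv : (D.totient : ℝ)⁻¹ * E ≤ |typeIISum M D| + 2 * M ^ 77 := by
    have hpow : (M : ℝ) ^ 54 ≤ M ^ 77 := pow_le_pow_right₀ hM1 (by norm_num)
    linarith [le_abs_self (typeIISum M D)]
  rw [inv_mul_le_iff₀ hφ0, mul_add] at hinv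
  have herror : D.totient * (2 * (M : ℝ) ^ 77) ≤ M ^ 100 / 32 := by
    calc D.totient * (2 * (M : ℝ) ^ 77) ≤ M ^ 12 * (2 * M ^ 77) := by gcongr
      _ = 2 * (M : ℝ) ^ 89 := by ring
      _ ≤ M ^ 100 / 32 := by linarith [hsmall (k := 89) (by norm_num)]
  linarith

lemma IsCoprimeFamily.eventually_exists_prime_modEq_one :
    ∀ᶠ M : ℕ in atTop, ∀ {ι : Type*} [Fintype ι] {D : ι → ℕ} [∀ i, NeZero (D i)],
      IsCoprimeFamily M D → Real.log M ^ (3 / 4 : ℝ) ≤ Fintype.card ι →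
        ∃ i, ∃ q : ℕ, q.Prime ∧ q ≤ M ^ 100 ∧ q ≡ 1 [MOD D i] := by
  obtain ⟨C, hTypeII⟩ := IsCoprimeFamily.exists_eventually_sum_totient_mul_abs_typeIISum_le
  have hgrowth : Tendsto (fun M : ℕ => Real.log M ^ (1 / 4 : ℝ)) atTop atTop :=
    (tendsto_rpow_atTop (by norm_num)).comp
      (Real.tendsto_log_atTop.comp tendsto_natCast_atTop_atTop)
  filter_upwards [hTypeII, eventually_le_totient_mul_abs_typeIISum,
    hgrowth.eventually_gt_atTop (32 * C), eventually_ge_atTop 2]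
    with M hTypeII hmod hlarge hM ι _ D _ hD hcard
  have hM' : (2 : ℝ) ≤ M := mod_cast hM
  have hlog : 0 < Real.log M := Real.log_pos (by linarith)
  by_contra! hno
  have hlower : Fintype.card ι * ((M : ℝ) ^ 100 / 32) ≤ C * M ^ 100 * √(Real.log M) := by
    rw [← nsmul_eq_mul, ← card_univ, ← sum_const]
    refine (sum_le_sum fun i _ => hmod (D i) (hD.le_pow i) fun q hq hqM h => ?_).trans (hTypeII hD)
    exact hno i q hq hqM ((ZMod.natCast_eq_natCast_iff _ _ _).1 (by rw [h, Nat.cast_one]))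
  have hsplit : Real.log M ^ (3 / 4 : ℝ) = Real.log M ^ (1 / 4 : ℝ) * √(Real.log M) := by
    rw [Real.sqrt_eq_rpow, ← Real.rpow_add hlog]
    norm_num
  have hpow : (0 : ℝ) < M ^ 100 / 32 := by positivity
  have hlt : 32 * C * √(Real.log M) < Fintype.card ι :=
    (mul_lt_mul_of_pos_right hlarge (Real.sqrt_pos.2 hlog)).trans_le (hsplit.symm.trans_le hcard)
  linarith [mul_lt_mul_of_pos_right hlt hpow]

end PrimeInClass

section LucasSequence

/-- The Lucas sequence `0, 1, a, a ^ 2 + b, …`, with characteristic polynomial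
`X ^ 2 - a * X - b`. -/
def lucasU {R : Type*} [CommRing R] (a b : R) : ℕ → R
  | 0 => 0
  | 1 => 1
  | n + 2 => a * lucasU a b (n + 1) + b * lucasU a b n

section CommRing

variable {R : Type*} [CommRing R] (a b : R)

@[simp] lemma lucasU_zero : lucasU a b 0 = 0 := rfl

@[simp] lemma lucasU_one : lucasU a b 1 = 1 := rfl

lemma lucasU_add_two (n : ℕ) :
    lucasU a b (n + 2) = a * lucasU a b (n + 1) + b * lucasU a b n := rfl

lemma eq_lucasU {u : ℕ → R} (hu0 : u 0 = 0) (hu1 : u 1 = 1)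
    (hrec : ∀ n, u (n + 2) = a * u (n + 1) + b * u n) : u = lucasU a b := by
  funext n
  induction n using Nat.twoStepInduction with
  | zero => exact hu0
  | one => exact hu1
  | more n ih₀ ih₁ => rw [hrec, ih₀, ih₁, lucasU_add_two]

lemma lucasU_add (m n : ℕ) : lucasU a b (m + n + 1) =
    lucasU a b (m + 1) * lucasU a b (n + 1) + b * lucasU a b m * lucasU a b n := by
  induction n using Nat.twoStepInduction with
  | zero => simp
  | one => simp [lucasU_add_two, mul_comm]
  | more n ih₀ ih₁ =>
    rw [show m + (n + 2) + 1 = m + n + 1 + 2 by ring, lucasU_add_two _ _ (m + n + 1), ih₀,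
      show m + n + 1 + 1 = m + (n + 1) + 1 by ring, ih₁, lucasU_add_two _ _ n,
      show n + 2 + 1 = n + 1 + 2 by ring, lucasU_add_two _ _ (n + 1), lucasU_add_two _ _ n]
    ring

lemma lucasU_add_mul_sub (m n : ℕ) :
    lucasU a b (m + n) * lucasU a b (m + 1) - lucasU a b (m + n + 1) * lucasU a b m =
      (-b) ^ m * lucasU a b n := by
  induction m with
  | zero => simp
  | succ m ih =>
    rw [show m + 1 + n = m + n + 1 by ring, lucasU_add_two, lucasU_add_two, pow_succ,
      mul_right_comm, ← ih]
    ring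

lemma lucasU_dvd {m n : ℕ} (h : m ∣ n) : lucasU a b m ∣ lucasU a b n := by
  obtain ⟨k, rfl⟩ := h
  induction k with
  | zero => simp
  | succ k ih =>
    obtain rfl | m := m
    · simp
    · rw [show (m + 1) * (k + 1) = (m + 1) * k + m + 1 by ring, lucasU_add]
      exact dvd_add (dvd_mul_left _ _) ((ih.mul_left _).mul_right _)

lemma map_lucasU {S : Type*} [CommRing S] (f : R →+* S) (n : ℕ) :
    f (lucasU a b n) = lucasU (f a) (f b) n := by
  induction n using Nat.twoStepInduction with
  | zero => simp
  | one => simp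
  | more n ih₀ ih₁ => simp [lucasU_add_two, ih₀, ih₁]

lemma lucasU_neg_left (n : ℕ) : lucasU (-a) b n = (-1) ^ (n + 1) * lucasU a b n := by
  induction n using Nat.twoStepInduction with
  | zero => simp
  | one => simp
  | more n ih₀ ih₁ =>
    rw [lucasU_add_two, lucasU_add_two, ih₀, ih₁]
    ring

variable {a b}

lemma sub_mul_lucasU {α β : R} (hα : α ^ 2 = a * α + b) (hβ : β ^ 2 = a * β + b) (n : ℕ) :
    (α - β) * lucasU a b n = α ^ n - β ^ n := by
  induction n using Nat.twoStepInduction with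
  | zero => simp
  | one => simp
  | more n ih₀ ih₁ =>
    rw [lucasU_add_two]
    linear_combination a * ih₁ + b * ih₀ - α ^ n * hα + β ^ n * hβ

lemma isCoprime_lucasU_succ_right (h : IsCoprime a b) (n : ℕ) :
    IsCoprime (lucasU a b (n + 1)) b := by
  induction n with
  | zero => simpa using isCoprime_one_left
  | succ n ih =>
    rw [lucasU_add_two]
    exact (h.mul_left ih).add_mul_left_left _

lemma isCoprime_lucasU_lucasU_succ (h : IsCoprime a b) (n : ℕ) :
    IsCoprime (lucasU a b n) (lucasU a b (n + 1)) := by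
  induction n with
  | zero => simpa using isCoprime_one_right
  | succ n ih =>
    rw [lucasU_add_two, add_comm (a * _), mul_comm a]
    exact ((isCoprime_lucasU_succ_right h n).mul_right ih.symm).add_mul_left_right a

lemma lucasU_gcd_mem (h : IsCoprime a b) {I : Ideal R} {m n : ℕ} (hm : lucasU a b m ∈ I)
    (hn : lucasU a b n ∈ I) : lucasU a b (m.gcd n) ∈ I := by
  induction m, n using Nat.gcd.induction with
  | H0 n => simpa using hn
  | H1 m n _ ih =>
    rw [Nat.gcd_rec]
    refine ih ?_ hm
    obtain hr | ⟨r, hr⟩ : n % m = 0 ∨ ∃ r, n % m = r + 1 :=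
      (n % m).eq_zero_or_eq_succ_pred.imp_right fun h => ⟨_, h⟩
    · simp [hr]
    have hmul : lucasU a b (m * (n / m)) ∈ I :=
      I.mem_of_dvd (lucasU_dvd a b (dvd_mul_right _ _)) hm
    rw [← Nat.div_add_mod n m, hr, ← add_assoc, lucasU_add,
      I.add_mem_iff_left (I.mul_mem_right _ (I.mul_mem_left _ hmul))] at hn
    obtain ⟨x, y, hxy⟩ := isCoprime_lucasU_lucasU_succ h (m * (n / m))
    have hsplit : lucasU a b (n % m) =
        lucasU a b (n % m) * x * lucasU a b (m * (n / m)) +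
          y * (lucasU a b (m * (n / m) + 1) * lucasU a b (n % m)) := by
      linear_combination -lucasU a b (n % m) * hxy
    rw [hsplit]
    refine I.add_mem (I.mul_mem_left _ hmul) (I.mul_mem_left _ ?_)
    rwa [hr]

lemma isCoprime_lucasU (h : IsCoprime a b) {m n : ℕ} (hmn : m.Coprime n) :
    IsCoprime (lucasU a b m) (lucasU a b n) := by
  have hmem := lucasU_gcd_mem h (I := Ideal.span {lucasU a b m, lucasU a b n}) (m := m) (n := n)
    (Ideal.subset_span (by simp)) (Ideal.subset_span (by simp))
  rwa [hmn.gcd_eq_one, lucasU_one, Ideal.mem_span_pair] at hmem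

lemma companion_pow_mulVec (n : ℕ) :
    (!![a, b; 1, 0] ^ n).mulVec ![1, 0] = ![lucasU a b (n + 1), lucasU a b n] := by
  induction n with
  | zero => simp
  | succ n ih =>
    rw [pow_succ', ← Matrix.mulVec_mulVec, ih]
    ext i
    fin_cases i <;> simp [Matrix.mulVec, lucasU_add_two]

end CommRing

lemma lucasU_card_GL_eq_zero {F : Type*} [Field F] [Fintype F] {a b : F} (hb : b ≠ 0) :
    lucasU a b ((Fintype.card F ^ 2 - 1) * (Fintype.card F ^ 2 - Fintype.card F)) = 0 := by
  classical
  have hdet : (!![a, b; 1, 0]).det ≠ 0 := by simpa [Matrix.det_fin_two_of] using hb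
  have hpow := congrArg Units.val
    (pow_card_eq_one' (x := Matrix.GeneralLinearGroup.mkOfDetNeZero _ hdet))
  rw [Matrix.card_GL_field, Fin.prod_univ_two] at hpow
  have hone : !![a, b; 1, 0] ^ ((Fintype.card F ^ 2 - 1) * (Fintype.card F ^ 2 - Fintype.card F)) =
      1 := by simpa [Matrix.GeneralLinearGroup.mkOfDetNeZero] using hpow
  have hcol := companion_pow_mulVec (a := a) (b := b)
    ((Fintype.card F ^ 2 - 1) * (Fintype.card F ^ 2 - Fintype.card F))
  rw [hone, Matrix.one_mulVec] at hcol
  simpa using (congrFun hcol 1).symm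

section Int

variable {a b : ℤ} {s t : ℕ}

lemma natCast_dvd_lucasU (ht : t.Prime) (hb : ¬ (t : ℤ) ∣ b) :
    (t : ℤ) ∣ lucasU a b ((t ^ 2 - 1) * (t ^ 2 - t)) := by
  have := Fact.mk ht
  rw [← ZMod.intCast_zmod_eq_zero_iff_dvd, ← eq_intCast (Int.castRingHom (ZMod t)), map_lucasU]
  simpa [ZMod.card] using lucasU_card_GL_eq_zero (F := ZMod t) (a := a) (b := b)
    (by rwa [Ne, ZMod.intCast_zmod_eq_zero_iff_dvd])

/-- If `t ∣ u_s`, the rank of appearance of `t` divides both the prime `s` and `|GL₂(𝔽_t)|`. -/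
lemma not_dvd_lucasU_of_prime (h : IsCoprime a b) (hs : s.Prime) (ht : t.Prime)
    (hst : ¬ s ∣ (t ^ 2 - 1) * (t ^ 2 - t)) : ¬ (t : ℤ) ∣ lucasU a b s := by
  intro hdvd
  have hunit : ¬ IsUnit (t : ℤ) := by
    rw [Int.isUnit_iff_natAbs_eq, Int.natAbs_natCast]
    exact ht.ne_one
  have hb : ¬ (t : ℤ) ∣ b := fun hb => hunit <| by
    obtain ⟨r, rfl⟩ := Nat.exists_eq_succ_of_ne_zero hs.ne_zero
    exact (isCoprime_lucasU_succ_right h r).isUnit_of_dvd' hdvd hb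
  have hone := lucasU_gcd_mem h (I := Ideal.span {(t : ℤ)})
    (Ideal.mem_span_singleton.2 hdvd) (Ideal.mem_span_singleton.2 (natCast_dvd_lucasU ht hb))
  rw [(hs.coprime_iff_not_dvd.2 hst).gcd_eq_one, lucasU_one, Ideal.mem_span_singleton] at hone
  exact hunit (isUnit_of_dvd_one hone)

lemma not_dvd_card_GL_of_le_two_mul {S : ℕ} (hS : 2 ≤ S) (hs : s.Prime) (ht : t.Prime)
    (hst : s ≠ t) (hSs : S < s) (hSt : S < t) (htS : t ≤ 2 * S) :
    ¬ s ∣ (t ^ 2 - 1) * (t ^ 2 - t) := by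
  have hs_odd := hs.eq_two_or_odd.resolve_left (hS.trans_lt hSs).ne'
  have ht_odd := ht.eq_two_or_odd.resolve_left (hS.trans_lt hSt).ne'
  have hlt {m : ℕ} (hm : m ≤ 2 * S + 1) (hdvd : s ∣ m) : m = 0 ∨ m = s := by
    obtain ⟨k, rfl⟩ := hdvd
    have hk : k < 2 := by
      by_contra! hk
      nlinarith
    interval_cases k <;> simp
  rw [show t ^ 2 - 1 = (t + 1) * (t - 1) by simpa using Nat.sq_sub_sq t 1,
    show t ^ 2 - t = t * (t - 1) by rw [Nat.mul_sub, mul_one, sq]]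
  simp only [hs.dvd_mul, Nat.prime_dvd_prime_iff_eq hs ht, hst, false_or]
  rintro ((h | h) | h) <;> have := hlt (by omega) h <;> omega

lemma not_dvd_lucasU_of_le_two_mul (h : IsCoprime a b) {S : ℕ} (hS : 2 ≤ S) (hs : s.Prime)
    (ht : t.Prime) (hst : s ≠ t) (hSs : S < s) (hSt : S < t) (htS : t ≤ 2 * S) :
    ¬ (t : ℤ) ∣ lucasU a b s :=
  not_dvd_lucasU_of_prime h hs ht (not_dvd_card_GL_of_le_two_mul hS hs ht hst hSs hSt htS)

end Int

end LucasSequence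

section LucasGrowth

section LinearOrder

variable {R : Type*} [CommRing R] [LinearOrder R] [IsStrictOrderedRing R] {a b : R}

lemma lucasU_nonneg_and_mul_le (ha : 0 ≤ a) (hΔ : 0 ≤ a ^ 2 + 4 * b) (n : ℕ) :
    0 ≤ lucasU a b n ∧ a * lucasU a b n ≤ 2 * lucasU a b (n + 1) := by
  induction n with
  | zero => simp
  | succ n ih =>
    obtain ⟨hnonneg, hle⟩ := ih
    refine ⟨by linarith [mul_nonneg ha hnonneg], ?_⟩
    rw [lucasU_add_two]
    linarith [mul_le_mul_of_nonneg_left hle ha, mul_nonneg hΔ hnonneg]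

lemma abs_lucasU_abs_left (a b : R) (n : ℕ) : |lucasU |a| b n| = |lucasU a b n| := by
  obtain h | h := abs_choice a
  · rw [h]
  · rw [h, lucasU_neg_left, abs_mul, abs_neg_one_pow, one_mul]

end LinearOrder

variable {a b : ℤ}

lemma abs_lucasU_le (a b : ℤ) (n : ℕ) : |lucasU a b n| ≤ (|a| + |b| + 1) ^ n := by
  induction n using Nat.twoStepInduction with
  | zero => simp
  | one =>
    rw [lucasU_one, abs_one, pow_one]
    linarith [abs_nonneg a, abs_nonneg b]
  | more n ih₀ ih₁ =>
    set C := |a| + |b| + 1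
    have hC : 1 ≤ C := by linarith [abs_nonneg a, abs_nonneg b]
    calc
      _ ≤ |a| * |lucasU a b (n + 1)| + |b| * |lucasU a b n| := by
        rw [lucasU_add_two, ← abs_mul, ← abs_mul]
        exact abs_add_le _ _
      _ ≤ |a| * C ^ (n + 1) + |b| * C ^ (n + 1) := by
        gcongr
        exact ih₀.trans (pow_le_pow_right₀ hC n.le_succ)
      _ ≤ C * C ^ (n + 1) := by
        rw [← add_mul]
        gcongr
        omega
      _ = C ^ (n + 2) := by ring

lemma three_mul_abs_lucasU_le (ha : a ≠ 0) (hb : b ≠ 0) (hΔ : 0 < a ^ 2 + 4 * b) (n : ℕ) :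
    3 * |lucasU a b n| ≤ 2 * |lucasU a b (n + 2)| := by
  have ha' : 0 < |a| := abs_pos.2 ha
  rw [← sq_abs] at hΔ
  rw [← abs_lucasU_abs_left a, ← abs_lucasU_abs_left a]
  have hnonneg m := lucasU_nonneg_and_mul_le ha'.le hΔ.le m
  rw [abs_of_nonneg (hnonneg n).1, abs_of_nonneg (hnonneg (n + 2)).1, lucasU_add_two]
  have hcoeff : 3 ≤ |a| ^ 2 + 2 * b := by
    obtain hb | hb := hb.lt_or_gt <;> nlinarith
  nlinarith [mul_le_mul_of_nonneg_left (hnonneg n).2 ha'.le,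
    mul_le_mul_of_nonneg_right hcoeff (hnonneg n).1]

lemma three_pow_mul_abs_lucasU_le (ha : a ≠ 0) (hb : b ≠ 0) (hΔ : 0 < a ^ 2 + 4 * b) (n k : ℕ) :
    3 ^ k * |lucasU a b n| ≤ 2 ^ k * |lucasU a b (n + 2 * k)| := by
  induction k with
  | zero => simp
  | succ k ih =>
    rw [mul_add_one, ← add_assoc, pow_succ', pow_succ']
    nlinarith [three_mul_abs_lucasU_le ha hb hΔ (n + 2 * k), pow_pos (two_pos (α := ℤ)) k]

lemma sq_lucasU_le (hΔ : a ^ 2 + 4 * b < 0) (n : ℕ) : lucasU a b n ^ 2 ≤ 4 * (-b) ^ n := by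
  have hcasoratian := lucasU_add_mul_sub a b n 1
  rw [lucasU_one, mul_one, lucasU_add_two] at hcasoratian
  nlinarith [sq_nonneg (2 * lucasU a b (n + 1) - a * lucasU a b n),
    mul_nonneg (show 0 ≤ -(a ^ 2 + 4 * b) - 1 by linarith) (sq_nonneg (lucasU a b n))]

/-- The sequences with `a ^ 2 + 4 * b < 0` and `b = -1` are the periodic ones with `u₂ = 0` or
`u₃ = 0`. -/
lemma two_le_neg_of_disc_neg (hu : ∀ n : ℕ, 0 < n → lucasU a b n ≠ 0) (hΔ : a ^ 2 + 4 * b < 0) :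
    2 ≤ -b := by
  by_contra! hb
  have hu₂ := hu 2 two_pos
  have hu₃ := hu 3 three_pos
  simp only [lucasU, mul_one, mul_zero, add_zero] at hu₂ hu₃
  have hb' : b = -1 := by nlinarith [sq_nonneg a]
  have ha : a = 1 ∨ a = -1 := by
    have : -2 < a ∧ a < 2 := abs_lt.1 (abs_lt_of_sq_lt_sq (by linarith) (by norm_num))
    omega
  obtain rfl | rfl := ha <;> omega

/-- By the Casoratian identity `u_{t+r} u_{t+1} - u_{t+r+1} u_t = (-b)^t u_r`, two nearby terms
cannot both be much smaller than their typical size `|b|^{t/2}`. -/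
lemma two_pow_le_sq_add_sq (hu : ∀ n : ℕ, 0 < n → lucasU a b n ≠ 0) (hΔ : a ^ 2 + 4 * b < 0)
    {R t r : ℕ} (hr : 0 < r) (hrt : R + r < t) :
    2 ^ R ≤ 8 * (lucasU a b t ^ 2 + lucasU a b (t + r) ^ 2) := by
  set c := -b
  have hc₂ : 2 ≤ c := two_le_neg_of_disc_neg hu hΔ
  have hupper n : lucasU a b n ^ 2 ≤ 4 * c ^ n := sq_lucasU_le hΔ n
  have hone : 1 ≤ lucasU a b r ^ 2 := (one_le_sq_iff_one_le_abs _).2 (Int.one_le_abs (hu r hr))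
  have hbound : c ^ (t + r + 1) * c ^ R ≤
      c ^ (t + r + 1) * (8 * (lucasU a b t ^ 2 + lucasU a b (t + r) ^ 2)) := by
    calc c ^ (t + r + 1) * c ^ R ≤ c ^ (2 * t) := by
          rw [← pow_add]
          exact pow_le_pow_right₀ (by linarith) (by omega)
      _ ≤ c ^ (2 * t) * lucasU a b r ^ 2 := le_mul_of_one_le_right (by positivity) hone
      _ = (lucasU a b (t + r) * lucasU a b (t + 1) -
            lucasU a b (t + r + 1) * lucasU a b t) ^ 2 := by
          rw [lucasU_add_mul_sub]
          ring
      _ ≤ 2 * (lucasU a b (t + r) ^ 2 * lucasU a b (t + 1) ^ 2 +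
            lucasU a b (t + r + 1) ^ 2 * lucasU a b t ^ 2) := by
          linarith [sq_nonneg (lucasU a b (t + r) * lucasU a b (t + 1) +
            lucasU a b (t + r + 1) * lucasU a b t)]
      _ ≤ 2 * (lucasU a b (t + r) ^ 2 * (4 * c ^ (t + r + 1)) +
            4 * c ^ (t + r + 1) * lucasU a b t ^ 2) := by
          have hmono : c ^ (t + 1) ≤ c ^ (t + r + 1) := pow_le_pow_right₀ (by linarith) (by omega)
          gcongr
          exacts [(hupper _).trans (by gcongr), hupper _]
      _ = c ^ (t + r + 1) * (8 * (lucasU a b t ^ 2 + lucasU a b (t + r) ^ 2)) := by ring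
  exact (pow_le_pow_left₀ two_pos.le hc₂ R).trans (le_of_mul_le_mul_left hbound (by positivity))

lemma five_fourths_pow_le_abs_or (hu : ∀ n : ℕ, 0 < n → lucasU a b n ≠ 0)
    (hΔ : a ^ 2 + 4 * b < 0) {R t r : ℕ} (hR : 12 ≤ R) (hr : 0 < r) (hrt : R + r < t) :
    (5 / 4 : ℝ) ^ R ≤ |((lucasU a b t : ℤ) : ℝ)| ∨
      (5 / 4 : ℝ) ^ R ≤ |((lucasU a b (t + r) : ℤ) : ℝ)| := by
  by_contra! hsmall
  set K : ℝ := (25 / 16) ^ R with hK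
  have hsq {x : ℝ} (hx : |x| < (5 / 4) ^ R) : x ^ 2 ≤ K := by
    rw [← sq_abs, hK, show (25 / 16 : ℝ) = (5 / 4) ^ 2 by norm_num, ← pow_mul, mul_comm, pow_mul]
    gcongr
  have hlower : (2 : ℝ) ^ R ≤
      8 * (((lucasU a b t : ℤ) : ℝ) ^ 2 + ((lucasU a b (t + r) : ℤ) : ℝ) ^ 2) :=
    mod_cast two_pow_le_sq_add_sq hu hΔ hr hrt
  have hratio : (16 : ℝ) < (32 / 25) ^ R :=
    (by norm_num : (16 : ℝ) < (32 / 25) ^ 12).trans_le (pow_le_pow_right₀ (by norm_num) hR)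
  have hlt : 16 * K < 2 ^ R := by
    calc 16 * K < (32 / 25) ^ R * K := by gcongr
      _ = 2 ^ R := by
          rw [hK, ← mul_pow]
          norm_num
  linarith [hsq hsmall.1, hsq hsmall.2]

lemma five_fourths_pow_le_abs_lucasU (hu : ∀ n : ℕ, 0 < n → lucasU a b n ≠ 0) (hb : b ≠ 0)
    (hΔ : 0 < a ^ 2 + 4 * b) {R t : ℕ} (ht : 2 * R < t) :
    (5 / 4 : ℝ) ^ R ≤ |((lucasU a b t : ℤ) : ℝ)| := by
  have ha : a ≠ 0 := by simpa [lucasU] using hu 2 two_pos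
  have hpow := three_pow_mul_abs_lucasU_le ha hb hΔ (t - 2 * R) R
  rw [Nat.sub_add_cancel ht.le] at hpow
  have hone : 1 ≤ |lucasU a b (t - 2 * R)| := Int.one_le_abs (hu _ (by omega))
  have hle : (3 : ℝ) ^ R ≤ 2 ^ R * |((lucasU a b t : ℤ) : ℝ)| := by
    exact_mod_cast (le_mul_of_one_le_right (by positivity) hone).trans hpow
  calc (5 / 4 : ℝ) ^ R ≤ (3 / 2) ^ R := pow_le_pow_left₀ (by norm_num) (by norm_num) R
    _ ≤ |((lucasU a b t : ℤ) : ℝ)| := by rwa [div_pow, div_le_iff₀' (by positivity)]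

lemma card_abs_lucasU_lt_le_two (hu : ∀ n : ℕ, 0 < n → lucasU a b n ≠ 0) (hb : b ≠ 0)
    (hΔ : a ^ 2 + 4 * b ≠ 0) {R : ℕ} (hR : 12 ≤ R) :
    #{t ∈ Ioc (2 * R) (4 * R) | |((lucasU a b t : ℤ) : ℝ)| < (5 / 4 : ℝ) ^ R} ≤ 2 := by
  obtain hΔ | hΔ := hΔ.lt_or_gt
  · have hclose {t s : ℕ} (ht : 2 * R < t) (hts : t < s) (hsR : s ≤ t + R)
        (hut : |((lucasU a b t : ℤ) : ℝ)| < (5 / 4) ^ R) :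
        (5 / 4) ^ R ≤ |((lucasU a b s : ℤ) : ℝ)| := by
      obtain ⟨r, rfl⟩ := Nat.exists_eq_add_of_lt hts
      exact (five_fourths_pow_le_abs_or hu hΔ hR r.succ_pos (by omega)).resolve_left hut.not_ge
    refine (card_le_card_of_injOn (t := univ) (fun t => decide (t ≤ 3 * R))
      (fun _ _ => mem_coe.2 (mem_univ _)) fun t ht s hs hts => ?_).trans_eq Fintype.card_bool
    simp only [coe_filter, Set.mem_ofPred_eq, mem_Ioc, decide_eq_decide] at ht hs hts
    obtain hlt | rfl | hlt := lt_trichotomy t s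
    · exact absurd hs.2 (hclose ht.1.1 hlt (by omega) ht.2).not_gt
    · rfl
    · exact absurd ht.2 (hclose hs.1.1 hlt (by omega) hs.2).not_gt
  · rw [filter_false_of_mem fun t ht => ?_, card_empty]
    · exact two_pos.le
    · exact (five_fourths_pow_le_abs_lucasU hu hb hΔ (mem_Ioc.1 ht).1).not_gt

lemma lucasU_ne_zero (hb : b ≠ 0) (hΔ : a ^ 2 + 4 * b ≠ 0)
    (hnd : ∀ α β : ℂ, α ^ 2 = a * α + b → β ^ 2 = a * β + b → α ≠ β →
      ∀ k : ℕ, 0 < k → (α / β) ^ k ≠ 1) {n : ℕ} (hn : 0 < n) : lucasU a b n ≠ 0 := by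
  intro hzero
  obtain ⟨δ, hδ⟩ : ∃ δ : ℂ, δ ^ 2 = (a : ℂ) ^ 2 + 4 * b :=
    IsAlgClosed.exists_pow_nat_eq _ two_pos
  have hδ₀ : δ ≠ 0 := by
    rintro rfl
    exact hΔ (by exact_mod_cast hδ.symm.trans (zero_pow two_ne_zero))
  have hα : (((a : ℂ) + δ) / 2) ^ 2 = a * (((a : ℂ) + δ) / 2) + b := by linear_combination hδ / 4
  have hβ : (((a : ℂ) - δ) / 2) ^ 2 = a * (((a : ℂ) - δ) / 2) + b := by linear_combination hδ / 4
  have hβ₀ : ((a : ℂ) - δ) / 2 ≠ 0 := fun h => hb <| by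
    rw [h] at hβ
    exact_mod_cast (show (b : ℂ) = 0 by linear_combination -hβ)
  have hne : ((a : ℂ) + δ) / 2 ≠ ((a : ℂ) - δ) / 2 := fun h => hδ₀ (by linear_combination h)
  have hbinet := sub_mul_lucasU hα hβ n
  have hcast : lucasU (a : ℂ) b n = 0 := by
    simpa [hzero] using (map_lucasU a b (Int.castRingHom ℂ) n).symm
  rw [hcast, mul_zero] at hbinet
  refine hnd _ _ hα hβ hne n hn ?_
  rw [div_pow, div_eq_one_iff_eq (pow_ne_zero n hβ₀)]
  exact (sub_eq_zero.1 hbinet.symm)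

end LucasGrowth

section PrimeBlocks

open Filter

lemma eventually_exists_two_mul_le_theta_sub_theta : ∀ᶠ n : ℕ in atTop, ∃ R : ℕ,
    n ≤ R ∧ R ≤ 8 * n ∧
      2 * n ≤ Chebyshev.theta (4 * R : ℕ) - Chebyshev.theta (2 * R : ℕ) := by
  have htendsto : Tendsto (fun n : ℕ => 8 * (n : ℝ)) atTop atTop :=
    tendsto_natCast_atTop_atTop.const_mul_atTop (by norm_num)
  filter_upwards [htendsto.eventually eventually_le_theta_sub_theta] with n hn
  by_contra! hlt
  have h₁ := hlt n le_rfl (by omega)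
  have h₂ := hlt (2 * n) (by omega) (by omega)
  have h₃ := hlt (4 * n) (by omega) (by omega)
  have h₄ := hlt (8 * n) (by omega) le_rfl
  push_cast at h₁ h₂ h₃ h₄
  ring_nf at hn h₁ h₂ h₃ h₄
  linarith

lemma theta_sub_theta_le_card_mul_log {m n : ℕ} (h : m ≤ n) :
    Chebyshev.theta n - Chebyshev.theta m ≤ #{t ∈ Ioc m n | t.Prime} * Real.log n := by
  rw [theta_sub_theta_eq_sum (Nat.cast_le.2 h), Nat.floor_natCast, Nat.floor_natCast,
    ← nsmul_eq_mul]
  refine sum_le_card_nsmul _ _ _ fun p hp => ?_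
  obtain ⟨hIoc, hp⟩ := mem_filter.1 hp
  exact Real.log_le_log (mod_cast hp.pos) (mod_cast (mem_Ioc.1 hIoc).2)

lemma eventually_exists_rpow_le_card_primes {K : ℝ} (hK : 0 ≤ K) : ∀ᶠ n : ℕ in atTop, ∃ R : ℕ,
    n ≤ R ∧ R ≤ 8 * n ∧
      K * (n : ℝ) ^ (3 / 4 : ℝ) + 2 ≤ #{t ∈ Ioc (2 * R) (4 * R) | t.Prime} := by
  have hlog : ∀ᶠ n : ℕ in atTop, ‖Real.log n‖ ≤ (K + 2)⁻¹ * ‖(n : ℝ) ^ (1 / 4 : ℝ)‖ :=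
    tendsto_natCast_atTop_atTop.eventually <|
      (isLittleO_log_rpow_atTop (by norm_num)).bound (by positivity)
  filter_upwards [eventually_exists_two_mul_le_theta_sub_theta, hlog, eventually_ge_atTop 32]
    with n ⟨R, hnR, hRn, hθ⟩ hlog hn
  refine ⟨R, hnR, hRn, ?_⟩
  have hn₁ : (1 : ℝ) ≤ n := mod_cast (by omega : 1 ≤ n)
  have hn₀ : (0 : ℝ) < n := by linarith
  rw [Real.norm_of_nonneg (Real.log_natCast_nonneg n), Real.norm_of_nonneg (by positivity)] at hlog
  set N : ℝ := ((#{t ∈ Ioc (2 * R) (4 * R) | t.Prime} : ℕ) : ℝ)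
  have hlogR : Real.log (4 * R : ℕ) ≤ 2 * Real.log n := by
    rw [← Nat.cast_two, ← Real.log_pow]
    refine Real.log_le_log (mod_cast (by omega : 0 < 4 * R)) ?_
    exact_mod_cast (by nlinarith : 4 * R ≤ n ^ 2)
  have hpow : (n : ℝ) ^ (3 / 4 : ℝ) * (n : ℝ) ^ (1 / 4 : ℝ) = n := by
    rw [← Real.rpow_add hn₀, show (3 / 4 + 1 / 4 : ℝ) = 1 by norm_num, Real.rpow_one]
  have hcount : (K + 2) * (n : ℝ) ^ (3 / 4 : ℝ) ≤ N := by
    have hN : 2 * n ≤ N * (2 * ((K + 2)⁻¹ * (n : ℝ) ^ (1 / 4 : ℝ))) :=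
      calc 2 * (n : ℝ) ≤ N * Real.log (4 * R : ℕ) :=
            hθ.trans (theta_sub_theta_le_card_mul_log (by omega))
        _ ≤ N * (2 * ((K + 2)⁻¹ * (n : ℝ) ^ (1 / 4 : ℝ))) := by
            gcongr
            linarith
    refine le_of_mul_le_mul_right ?_
      (by positivity : 0 < 2 * ((K + 2)⁻¹ * (n : ℝ) ^ (1 / 4 : ℝ)))
    calc _ = 2 * ((n : ℝ) ^ (3 / 4 : ℝ) * (n : ℝ) ^ (1 / 4 : ℝ)) := by field_simp
      _ = 2 * n := by rw [hpow]
      _ ≤ _ := hN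
  linarith [Real.one_le_rpow hn₁ (by norm_num : (0 : ℝ) ≤ 3 / 4)]

end PrimeBlocks

section Grouping

variable {α : Type*} {ω : α → ℝ} {A h : ℝ} {P : Finset α}

lemma exists_subset_sum_mem_Icc (hA : 0 ≤ A) (hh : 0 ≤ h) (hω : ∀ t ∈ P, ω t ≤ h)
    (hP : A ≤ ∑ t ∈ P, ω t) : ∃ Q ⊆ P, ∑ t ∈ Q, ω t ∈ Set.Icc A (A + h) := by
  classical
  induction P using Finset.induction_on with
  | empty => exact ⟨∅, Subset.rfl, hP, by simpa using add_nonneg hA hh⟩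
  | insert s P hs ih =>
    by_cases hAP : A ≤ ∑ t ∈ P, ω t
    · obtain ⟨Q, hQP, hQ⟩ := ih (fun t ht => hω t (mem_insert_of_mem ht)) hAP
      exact ⟨Q, hQP.trans (subset_insert s P), hQ⟩
    · refine ⟨insert s P, Subset.rfl, hP, ?_⟩
      rw [sum_insert hs]
      linarith [hω s (mem_insert_self s P)]

lemma exists_pairwise_disjoint_sum_mem_Icc (hA : 0 ≤ A) (hh : 0 ≤ h) (k : ℕ)
    (hω : ∀ t ∈ P, ω t ≤ h) (hP : k * (A + h) ≤ ∑ t ∈ P, ω t) :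
    ∃ g : Fin k → Finset α, Pairwise (fun i j => Disjoint (g i) (g j)) ∧
      ∀ i, g i ⊆ P ∧ ∑ t ∈ g i, ω t ∈ Set.Icc A (A + h) := by
  classical
  induction k generalizing P with
  | zero => exact ⟨Fin.elim0, fun i => i.elim0, fun i => i.elim0⟩
  | succ k ih =>
    push_cast at hP
    obtain ⟨Q, hQP, hQ⟩ := exists_subset_sum_mem_Icc hA hh hω
      (by linarith [mul_nonneg k.cast_nonneg (add_nonneg hA hh)])
    obtain ⟨g, hdisj, hg⟩ := ih (P := P \ Q) (fun t ht => hω t (mem_sdiff.1 ht).1)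
      (by linarith [sum_sdiff (f := ω) hQP, hQ.2])
    have hQg i : Disjoint Q (g i) := disjoint_of_subset_right (hg i).1 disjoint_sdiff
    refine ⟨Fin.cons Q g, ?_, ?_⟩
    · rw [pairwise_fin_succ_iff]
      exact ⟨fun i => (hQg i).symm, hQg, hdisj⟩
    · rw [Fin.forall_fin_succ]
      exact ⟨⟨hQP, hQ⟩, fun i => ⟨(hg i).1.trans sdiff_subset, (hg i).2⟩⟩

end Grouping

section LucasModulus

variable {a b : ℤ} {M S : ℕ} {P Q Q' : Finset ℕ}

/-- The modulus `∏ t |u_t|`, over `t ∈ Q`, attached to a set `Q` of indices of the Lucas sequence: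
its multiples `n` are multiples both of the `u_t` and of the `t`, so that `u_t ∣ gcd(n, u_n)`. -/
def lucasModulus (a b : ℤ) (Q : Finset ℕ) : ℕ := ∏ t ∈ Q, t * (lucasU a b t).natAbs

lemma prod_natAbs_lucasU_le_gu (hab : IsCoprime a b) (hQ : ∀ t ∈ Q, t.Prime) {n : ℕ} (hn : 0 < n)
    (hdvd : lucasModulus a b Q ∣ n) : ∏ t ∈ Q, (lucasU a b t).natAbs ≤ gu (lucasU a b) n := by
  have hdvd_left : ∏ t ∈ Q, (lucasU a b t).natAbs ∣ n :=
    (prod_dvd_prod_of_dvd _ _ fun t _ => dvd_mul_left _ t).trans hdvd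
  have hdvd_right : ∏ t ∈ Q, lucasU a b t ∣ lucasU a b n := by
    refine prod_dvd_of_coprime (fun s hs t ht hst => ?_) fun t ht => ?_
    · exact isCoprime_lucasU hab ((Nat.coprime_primes (hQ s hs) (hQ t ht)).2 hst)
    · exact lucasU_dvd a b (((dvd_mul_right t _).trans
        (dvd_prod_of_mem (fun t => t * (lucasU a b t).natAbs) ht)).trans hdvd)
  refine Nat.le_of_dvd (Int.gcd_pos_of_ne_zero_left _ (mod_cast hn.ne')) <|
    Nat.dvd_gcd hdvd_left ?_
  rw [show ∏ t ∈ Q, (lucasU a b t).natAbs = (∏ t ∈ Q, lucasU a b t).natAbs from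
    (map_prod Int.natAbsHom _ Q).symm]
  exact Int.natAbs_dvd_natAbs.2 hdvd_right

/-- Sets of primes `t` in the dyadic interval `(S, 2S]` whose modulus is at most `M ^ 12`, while the
part `∏ |u_t|` of it that enters the gcd is at least `M ^ 10`. -/
structure IsAdmissible (a b : ℤ) (M S : ℕ) (Q : Finset ℕ) : Prop where
  prime : ∀ t ∈ Q, t.Prime
  lt : ∀ t ∈ Q, S < t
  le : ∀ t ∈ Q, t ≤ 2 * S
  pow_le : M ^ 10 ≤ ∏ t ∈ Q, (lucasU a b t).natAbs
  modulus_le : lucasModulus a b Q ≤ M ^ 12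

namespace IsAdmissible

lemma coprime_lucasU (hab : IsCoprime a b) (hS : 2 ≤ S) (hQ : IsAdmissible a b M S Q)
    (hQ' : IsAdmissible a b M S Q') {s t : ℕ} (hs : s ∈ Q) (ht : t ∈ Q') (hst : s ≠ t) :
    t.Coprime (lucasU a b s).natAbs := by
  rw [(hQ'.prime t ht).coprime_iff_not_dvd, ← Int.natCast_dvd]
  exact not_dvd_lucasU_of_le_two_mul hab hS (hQ.prime s hs) (hQ'.prime t ht) hst (hQ.lt s hs)
    (hQ'.lt t ht) (hQ'.le t ht)

lemma coprime_lucasModulus (hab : IsCoprime a b) (hS : 2 ≤ S) (hQ : IsAdmissible a b M S Q)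
    (hQ' : IsAdmissible a b M S Q') (hdisj : Disjoint Q Q') :
    (lucasModulus a b Q).Coprime (lucasModulus a b Q') := by
  refine Nat.Coprime.prod_left fun s hs => Nat.Coprime.prod_right fun t ht => ?_
  have hst : s ≠ t := fun h => disjoint_left.1 hdisj hs (h ▸ ht)
  have hcop : s.Coprime t := (Nat.coprime_primes (hQ.prime s hs) (hQ'.prime t ht)).2 hst
  exact Nat.Coprime.mul_left
    (hcop.mul_right (hQ'.coprime_lucasU hab hS hQ ht hs hst.symm))
    ((hQ.coprime_lucasU hab hS hQ' hs ht hst).symm.mul_right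
      (Int.isCoprime_iff_gcd_eq_one.1 (isCoprime_lucasU hab hcop)))

end IsAdmissible

lemma cast_prod_natAbs_lucasU (a b : ℤ) (Q : Finset ℕ) :
    ((∏ t ∈ Q, (lucasU a b t).natAbs : ℕ) : ℝ) = ∏ t ∈ Q, |((lucasU a b t : ℤ) : ℝ)| := by
  push_cast [Nat.cast_natAbs]
  rfl

lemma log_lucasModulus (hQ : ∀ t ∈ Q, t.Prime) (hu : ∀ n : ℕ, 0 < n → lucasU a b n ≠ 0) :
    Real.log (lucasModulus a b Q) =
      ∑ t ∈ Q, (Real.log t + Real.log |((lucasU a b t : ℤ) : ℝ)|) := by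
  have hne : ∀ t ∈ Q, (t : ℝ) ≠ 0 ∧ |((lucasU a b t : ℤ) : ℝ)| ≠ 0 := fun t ht =>
    ⟨mod_cast (hQ t ht).ne_zero, abs_ne_zero.2 (mod_cast hu t (hQ t ht).pos)⟩
  rw [lucasModulus, Nat.cast_prod, Real.log_prod fun t ht => ?_]
  · refine sum_congr rfl fun t ht => ?_
    rw [Nat.cast_mul, Nat.cast_natAbs, Int.cast_abs, Real.log_mul (hne t ht).1 (hne t ht).2]
  · rw [Nat.cast_mul, Nat.cast_natAbs, Int.cast_abs]
    exact mul_ne_zero (hne t ht).1 (hne t ht).2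

lemma isAdmissible_of_sum_log_mem_Icc (hu : ∀ n : ℕ, 0 < n → lucasU a b n ≠ 0) (hM : 0 < M)
    (hprime : ∀ t ∈ Q, t.Prime) (hlt : ∀ t ∈ Q, S < t) (hle : ∀ t ∈ Q, t ≤ 2 * S)
    (hlog : ∀ t ∈ Q, 7 * Real.log t ≤ Real.log |((lucasU a b t : ℤ) : ℝ)|)
    (hsum : ∑ t ∈ Q, Real.log |((lucasU a b t : ℤ) : ℝ)| ∈
      Set.Icc (10 * Real.log M) (10 * Real.log M + Real.log M / 2)) :
    IsAdmissible a b M S Q := by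
  have hpos : ∀ t ∈ Q, 0 < (lucasU a b t).natAbs := fun t ht =>
    Int.natAbs_pos.2 (hu t (hprime t ht).pos)
  refine ⟨hprime, hlt, hle, ?_, ?_⟩
  · rw [← Nat.cast_le (α := ℝ), ← Real.log_le_log_iff (mod_cast pow_pos hM 10)
      (mod_cast prod_pos hpos), cast_prod_natAbs_lucasU, Real.log_prod fun t ht => ?_,
      Nat.cast_pow, Real.log_pow]
    · exact_mod_cast hsum.1
    · exact abs_ne_zero.2 (mod_cast hu t (hprime t ht).pos)
  · have hmod : 0 < lucasModulus a b Q := prod_pos fun t ht =>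
      mul_pos (hprime t ht).pos (hpos t ht)
    rw [← Nat.cast_le (α := ℝ), ← Real.log_le_log_iff (mod_cast hmod) (mod_cast pow_pos hM 12),
      log_lucasModulus hprime hu, sum_add_distrib, Nat.cast_pow, Real.log_pow, Nat.cast_ofNat]
    have hsum_log := sum_le_sum hlog
    rw [← mul_sum] at hsum_log
    linarith [hsum.2]

end LucasModulus

section AdmissibleFamily

open Filter

variable {a b : ℤ}

lemma eventually_exists_rpow_le_sum_log_lucasU (hu : ∀ n : ℕ, 0 < n → lucasU a b n ≠ 0)
    (hb : b ≠ 0) (hΔ : a ^ 2 + 4 * b ≠ 0) {K : ℝ} (hK : 0 ≤ K) :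
    ∀ᶠ n : ℕ in atTop, ∃ R : ℕ, n ≤ R ∧ R ≤ 8 * n ∧ ∃ P ⊆ Ioc (2 * R) (4 * R),
      (∀ t ∈ P, t.Prime ∧ 7 * Real.log t ≤ Real.log |((lucasU a b t : ℤ) : ℝ)|) ∧
      K * (n : ℝ) ^ (7 / 4 : ℝ) ≤ ∑ t ∈ P, Real.log |((lucasU a b t : ℤ) : ℝ)| := by
  set κ := Real.log (5 / 4) with hκ
  have hκ₀ : 0 < κ := Real.log_pos (by norm_num)
  have hlog : ∀ᶠ n : ℕ in atTop, ∀ R ≥ n, ‖Real.log (4 * R : ℕ)‖ ≤ κ / 28 * ‖((4 * R : ℕ) : ℝ)‖ :=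
    eventually_forall_ge_atTop.2 <|
      (tendsto_natCast_atTop_atTop.comp (tendsto_id.const_mul_atTop' four_pos)).eventually <|
        Real.isLittleO_log_id_atTop.bound (by positivity)
  filter_upwards [eventually_exists_rpow_le_card_primes (div_nonneg hK hκ₀.le), hlog,
    eventually_ge_atTop 12] with n ⟨R, hnR, hRn, hcard⟩ hlog hn
  have hbad := card_abs_lucasU_lt_le_two hu hb hΔ (hn.trans hnR)
  set I := Ioc (2 * R) (4 * R)
  set P := {t ∈ I | t.Prime} \ {t ∈ I | |((lucasU a b t : ℤ) : ℝ)| < (5 / 4) ^ R}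
  have hweight : ∀ t ∈ P, R * κ ≤ Real.log |((lucasU a b t : ℤ) : ℝ)| := fun t ht => by
    obtain ⟨htI, htbad⟩ := mem_sdiff.1 ht
    rw [hκ, ← Real.log_pow]
    refine Real.log_le_log (by positivity) (not_lt.1 fun hlt => htbad ?_)
    exact mem_filter.2 ⟨(mem_filter.1 htI).1, hlt⟩
  refine ⟨R, hnR, hRn, P, sdiff_subset.trans (filter_subset _ _), fun t ht => ?_, ?_⟩
  · have htP := mem_filter.1 (mem_sdiff.1 ht).1
    have hlogR := (le_abs_self _).trans (hlog R hnR)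
    rw [Real.norm_natCast, Nat.cast_mul, Nat.cast_ofNat] at hlogR
    have hlogt : Real.log t ≤ Real.log (4 * R : ℕ) :=
      Real.log_le_log (mod_cast htP.2.pos) (mod_cast (mem_Ioc.1 htP.1).2)
    refine ⟨htP.2, ?_⟩
    push_cast at hlogt
    linarith [hweight t ht]
  · have hcardP : K / κ * (n : ℝ) ^ (3 / 4 : ℝ) ≤ #P := by
      have hle : (#{t ∈ I | t.Prime} : ℝ) ≤ #P + 2 := mod_cast
        (card_le_card_sdiff_add_card).trans (Nat.add_le_add_left hbad _)
      linarith
    calc K * (n : ℝ) ^ (7 / 4 : ℝ) = K / κ * (n : ℝ) ^ (3 / 4 : ℝ) * (n * κ) := by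
          rw [show (7 / 4 : ℝ) = 3 / 4 + 1 by norm_num, Real.rpow_add_one (mod_cast (by omega))]
          field_simp
      _ ≤ #P * (R * κ) := by gcongr
      _ ≤ _ := by
          rw [← nsmul_eq_mul]
          exact card_nsmul_le_sum _ _ _ hweight

lemma log_abs_lucasU_le (hu : ∀ n : ℕ, 0 < n → lucasU a b n ≠ 0) {n : ℕ} (hn : 0 < n) :
    Real.log |((lucasU a b n : ℤ) : ℝ)| ≤ n * Real.log (|a| + |b| + 1 : ℤ) := by
  rw [← Real.log_pow]
  exact Real.log_le_log (abs_pos.2 (mod_cast hu n hn)) (mod_cast abs_lucasU_le a b n)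

lemma exists_isAdmissible_of_le_sum_log (hu : ∀ n : ℕ, 0 < n → lucasU a b n ≠ 0) {M R k : ℕ}
    (hM : 0 < M) {P : Finset ℕ} (hPR : P ⊆ Ioc (2 * R) (4 * R))
    (hP : ∀ t ∈ P, t.Prime ∧ 7 * Real.log t ≤ Real.log |((lucasU a b t : ℤ) : ℝ)|)
    (hle : ∀ t ∈ P, Real.log |((lucasU a b t : ℤ) : ℝ)| ≤ Real.log M / 2)
    (hsum : k * (10 * Real.log M + Real.log M / 2) ≤
      ∑ t ∈ P, Real.log |((lucasU a b t : ℤ) : ℝ)|) :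
    ∃ g : Fin k → Finset ℕ, Pairwise (fun i j => Disjoint (g i) (g j)) ∧
      ∀ i, IsAdmissible a b M (2 * R) (g i) := by
  have : 0 ≤ Real.log M := Real.log_natCast_nonneg M
  obtain ⟨g, hdisj, hg⟩ :=
    exists_pairwise_disjoint_sum_mem_Icc (by positivity) (by positivity) k hle hsum
  refine ⟨g, hdisj, fun i => ?_⟩
  have hgR t (ht : t ∈ g i) := mem_Ioc.1 (hPR ((hg i).1 ht))
  exact isAdmissible_of_sum_log_mem_Icc hu hM (fun t ht => (hP t ((hg i).1 ht)).1)
    (fun t ht => (hgR t ht).1) (fun t ht => (hgR t ht).2.trans_eq (by ring))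
    (fun t ht => (hP t ((hg i).1 ht)).2) (hg i).2

lemma eventually_exists_isAdmissible (hu : ∀ n : ℕ, 0 < n → lucasU a b n ≠ 0) (hb : b ≠ 0)
    (hΔ : a ^ 2 + 4 * b ≠ 0) : ∀ᶠ M : ℕ in atTop, ∃ S k : ℕ, ∃ g : Fin k → Finset ℕ,
      2 ≤ S ∧ Real.log M ^ (3 / 4 : ℝ) ≤ k ∧ k ≤ M ∧
      Pairwise (fun i j => Disjoint (g i) (g j)) ∧ ∀ i, IsAdmissible a b M S (g i) := by
  set L := Real.log (|a| + |b| + 1 : ℤ)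
  have hL : 0 < L := Real.log_pos (mod_cast by linarith [abs_nonneg a, abs_pos.2 hb])
  have hlog : Tendsto (fun M : ℕ => Real.log M) atTop atTop :=
    Real.tendsto_log_atTop.comp tendsto_natCast_atTop_atTop
  have hfloor : Tendsto (fun M : ℕ => ⌊Real.log M / (64 * L)⌋₊) atTop atTop :=
    tendsto_nat_floor_atTop.comp (hlog.atTop_div_const (by positivity))
  filter_upwards [hfloor.eventually (eventually_exists_rpow_le_sum_log_lucasU hu hb hΔ
      (by positivity : 0 ≤ 21 * (128 * L) ^ (7 / 4 : ℝ))),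
    hfloor.eventually_ge_atTop 1, hlog.eventually_ge_atTop 1] with
    M ⟨R, hnR, hRn, P, hPR, hP, hsum⟩ hn hl
  set l := Real.log M
  set n := ⌊l / (64 * L)⌋₊
  have hM : 0 < M := Nat.pos_of_ne_zero fun h => by simp [l, h] at hl; linarith
  have hnl : n * (64 * L) ≤ l := (le_div_iff₀ (by positivity)).1 (Nat.floor_le (by positivity))
  have hln : l / (128 * L) ≤ n := by
    have hlt : l < (n + 1) * (64 * L) := (div_lt_iff₀ (by positivity)).1 (Nat.lt_floor_add_one _)
    have hn₁ : (1 : ℝ) ≤ n := mod_cast hn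
    rw [div_le_iff₀ (by positivity)]
    nlinarith
  have hω : ∀ t ∈ P, Real.log |((lucasU a b t : ℤ) : ℝ)| ≤ l / 2 := fun t ht => by
    have htn : (t : ℝ) ≤ 32 * n := mod_cast (mem_Ioc.1 (hPR ht)).2.trans (by omega)
    have := (log_abs_lucasU_le hu (hP t ht).1.pos).trans (mul_le_mul_of_nonneg_right htn hL.le)
    linarith
  set k := ⌈l ^ (3 / 4 : ℝ)⌉₊
  have hkl : k ≤ 2 * l ^ (3 / 4 : ℝ) :=
    Nat.ceil_le_two_mul (by linarith [Real.one_le_rpow hl (by norm_num : (0 : ℝ) ≤ 3 / 4)])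
  have hkM : k ≤ M := Nat.ceil_le.2 <|
    (Real.rpow_le_self_of_one_le hl (by norm_num)).trans (Real.log_le_self M.cast_nonneg)
  have hsupply : k * (10 * l + l / 2) ≤ ∑ t ∈ P, Real.log |((lucasU a b t : ℤ) : ℝ)| :=
    calc k * (10 * l + l / 2) ≤ 2 * l ^ (3 / 4 : ℝ) * (10 * l + l / 2) := by gcongr
      _ = 21 * (128 * L) ^ (7 / 4 : ℝ) * (l / (128 * L)) ^ (7 / 4 : ℝ) := by
          rw [mul_assoc 21, ← Real.mul_rpow (by positivity) (by positivity),
            mul_div_cancel₀ _ (by positivity), show (7 / 4 : ℝ) = 3 / 4 + 1 by norm_num,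
            Real.rpow_add_one (by positivity)]
          ring
      _ ≤ 21 * (128 * L) ^ (7 / 4 : ℝ) * (n : ℝ) ^ (7 / 4 : ℝ) := by gcongr
      _ ≤ _ := hsum
  obtain ⟨g, hdisj, hg⟩ := exists_isAdmissible_of_le_sum_log hu hM hPR hP hω hsupply
  exact ⟨2 * R, k, g, by omega, Nat.le_ceil _, hkM, hdisj, hg⟩

theorem eventually_exists_prime_pow_le_gu (hab : IsCoprime a b) (hb : b ≠ 0)
    (hΔ : a ^ 2 + 4 * b ≠ 0) (hu : ∀ n : ℕ, 0 < n → lucasU a b n ≠ 0) :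
    ∀ᶠ M : ℕ in atTop, ∃ q : ℕ, q.Prime ∧ q ≤ M ^ 100 ∧ M ^ 10 ≤ gu (lucasU a b) (q - 1) := by
  filter_upwards [eventually_exists_isAdmissible hu hb hΔ,
    IsCoprimeFamily.eventually_exists_prime_modEq_one] with
    M ⟨S, k, g, hS, hk, hkM, hdisj, hg⟩ hprime
  have hne i : NeZero (lucasModulus a b (g i)) := ⟨prod_ne_zero_iff.2 fun t ht =>
    mul_ne_zero ((hg i).prime t ht).ne_zero
      (Int.natAbs_ne_zero.2 (hu t ((hg i).prime t ht).pos))⟩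
  have hfamily : IsCoprimeFamily M fun i => lucasModulus a b (g i) :=
    ⟨fun i j hij => (hg i).coprime_lucasModulus hab hS (hg j) (hdisj hij),
      fun i => (hg i).modulus_le, by rwa [Fintype.card_fin]⟩
  obtain ⟨i, q, hq, hqM, hqi⟩ := hprime hfamily (by rwa [Fintype.card_fin])
  refine ⟨q, hq, hqM, (hg i).pow_le.trans ?_⟩
  exact prod_natAbs_lucasU_le_gu hab (hg i).prime (Nat.sub_pos_of_lt hq.one_lt)
    ((Nat.modEq_iff_dvd' hq.one_lt.le).1 hqi.symm)

end AdmissibleFamily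

section Interpolation

open Filter

lemma eventually_exists_rpow_le_of_pow_le {p : ℕ → Prop} {f : ℕ → ℕ} {j k : ℕ} (hk : k ≠ 0)
    (h : ∀ᶠ M : ℕ in atTop, ∃ q, p q ∧ q ≤ M ^ k ∧ M ^ j ≤ f q) :
    ∀ᶠ x : ℝ in atTop, ∃ q, p q ∧ (q : ℝ) ≤ x ∧ (1 / 2) ^ j * x ^ (j / k : ℝ) ≤ f q := by
  have hroot : Tendsto (fun x : ℝ => x ^ (1 / k : ℝ)) atTop atTop :=
    tendsto_rpow_atTop (by positivity)
  filter_upwards [(tendsto_nat_floor_atTop.comp hroot).eventually h, eventually_ge_atTop 1]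
    with x ⟨q, hp, hqk, hqj⟩ hx
  set y := x ^ (1 / k : ℝ) with hy
  have hy₁ : 1 ≤ y := Real.one_le_rpow hx (by positivity)
  have hfloor : 1 / 2 * y ≤ ⌊y⌋₊ := by
    have hone : (1 : ℝ) ≤ ⌊y⌋₊ := mod_cast Nat.one_le_floor_iff y |>.2 hy₁
    linarith [Nat.lt_floor_add_one y]
  refine ⟨q, hp, ?_, ?_⟩
  · calc (q : ℝ) ≤ (⌊y⌋₊ : ℝ) ^ k := mod_cast hqk
      _ ≤ y ^ k := by
          gcongr
          exact Nat.floor_le (by positivity)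
      _ = x := by rw [hy, one_div, Real.rpow_inv_natCast_pow (by positivity) hk]
  · calc (1 / 2 : ℝ) ^ j * x ^ (j / k : ℝ) = (1 / 2 * y) ^ j := by
          rw [mul_pow, hy, ← Real.rpow_mul_natCast (by positivity), one_div_mul_eq_div]
      _ ≤ (⌊y⌋₊ : ℝ) ^ j := by gcongr
      _ ≤ f q := mod_cast hqj

end Interpolation

end LucasGcd

/-- There are `c, x₀ > 0` (depending on `a₁, a₂`) such that for all
`x ≥ x₀`, `G(x) = max{g_u(p−1) : p ≤ x prime} ≥ c·x^{0.1}`, i.e. some prime `p ≤ x` satisfies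
`g_u(p−1) ≥ c·x^{0.1}`. -/
theorem statement12 (a₁ a₂ : ℤ) (hcop : IsCoprime a₁ a₂) (ha₂ : a₂ ≠ 0)
    (hΔ : a₁ ^ 2 + 4 * a₂ ≠ 0)
    (u : ℕ → ℤ) (hu0 : u 0 = 0) (hu1 : u 1 = 1)
    (hrec : ∀ n : ℕ, u (n + 2) = a₁ * u (n + 1) + a₂ * u n)
    (hnd : ∀ α β : ℂ, α ^ 2 = (a₁ : ℂ) * α + (a₂ : ℂ) →
      β ^ 2 = (a₁ : ℂ) * β + (a₂ : ℂ) → α ≠ β → ∀ k : ℕ, 0 < k → (α / β) ^ k ≠ 1) :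
    ∃ c x₀ : ℝ, 0 < c ∧ 0 < x₀ ∧ ∀ x : ℝ, x₀ ≤ x →
      ∃ q : ℕ, q.Prime ∧ (q : ℝ) ≤ x ∧ c * x ^ (0.1 : ℝ) ≤ (gu u (q - 1) : ℝ) := by
  obtain rfl := LucasGcd.eq_lucasU a₁ a₂ hu0 hu1 hrec
  obtain ⟨x₀, hx₀⟩ := Filter.eventually_atTop.1 <|
    LucasGcd.eventually_exists_rpow_le_of_pow_le (by norm_num) <|
      LucasGcd.eventually_exists_prime_pow_le_gu hcop ha₂ hΔ fun _ hn =>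
        LucasGcd.lucasU_ne_zero ha₂ hΔ hnd hn
  have hexp : ((10 : ℕ) / (100 : ℕ) : ℝ) = 0.1 := by norm_num
  rw [hexp] at hx₀
  exact ⟨(1 / 2) ^ 10, max x₀ 1, by positivity, by positivity,
    fun x hx => hx₀ x ((le_max_left _ _).trans hx)⟩
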